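/- arXiv:2511.00820 — 3 statements merged into one kernel-verified Lean document; each statement's English description precedes it below -/
import Mathlib

section
/- Fix d, n ∈ ℕ. Let X ∈ ℝ^{n×d} have i.i.d. N(0,1) entries and let g ∼ N(0, I_n) and h ∼ N(0, I_d) be Gaussian vectors with X, g, h independent. Let Q: ℝ × ℝ^d × ℝ^n × ℝ^n × ℝ^d → ℝ, (β₀, u, r, η, s) ↦ Q(β₀, u, r, η, s), be jointly continuous, convex in (β₀, u, r), and concave in (η, s). Fix compact sets A ⊆ ℝ × ℝ^d × ℝ^n and B ⊆ ℝ^n × ℝ^d, and define Φ = max_{(η,s)∈B} min_{(β₀,u,r)∈A} [ηᵀX u + Q(β₀, u, r, η, s)] and φ = max_{(η,s)∈B} min_{(β₀,u,r)∈A} [‖u‖₂ ηᵀg + ‖η‖₂ uᵀh + Q(β₀, u, r, η, s)]. Then for all c ∈ ℝ, P(Φ > c) ≤ 2·P(φ ≥ c). If in addition A and B are convex, then for all c ∈ ℝ, P(Φ < c) ≤ 2·P(φ ≤ c). -/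
open MeasureTheory ProbabilityTheory Filter

noncomputable section

/-- The standard Gaussian measure `N(0, I_d)` on `ℝ^d`. -/
def stdGaussian (d : ℕ) : Measure (Fin d → ℝ) := Measure.pi fun _ => gaussianReal 0 1

/-- The max–min value `Φ = max_{(η,s)∈B} min_{(β₀,u,r)∈A} [ηᵀ X u + Q(β₀,u,r,η,s)]`. -/
def gordonPhi {d n : ℕ} (X : Fin n → Fin d → ℝ)
    (Q : ℝ → (Fin d → ℝ) → (Fin n → ℝ) → (Fin n → ℝ) → (Fin d → ℝ) → ℝ)
    (A : Set (ℝ × (Fin d → ℝ) × (Fin n → ℝ)))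
    (B : Set ((Fin n → ℝ) × (Fin d → ℝ))) : ℝ :=
  sSup ((fun q : (Fin n → ℝ) × (Fin d → ℝ) =>
      sInf ((fun p : ℝ × (Fin d → ℝ) × (Fin n → ℝ) =>
        (∑ i, q.1 i * ∑ j, X i j * p.2.1 j) + Q p.1 p.2.1 p.2.2 q.1 q.2) '' A)) '' B)

/-- The auxiliary max–min value
`φ = max_{(η,s)∈B} min_{(β₀,u,r)∈A} [‖u‖₂ ηᵀg + ‖η‖₂ uᵀh + Q(β₀,u,r,η,s)]`. -/
def gordonphi {d n : ℕ} (g : Fin n → ℝ) (h : Fin d → ℝ)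
    (Q : ℝ → (Fin d → ℝ) → (Fin n → ℝ) → (Fin n → ℝ) → (Fin d → ℝ) → ℝ)
    (A : Set (ℝ × (Fin d → ℝ) × (Fin n → ℝ)))
    (B : Set ((Fin n → ℝ) × (Fin d → ℝ))) : ℝ :=
  sSup ((fun q : (Fin n → ℝ) × (Fin d → ℝ) =>
      sInf ((fun p : ℝ × (Fin d → ℝ) × (Fin n → ℝ) =>
        Real.sqrt (∑ j, p.2.1 j ^ 2) * (∑ i, q.1 i * g i)
          + Real.sqrt (∑ i, q.1 i ^ 2) * (∑ j, p.2.1 j * h j)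
          + Q p.1 p.2.1 p.2.2 q.1 q.2) '' A)) '' B)

/-- Integration by parts along direction `v` for the functional `L`. -/
def GSteinDir {E : Type*} [NormedAddCommGroup E] [NormedSpace ℝ E] [MeasurableSpace E]
    (ν : Measure E) (L : E → ℝ) (v : E) : Prop :=
  Integrable L ν ∧ ∀ f f' : E → ℝ, Continuous f → Continuous f' →
    (∃ C, ∀ x, |f x| ≤ C) → (∃ C, ∀ x, |f' x| ≤ C) →
    (∀ x, HasLineDerivAt ℝ f (f' x) x v) → ∫ x, L x * f x ∂ν = ∫ x, f' x ∂ν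

theorem GStein_gauss : GSteinDir (gaussianReal 0 1) (fun x : ℝ => x) 1 := by
  have hid : Integrable (fun x : ℝ => x) (gaussianReal 0 1) :=
    memLp_one_iff_integrable.1 (memLp_id_gaussianReal 1)
  refine ⟨hid, ?_⟩
  rintro f f' hf hf' ⟨C, hC⟩ ⟨C', hC'⟩ hd
  have hd1 : ∀ x, HasDerivAt f (f' x) x := by
    intro x
    have h := hd x
    unfold HasLineDerivAt at h
    have h2 : HasDerivAt (fun y => y - x) 1 x := (hasDerivAt_id x).sub_const x
    have h3 : HasDerivAt (fun t : ℝ => f (x + t • (1:ℝ))) (f' x) (x - x) := by simpa using h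
    have := HasDerivAt.comp (h := fun y => y - x) x h3 h2
    simpa [Function.comp_def] using this
  have hp : ∀ x, HasDerivAt (gaussianPDFReal 0 1) (-x * gaussianPDFReal 0 1 x) x := by
    intro x
    have h1 : HasDerivAt (fun x : ℝ => -(x)^2/2) (-x) x := by
      have := ((hasDerivAt_id' x).fun_pow 2).fun_neg.div_const 2
      refine this.congr_deriv ?_
      simp; ring
    have h2 := (h1.exp).const_mul ((√(2 * Real.pi))⁻¹)
    have e : gaussianPDFReal 0 1 = fun y => (√(2 * Real.pi))⁻¹ * Real.exp (-y ^ 2 / 2) := by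
      ext y; simp [gaussianPDFReal]
    rw [e]
    refine h2.congr_deriv ?_
    ring
  have hi1 : Integrable (fun x => gaussianPDFReal 0 1 x * x) := by
    have := hid
    rw [gaussianReal_of_var_ne_zero 0 one_ne_zero,
      integrable_withDensity_iff_integrable_smul' (measurable_gaussianPDF 0 1)
        (ae_of_all _ fun _ => gaussianPDF_lt_top)] at this
    simpa [toReal_gaussianPDF] using this
  have hi0 := integrable_gaussianPDFReal 0 1
  have key := integral_mul_deriv_eq_deriv_mul_of_integrable (u := f) (u' := f')
    (v := gaussianPDFReal 0 1) (v' := fun x => -x * gaussianPDFReal 0 1 x)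
    (fun x _ => hd1 x) (fun x _ => hp x)
    (by
      refine (hi1.neg.bdd_mul (c := C) hf.aestronglyMeasurable (ae_of_all _ hC)).congr (ae_of_all _ ?_)
      intro x; simp; ring_nf; simp)
    (hi0.bdd_mul (c := C') hf'.aestronglyMeasurable (ae_of_all _ hC'))
    (hi0.bdd_mul (c := C) hf.aestronglyMeasurable (ae_of_all _ hC))
  rw [integral_gaussianReal_eq_integral_smul one_ne_zero,
    integral_gaussianReal_eq_integral_smul one_ne_zero]
  simp only [smul_eq_mul]
  have e1 : ∀ x, f x * (-x * gaussianPDFReal 0 1 x) = - (gaussianPDFReal 0 1 x * (x * f x)) := by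
    intro x; ring
  simp only [e1, integral_neg, neg_inj] at key
  rw [key]
  congr 1; ext x; ring

theorem GStein_prod_left {E F : Type*} [NormedAddCommGroup E] [NormedSpace ℝ E] [MeasurableSpace E]
    [BorelSpace E] [SecondCountableTopology E]
    [NormedAddCommGroup F] [NormedSpace ℝ F] [MeasurableSpace F]
    [BorelSpace F] [SecondCountableTopology F]
    (ν : Measure E) (ρ : Measure F) [IsProbabilityMeasure ν] [IsProbabilityMeasure ρ]
    {L : E → ℝ} {v : E} (h : GSteinDir ν L v) :
    GSteinDir (ν.prod ρ) (fun x => L x.1) (v, 0) := by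
  have hL : Integrable (fun x : E × F => L x.1) (ν.prod ρ) := h.1.comp_fst ρ
  refine ⟨hL, ?_⟩
  rintro f f' hf hf' ⟨C, hC⟩ ⟨C', hC'⟩ hd
  have i1 : Integrable (fun x : E × F => L x.1 * f x) (ν.prod ρ) :=
    hL.mul_bdd (c := C) hf.aestronglyMeasurable (ae_of_all _ hC)
  have i2 : Integrable f' (ν.prod ρ) :=
    Integrable.of_bound hf'.aestronglyMeasurable C' (ae_of_all _ hC')
  rw [integral_prod_symm _ i1, integral_prod_symm _ i2]
  congr 1; ext y
  refine h.2 (fun x => f (x, y)) (fun x => f' (x, y)) (by fun_prop) (by fun_prop)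
    ⟨C, fun x => hC _⟩ ⟨C', fun x => hC' _⟩ ?_
  intro x
  have := hd (x, y)
  simpa [HasLineDerivAt] using this

theorem GStein_prod_right {E F : Type*} [NormedAddCommGroup E] [NormedSpace ℝ E] [MeasurableSpace E]
    [BorelSpace E] [SecondCountableTopology E]
    [NormedAddCommGroup F] [NormedSpace ℝ F] [MeasurableSpace F]
    [BorelSpace F] [SecondCountableTopology F]
    (ν : Measure E) (ρ : Measure F) [IsProbabilityMeasure ν] [IsProbabilityMeasure ρ]
    {L : F → ℝ} {v : F} (h : GSteinDir ρ L v) :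
    GSteinDir (ν.prod ρ) (fun x => L x.2) (0, v) := by
  have hL : Integrable (fun x : E × F => L x.2) (ν.prod ρ) := h.1.comp_snd ν
  refine ⟨hL, ?_⟩
  rintro f f' hf hf' ⟨C, hC⟩ ⟨C', hC'⟩ hd
  have i1 : Integrable (fun x : E × F => L x.2 * f x) (ν.prod ρ) :=
    hL.mul_bdd (c := C) hf.aestronglyMeasurable (ae_of_all _ hC)
  have i2 : Integrable f' (ν.prod ρ) :=
    Integrable.of_bound hf'.aestronglyMeasurable C' (ae_of_all _ hC')
  rw [integral_prod _ i1, integral_prod _ i2]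
  congr 1; ext y
  refine h.2 (fun x => f (y, x)) (fun x => f' (y, x)) (by fun_prop) (by fun_prop)
    ⟨C, fun x => hC _⟩ ⟨C', fun x => hC' _⟩ ?_
  intro x
  have := hd (y, x)
  simpa [HasLineDerivAt] using this

theorem GStein_pi {E : Type} [NormedAddCommGroup E] [NormedSpace ℝ E] [MeasurableSpace E]
    [BorelSpace E] [SecondCountableTopology E]
    (ν : Measure E) [IsProbabilityMeasure ν]
    {L : E → ℝ} {v : E} (h : GSteinDir ν L v) (m : ℕ) (i : Fin m) :
    GSteinDir (Measure.pi fun _ : Fin m => ν) (fun x => L (x i)) (Pi.single i v) := by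
  cases m with
  | zero => exact i.elim0
  | succ m =>
  have mp := measurePreserving_piFinSuccAbove (fun _ : Fin (m+1) => ν) i
  have hS := GStein_prod_left ν (Measure.pi fun _ : Fin m => ν) h
  set e := MeasurableEquiv.piFinSuccAbove (fun _ : Fin (m+1) => E) i with he
  have e1 : ∀ x, (e x).1 = x i := fun x => rfl
  have hc : Continuous e.symm := by
    have : (e.symm : E × (Fin m → E) → (Fin (m+1) → E)) = fun p => i.insertNth p.1 p.2 := rfl
    rw [this]; fun_prop
  have hline : ∀ (p : E × (Fin m → E)) (t : ℝ),
      e.symm (p + t • (v, 0)) = e.symm p + t • (Pi.single i v : Fin (m+1) → E) := by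
    intro p t
    have : (e.symm : E × (Fin m → E) → (Fin (m+1) → E)) = fun p => i.insertNth p.1 p.2 := rfl
    rw [this]
    ext j
    refine Fin.succAboveCases i ?_ (fun k => ?_) j
    · simp
    · simp
  refine ⟨mp.integrable_comp_of_integrable hS.1, ?_⟩
  rintro f f' hf hf' ⟨C, hC⟩ ⟨C', hC'⟩ hd
  have k := hS.2 (f ∘ e.symm) (f' ∘ e.symm) (hf.comp hc) (hf'.comp hc)
    ⟨C, fun x => hC _⟩ ⟨C', fun x => hC' _⟩ (by
      intro p
      have := hd (e.symm p)
      simp only [HasLineDerivAt, Function.comp_def, hline]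
      exact this)
  rw [← mp.integral_comp', ← mp.integral_comp'] at k
  simpa [e1] using k
/-- A `C²` function with bounded derivatives, with explicit partial derivatives. -/
structure GC2 {I : Type*} [Fintype I] (f : (I → ℝ) → ℝ) (f1 : I → (I → ℝ) → ℝ)
    (f2 : I → I → (I → ℝ) → ℝ) : Prop where
  c0 : Continuous f
  c1 : ∀ a, Continuous (f1 a)
  c2 : ∀ a b, Continuous (f2 a b)
  b0 : ∃ C, ∀ x, |f x| ≤ C
  b1 : ∀ a, ∃ C, ∀ x, |f1 a x| ≤ C
  b2 : ∀ a b, ∃ C, ∀ x, |f2 a b x| ≤ C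
  d1 : ∀ x, HasFDerivAt f (∑ a, f1 a x • ContinuousLinearMap.proj (R := ℝ) (φ := fun _ : I => ℝ) a) x
  d2 : ∀ a x, HasFDerivAt (f1 a)
    (∑ b, f2 a b x • ContinuousLinearMap.proj (R := ℝ) (φ := fun _ : I => ℝ) b) x

theorem gbdd_mul {α : Type*} {f g : α → ℝ} (hf : ∃ C, ∀ x, |f x| ≤ C) (hg : ∃ C, ∀ x, |g x| ≤ C) :
    ∃ C, ∀ x, |f x * g x| ≤ C := by
  obtain ⟨C, hC⟩ := hf
  obtain ⟨D, hD⟩ := hg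
  refine ⟨C * D, fun x => ?_⟩
  rw [abs_mul]
  exact mul_le_mul (hC x) (hD x) (abs_nonneg _) ((abs_nonneg _).trans (hC x))

theorem gbdd_add {α : Type*} {f g : α → ℝ} (hf : ∃ C, ∀ x, |f x| ≤ C) (hg : ∃ C, ∀ x, |g x| ≤ C) :
    ∃ C, ∀ x, |f x + g x| ≤ C := by
  obtain ⟨C, hC⟩ := hf
  obtain ⟨D, hD⟩ := hg
  exact ⟨C + D, fun x => (abs_add_le _ _).trans (add_le_add (hC x) (hD x))⟩

theorem GC2.mul {I : Type*} [Fintype I] {f g : (I → ℝ) → ℝ} {f1 g1 : I → (I → ℝ) → ℝ}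
    {f2 g2 : I → I → (I → ℝ) → ℝ} (hf : GC2 f f1 f2) (hg : GC2 g g1 g2) :
    GC2 (fun x => f x * g x) (fun a x => f x * g1 a x + g x * f1 a x)
      (fun a b x => (f x * g2 a b x + g1 a x * f1 b x) + (g x * f2 a b x + f1 a x * g1 b x)) where
  c0 := hf.c0.mul hg.c0
  c1 a := (hf.c0.mul (hg.c1 a)).add (hg.c0.mul (hf.c1 a))
  c2 a b := ((hf.c0.mul (hg.c2 a b)).add ((hg.c1 a).mul (hf.c1 b))).add
    ((hg.c0.mul (hf.c2 a b)).add ((hf.c1 a).mul (hg.c1 b)))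
  b0 := gbdd_mul hf.b0 hg.b0
  b1 a := gbdd_add (gbdd_mul hf.b0 (hg.b1 a)) (gbdd_mul hg.b0 (hf.b1 a))
  b2 a b := gbdd_add (gbdd_add (gbdd_mul hf.b0 (hg.b2 a b)) (gbdd_mul (hg.b1 a) (hf.b1 b)))
    (gbdd_add (gbdd_mul hg.b0 (hf.b2 a b)) (gbdd_mul (hf.b1 a) (hg.b1 b)))
  d1 x := by
    refine ((hf.d1 x).mul (hg.d1 x)).congr_fderiv ?_
    simp only [add_smul, Finset.sum_add_distrib, Finset.smul_sum, mul_smul]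
  d2 a x := by
    refine (((hf.d1 x).mul (hg.d2 a x)).add ((hg.d1 x).mul (hf.d2 a x))).congr_fderiv ?_
    simp only [add_smul, Finset.sum_add_distrib, Finset.smul_sum, mul_smul]

theorem GC2.one_sub {I : Type*} [Fintype I] {f : (I → ℝ) → ℝ} {f1 : I → (I → ℝ) → ℝ}
    {f2 : I → I → (I → ℝ) → ℝ} (hf : GC2 f f1 f2) :
    GC2 (fun x => 1 - f x) (fun a x => - f1 a x) (fun a b x => - f2 a b x) where
  c0 := continuous_const.sub hf.c0
  c1 a := (hf.c1 a).neg
  c2 a b := (hf.c2 a b).neg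
  b0 := by
    obtain ⟨C, hC⟩ := hf.b0
    exact ⟨1 + C, fun x => (abs_sub _ _).trans (by simpa using hC x)⟩
  b1 a := by simpa using hf.b1 a
  b2 a b := by simpa using hf.b2 a b
  d1 x := by
    refine ((hf.d1 x).const_sub 1).congr_fderiv ?_
    ext w; simp
  d2 a x := by
    refine ((hf.d2 a x).neg).congr_fderiv ?_
    ext w; simp

theorem GC2.one {I : Type*} [Fintype I] :
    GC2 (I := I) (fun _ => 1) (fun _ _ => 0) (fun _ _ _ => 0) where
  c0 := continuous_const
  c1 a := continuous_const
  c2 a b := continuous_const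
  b0 := ⟨1, by simp⟩
  b1 a := ⟨0, by simp⟩
  b2 a b := ⟨0, by simp⟩
  d1 x := by simpa using hasFDerivAt_const _ _
  d2 a x := by simpa using hasFDerivAt_const _ _

theorem GC2.coord {I : Type*} [Fintype I] [DecidableEq I] {s s' s'' : ℝ → ℝ}
    (hs : Continuous s) (hs' : Continuous s') (hs'' : Continuous s'')
    (bs : ∃ C, ∀ x, |s x| ≤ C) (bs' : ∃ C, ∀ x, |s' x| ≤ C) (bs'' : ∃ C, ∀ x, |s'' x| ≤ C)
    (d1 : ∀ x, HasDerivAt s (s' x) x) (d2 : ∀ x, HasDerivAt s' (s'' x) x) (a : I) (c : ℝ) :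
    GC2 (fun x : I → ℝ => s (x a + c)) (fun b x => if b = a then s' (x a + c) else 0)
      (fun b b' x => if b = a ∧ b' = a then s'' (x a + c) else 0) where
  c0 := by fun_prop
  c1 b := by split_ifs <;> fun_prop
  c2 b b' := by split_ifs <;> fun_prop
  b0 := by obtain ⟨C, hC⟩ := bs; exact ⟨C, fun x => hC _⟩
  b1 b := by
    obtain ⟨C, hC⟩ := bs'
    refine ⟨C, fun x => ?_⟩
    split_ifs
    · exact hC _
    · simpa using (abs_nonneg _).trans (hC 0)
  b2 b b' := by
    obtain ⟨C, hC⟩ := bs''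
    refine ⟨C, fun x => ?_⟩
    split_ifs
    · exact hC _
    · simpa using (abs_nonneg _).trans (hC 0)
  d1 x := by
    have h0 : HasFDerivAt (fun x : I → ℝ => x a + c)
        (ContinuousLinearMap.proj (R := ℝ) (φ := fun _ : I => ℝ) a) x :=
      ((ContinuousLinearMap.proj (R := ℝ) (φ := fun _ : I => ℝ) a).hasFDerivAt).add_const c
    refine ((d1 (x a + c)).comp_hasFDerivAt x h0).congr_fderiv ?_
    simp
  d2 b x := by
    have h0 : HasFDerivAt (fun x : I → ℝ => x a + c)
        (ContinuousLinearMap.proj (R := ℝ) (φ := fun _ : I => ℝ) a) x :=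
      ((ContinuousLinearMap.proj (R := ℝ) (φ := fun _ : I => ℝ) a).hasFDerivAt).add_const c
    by_cases hb : b = a
    · simp only [hb, if_true, true_and]
      refine ((d2 (x a + c)).comp_hasFDerivAt x h0).congr_fderiv ?_
      simp
    · simp only [hb, if_false, false_and]
      simpa using hasFDerivAt_const _ _

theorem GInterp {E : Type*} [NormedAddCommGroup E] [NormedSpace ℝ E] [MeasurableSpace E]
    [BorelSpace E] [SecondCountableTopology E] (ν : Measure E) [IsProbabilityMeasure ν]
    {κ : Type*} [Fintype κ] [DecidableEq κ] (L : κ → E →L[ℝ] ℝ) (v : κ → E)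
    (hLv : ∀ k l, L k (v l) = if k = l then 1 else 0)
    (hS : ∀ k, GSteinDir ν (fun ξ => L k ξ) (v k)) {I : Type*} [Fintype I] (x y : I → κ → ℝ)
    (horth : ∀ a b, ∑ k, x a k * y b k = 0) (F : (I → ℝ) → ℝ) (F1 : I → (I → ℝ) → ℝ)
    (F2 : I → I → (I → ℝ) → ℝ) (hF : GC2 F F1 F2)
    (hD : ∀ a b z, 0 ≤ (∑ k, x a k * x b k - ∑ k, y a k * y b k) * F2 a b z) :
    ∫ ξ, F (fun a => ∑ k, y a k * L k ξ) ∂ν ≤ ∫ ξ, F (fun a => ∑ k, x a k * L k ξ) ∂ν := by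
  set zc : ℝ → I → κ → ℝ := fun θ a k => Real.cos θ * y a k + Real.sin θ * x a k with hzc
  set wc : ℝ → I → κ → ℝ := fun θ a k => -Real.sin θ * y a k + Real.cos θ * x a k with hwc
  set Z : ℝ → E → I → ℝ := fun θ ξ a => ∑ k, zc θ a k * L k ξ with hZ
  have hZc : ∀ θ, Continuous (Z θ) := by intro θ; simp only [hZ]; fun_prop
  have hZd : ∀ ξ θ, HasDerivAt (fun θ => Z θ ξ) (fun a => ∑ k, wc θ a k * L k ξ) θ := by
    intro ξ θ
    rw [hasDerivAt_pi]
    intro a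
    simp only [hZ]
    refine HasDerivAt.fun_sum fun k _ => ?_
    refine HasDerivAt.mul_const ?_ _
    exact ((Real.hasDerivAt_cos θ).mul_const _).add ((Real.hasDerivAt_sin θ).mul_const _)
  choose C1 hC1 using hF.b1
  obtain ⟨C0, hC0⟩ := hF.b0
  have hψ : ∀ θ, HasDerivAt (fun θ => ∫ ξ, F (Z θ ξ) ∂ν)
      (∫ ξ, ∑ a, F1 a (Z θ ξ) * ∑ k, wc θ a k * L k ξ ∂ν) θ := by
    intro θ
    refine (hasDerivAt_integral_of_dominated_loc_of_deriv_le (s := Set.univ)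
      (F' := fun θ ξ => ∑ a, F1 a (Z θ ξ) * ∑ k, wc θ a k * L k ξ)
      (bound := fun ξ => ∑ a, C1 a * ∑ k, (|y a k| + |x a k|) * |L k ξ|) Filter.univ_mem ?_ ?_ ?_ ?_ ?_ ?_).2
    · exact Filter.Eventually.of_forall fun θ => (hF.c0.comp (hZc θ)).aestronglyMeasurable
    · exact Integrable.of_bound (hF.c0.comp (hZc θ)).aestronglyMeasurable C0
        (ae_of_all _ fun ξ => hC0 _)
    · refine Continuous.aestronglyMeasurable ?_
      refine continuous_finsetSum _ fun a _ => ((hF.c1 a).comp (hZc θ)).mul ?_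
      fun_prop
    · refine ae_of_all _ fun ξ θ _ => ?_
      rw [Real.norm_eq_abs]
      refine (Finset.abs_sum_le_sum_abs _ _).trans (Finset.sum_le_sum fun a _ => ?_)
      rw [abs_mul]
      refine mul_le_mul (hC1 a _) ?_ (abs_nonneg _) ((abs_nonneg _).trans (hC1 a (Z θ ξ)))
      refine (Finset.abs_sum_le_sum_abs _ _).trans (Finset.sum_le_sum fun k _ => ?_)
      rw [abs_mul]
      refine mul_le_mul_of_nonneg_right ?_ (abs_nonneg _)
      refine (abs_add_le _ _).trans (add_le_add ?_ ?_)
      · rw [abs_mul, abs_neg]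
        exact mul_le_of_le_one_left (abs_nonneg _) (Real.abs_sin_le_one _)
      · rw [abs_mul]
        exact mul_le_of_le_one_left (abs_nonneg _) (Real.abs_cos_le_one _)
    · exact integrable_finsetSum _ fun a _ => Integrable.const_mul
        (integrable_finsetSum _ fun k _ => ((hS k).1.abs.const_mul _)) _
    · refine ae_of_all _ fun ξ θ _ => ?_
      refine ((hF.d1 (Z θ ξ)).comp_hasDerivAt θ (hZd ξ θ)).congr_deriv ?_
      simp
  have hStein : ∀ θ a k, ∫ ξ, L k ξ * F1 a (Z θ ξ) ∂ν = ∑ b, zc θ b k * ∫ ξ, F2 a b (Z θ ξ) ∂ν := by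
    intro θ a k
    have iF2 : ∀ b, Integrable (fun ξ => F2 a b (Z θ ξ)) ν := by
      intro b
      obtain ⟨C, hC⟩ := hF.b2 a b
      exact Integrable.of_bound ((hF.c2 a b).comp (hZc θ)).aestronglyMeasurable C
        (ae_of_all _ fun ξ => hC _)
    rw [(hS k).2 (fun ξ => F1 a (Z θ ξ)) (fun ξ => ∑ b, zc θ b k * F2 a b (Z θ ξ))
      ((hF.c1 a).comp (hZc θ))
      (continuous_finsetSum _ fun b _ => continuous_const.mul ((hF.c2 a b).comp (hZc θ)))
      ⟨C1 a, fun ξ => hC1 a _⟩ ?_ ?_]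
    · rw [integral_finsetSum _ fun b _ => (iF2 b).const_mul _]
      simp only [integral_const_mul]
    · choose C hC using hF.b2 a
      refine ⟨∑ b, |zc θ b k| * C b, fun ξ => ?_⟩
      refine (Finset.abs_sum_le_sum_abs _ _).trans (Finset.sum_le_sum fun b _ => ?_)
      rw [abs_mul]
      exact mul_le_mul_of_nonneg_left (hC b _) (abs_nonneg _)
    · intro ξ
      have hl : HasDerivAt (fun t : ℝ => Z θ (ξ + t • v k)) (fun b => zc θ b k) 0 := by
        rw [hasDerivAt_pi]
        intro b
        have e : ∀ t : ℝ, Z θ (ξ + t • v k) b = Z θ ξ b + t * zc θ b k := by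
          intro t
          simp [hZ, hLv, mul_add, Finset.sum_add_distrib, mul_comm]
        simp only [e]
        simpa using ((hasDerivAt_id' (0:ℝ)).mul_const (zc θ b k)).const_add (Z θ ξ b)
      have h0 : Z θ (ξ + (0:ℝ) • v k) = Z θ ξ := by simp
      have h1 := hF.d2 a (Z θ ξ)
      rw [← h0] at h1
      have := h1.comp_hasDerivAt (0:ℝ) hl
      refine HasDerivAt.congr_deriv this ?_
      simp [mul_comm]
  have hwz : ∀ θ a b, ∑ k, wc θ a k * zc θ b k
      = Real.sin θ * Real.cos θ * (∑ k, x a k * x b k - ∑ k, y a k * y b k) := by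
    intro θ a b
    have h1 := horth a b
    have h2 := horth b a
    have : ∑ k, wc θ a k * zc θ b k = Real.sin θ * Real.cos θ * (∑ k, x a k * x b k - ∑ k, y a k * y b k)
      + Real.cos θ ^ 2 * ∑ k, x a k * y b k - Real.sin θ ^ 2 * ∑ k, x b k * y a k := by
      simp only [Finset.mul_sum, ← Finset.sum_sub_distrib, ← Finset.sum_add_distrib]
      refine Finset.sum_congr rfl fun k _ => ?_
      simp only [hwc, hzc]; ring
    rw [this, h1, h2]; ring
  have hder : ∀ θ, (∫ ξ, ∑ a, F1 a (Z θ ξ) * ∑ k, wc θ a k * L k ξ ∂ν)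
      = Real.sin θ * Real.cos θ * ∑ a, ∑ b, ∫ ξ, (∑ k, x a k * x b k - ∑ k, y a k * y b k) * F2 a b (Z θ ξ) ∂ν := by
    intro θ
    have i1 : ∀ a k, Integrable (fun ξ => L k ξ * F1 a (Z θ ξ)) ν := fun a k =>
      (hS k).1.mul_bdd (c := C1 a) ((hF.c1 a).comp (hZc θ)).aestronglyMeasurable
        (ae_of_all _ fun ξ => hC1 a _)
    have e1 : ∀ ξ, ∑ a, F1 a (Z θ ξ) * ∑ k, wc θ a k * L k ξ
        = ∑ a, ∑ k, wc θ a k * (L k ξ * F1 a (Z θ ξ)) := by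
      intro ξ
      refine Finset.sum_congr rfl fun a _ => ?_
      rw [Finset.mul_sum]
      refine Finset.sum_congr rfl fun k _ => ?_
      ring
    simp only [e1]
    rw [integral_finsetSum _ fun a _ => integrable_finsetSum _ fun k _ => (i1 a k).const_mul _, Finset.mul_sum]
    refine Finset.sum_congr rfl fun a _ => ?_
    rw [integral_finsetSum _ fun k _ => (i1 a k).const_mul _]
    simp only [integral_const_mul, hStein]
    simp only [Finset.mul_sum]
    rw [Finset.sum_comm]
    refine Finset.sum_congr rfl fun b _ => ?_
    rw [← mul_assoc, ← hwz, Finset.sum_mul]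
    refine Finset.sum_congr rfl fun k _ => ?_
    ring
  have hmono : MonotoneOn (fun θ => ∫ ξ, F (Z θ ξ) ∂ν) (Set.Icc 0 (Real.pi / 2)) := by
    refine monotoneOn_of_deriv_nonneg (convex_Icc _ _) ?_ ?_ ?_
    · exact fun θ _ => (hψ θ).continuousAt.continuousWithinAt
    · exact fun θ _ => (hψ θ).differentiableAt.differentiableWithinAt
    · intro θ hθ
      rw [interior_Icc] at hθ
      rw [(hψ θ).deriv, hder]
      refine mul_nonneg (mul_nonneg ?_ ?_) ?_
      · exact Real.sin_nonneg_of_nonneg_of_le_pi hθ.1.le (by linarith [hθ.2, Real.pi_pos])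
      · exact Real.cos_nonneg_of_neg_pi_div_two_le_of_le (by linarith [hθ.1, Real.pi_pos]) hθ.2.le
      · exact Finset.sum_nonneg fun a _ => Finset.sum_nonneg fun b _ =>
          integral_nonneg fun ξ => hD a b _
  have := hmono (Set.left_mem_Icc.2 (by positivity)) (Set.right_mem_Icc.2 (by positivity)) (by positivity)
  simpa [hZ, hzc] using this
theorem gsmooth_step : ∃ s' s'' : ℝ → ℝ, Continuous s' ∧ Continuous s'' ∧
    (∃ C, ∀ x, |s' x| ≤ C) ∧ (∃ C, ∀ x, |s'' x| ≤ C) ∧ (∀ x, 0 ≤ s' x) ∧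
    (∀ x, HasDerivAt Real.smoothTransition (s' x) x) ∧ (∀ x, HasDerivAt s' (s'' x) x) := by
  have hs : ContDiff ℝ 2 Real.smoothTransition := Real.smoothTransition.contDiff (n := 2)
  have hs1 : ContDiff ℝ 1 (deriv Real.smoothTransition) :=
    (contDiff_succ_iff_deriv (n := 1) (f := Real.smoothTransition)).1 hs |>.2.2
  have hs2 : Continuous (deriv (deriv Real.smoothTransition)) := hs1.continuous_deriv le_rfl
  have hcs : HasCompactSupport (deriv Real.smoothTransition) := by
    refine HasCompactSupport.intro (isCompact_Icc (a := (0:ℝ)) (b := 1)) fun x hx => ?_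
    rcases lt_or_ge x 0 with h | h
    · have : Real.smoothTransition =ᶠ[nhds x] fun _ => 0 := by
        filter_upwards [Iio_mem_nhds h] with y hy
        exact Real.smoothTransition.zero_of_nonpos (le_of_lt hy)
      rw [this.deriv_eq]; simp
    · have h1 : 1 < x := by
        by_contra h2
        exact hx ⟨h, not_lt.1 h2⟩
      have : Real.smoothTransition =ᶠ[nhds x] fun _ => 1 := by
        filter_upwards [Ioi_mem_nhds h1] with y hy
        exact Real.smoothTransition.one_of_one_le (le_of_lt hy)
      rw [this.deriv_eq]; simp
  refine ⟨deriv Real.smoothTransition, deriv (deriv Real.smoothTransition), hs1.continuous, hs2,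
    ?_, ?_, ?_, ?_, ?_⟩
  · exact hcs.exists_bound_of_continuous hs1.continuous
  · exact hcs.deriv.exists_bound_of_continuous hs2
  · exact fun x => Real.smoothTransition.monotone.deriv_nonneg
  · exact fun x => (hs.differentiable (by norm_num) x).hasDerivAt
  · exact fun x => (hs1.differentiable (by norm_num) x).hasDerivAt

theorem gsmooth_step_scaled (N : ℕ) : ∃ s' s'' : ℝ → ℝ, Continuous s' ∧ Continuous s'' ∧
    (∃ C, ∀ x, |s' x| ≤ C) ∧ (∃ C, ∀ x, |s'' x| ≤ C) ∧ (∀ x, 0 ≤ s' x) ∧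
    (∀ x, HasDerivAt (fun t => Real.smoothTransition (t * N)) (s' x) x) ∧
    (∀ x, HasDerivAt s' (s'' x) x) := by
  obtain ⟨s', s'', c1, c2, ⟨C1, b1⟩, ⟨C2, b2⟩, p, d1, d2⟩ := gsmooth_step
  have hl : ∀ x : ℝ, HasDerivAt (fun t : ℝ => t * N) N x := fun x => by
    simpa using (hasDerivAt_id' x).mul_const (N : ℝ)
  refine ⟨fun x => s' (x * N) * N, fun x => s'' (x * N) * N * N, by fun_prop, by fun_prop,
    ⟨C1 * N, fun x => ?_⟩, ⟨C2 * N * N, fun x => ?_⟩, fun x => mul_nonneg (p _) (by positivity), ?_, ?_⟩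
  · rw [abs_mul, Nat.abs_cast]; gcongr; exact b1 _
  · rw [abs_mul, abs_mul, Nat.abs_cast]; gcongr; exact b2 _
  · exact fun x => (d1 (x * N)).comp (h := fun t : ℝ => t * N) x (hl x)
  · exact fun x => ((d2 (x * N)).comp (h := fun t : ℝ => t * N) x (hl x)).mul_const _

theorem grow_prod {J K : Type*} [Fintype J] [Fintype K] [DecidableEq J] [DecidableEq K]
    (N : ℕ) (c : J × K → ℝ) (j : J) (S : Finset K) : ∃ f1 f2,
    GC2 (fun x : J × K → ℝ => ∏ i ∈ S, Real.smoothTransition ((x (j, i) + c (j, i)) * N)) f1 f2 ∧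
    (∀ a x, 0 ≤ f1 a x) ∧ (∀ a x, a.1 ≠ j → f1 a x = 0) ∧
    (∀ a b x, a.1 ≠ j ∨ b.1 ≠ j → f2 a b x = 0) := by
  induction S using Finset.induction_on with
  | empty => exact ⟨_, _, by simpa using GC2.one, by simp, by simp, by simp⟩
  | insert i S hi ih =>
    obtain ⟨f1, f2, h, p1, z1, z2⟩ := ih
    obtain ⟨s', s'', c1, c2, b1, b2, p, d1, d2⟩ := gsmooth_step_scaled N
    have hs0 : Continuous fun t : ℝ => Real.smoothTransition (t * N) :=
      Real.smoothTransition.continuous.comp (by fun_prop)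
    have hb0 : ∃ C, ∀ t : ℝ, |Real.smoothTransition (t * N)| ≤ C :=
      ⟨1, fun t => by
        rw [abs_of_nonneg (Real.smoothTransition.nonneg _)]; exact Real.smoothTransition.le_one _⟩
    have hc := GC2.coord hs0 c1 c2 hb0 b1 b2 d1 d2 ((j, i) : J × K) (c (j, i))
    have hm := hc.mul h
    simp only [Finset.prod_insert hi]
    refine ⟨_, _, hm, ?_, ?_, ?_⟩
    · intro a x
      have := Finset.prod_nonneg (s := S) fun i _ =>
        Real.smoothTransition.nonneg ((x (j, i) + c (j, i)) * N)
      refine add_nonneg (mul_nonneg (Real.smoothTransition.nonneg _) (p1 _ _)) (mul_nonneg this ?_)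
      split_ifs
      · exact p _
      · exact le_rfl
    · intro a x ha
      have : a ≠ (j, i) := by rintro rfl; exact ha rfl
      simp [z1 a x ha, this]
    · intro a b x hab
      have e : ∀ a : J × K, a.1 ≠ j → a ≠ (j, i) := by rintro a h rfl; exact h rfl
      rcases hab with ha | ha
      · simp [z1 a x ha, z2 a b x (Or.inl ha), e a ha]
      · simp [z1 b x ha, z2 a b x (Or.inr ha), e b ha]

theorem gfull_prod {J K : Type*} [Fintype J] [Fintype K] [DecidableEq J] [DecidableEq K]
    (N : ℕ) (c : J × K → ℝ) (S : Finset J) : ∃ f1 f2,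
    GC2 (fun x : J × K → ℝ => ∏ j ∈ S,
      (1 - ∏ i, Real.smoothTransition ((x (j, i) + c (j, i)) * N))) f1 f2 ∧
    (∀ a x, f1 a x ≤ 0) ∧ (∀ a b x, a.1 ≠ b.1 → 0 ≤ f2 a b x) := by
  have hle : ∀ (x : J × K → ℝ) j, 0 ≤ 1 - ∏ i, Real.smoothTransition ((x (j, i) + c (j, i)) * N) := by
    intro x j
    rw [sub_nonneg]
    exact Finset.prod_le_one (fun i _ => Real.smoothTransition.nonneg _)
      fun i _ => Real.smoothTransition.le_one _
  induction S using Finset.induction_on with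
  | empty => exact ⟨_, _, by simpa using GC2.one, by simp, by simp⟩
  | insert j S hj ih =>
    obtain ⟨f1, f2, h, p1, p2⟩ := ih
    obtain ⟨g1, g2, g, q1, z1, z2⟩ := grow_prod N c j Finset.univ
    have hm := g.one_sub.mul h
    simp only [Finset.prod_insert hj]
    have hP := fun x : J × K → ℝ => Finset.prod_nonneg (s := S) fun j _ => hle x j
    refine ⟨_, _, hm, ?_, ?_⟩
    · intro a x
      have h1 := mul_nonneg (hle x j) (neg_nonneg.2 (p1 a x))
      have h2 := mul_nonneg (hP x) (q1 a x)
      linarith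
    · intro a b x hab
      have h1 := mul_nonneg (hle x j) (p2 a b x hab)
      have h2 := mul_nonneg (neg_nonneg.2 (p1 a x)) (q1 b x)
      have h3 := mul_nonneg (neg_nonneg.2 (p1 b x)) (q1 a x)
      have h4 : g2 a b x = 0 := by
        refine z2 a b x ?_
        by_contra hcon
        push Not at hcon
        exact hab (hcon.1.trans hcon.2.symm)
      simp only [h4]
      linarith

theorem GFinite {E : Type*} [NormedAddCommGroup E] [NormedSpace ℝ E] [MeasurableSpace E]
    [BorelSpace E] [SecondCountableTopology E] (ν : Measure E) [IsProbabilityMeasure ν]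
    {κ : Type*} [Fintype κ] [DecidableEq κ] (L : κ → E →L[ℝ] ℝ) (v : κ → E)
    (hLv : ∀ k l, L k (v l) = if k = l then 1 else 0)
    (hS : ∀ k, GSteinDir ν (fun ξ => L k ξ) (v k)) {J K : Type*} [Fintype J] [Fintype K]
    (x y : J × K → κ → ℝ)
    (horth : ∀ a b, ∑ k, x a k * y b k = 0)
    (hD0 : ∀ a b, a.1 = b.1 → ∑ k, x a k * x b k = ∑ k, y a k * y b k)
    (hD : ∀ a b, ∑ k, y a k * y b k ≤ ∑ k, x a k * x b k) (c : J × K → ℝ) :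
    ν {ξ | ∃ j, ∀ i, 0 < ∑ k, x (j, i) k * L k ξ + c (j, i)}
      ≤ ν {ξ | ∃ j, ∀ i, 0 < ∑ k, y (j, i) k * L k ξ + c (j, i)} := by
  classical
  set F : ℕ → (J × K → ℝ) → ℝ := fun N x => ∏ j,
      (1 - ∏ i, Real.smoothTransition ((x (j, i) + c (j, i)) * N)) with hF
  have hFc : ∀ N, Continuous (F N) := fun N => by
    obtain ⟨f1, f2, h, -, -⟩ := gfull_prod N c Finset.univ
    exact h.c0
  have hstep : ∀ N, ∫ ξ, F N (fun a => ∑ k, y a k * L k ξ) ∂ν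
      ≤ ∫ ξ, F N (fun a => ∑ k, x a k * L k ξ) ∂ν := by
    intro N
    obtain ⟨f1, f2, h, -, p2⟩ := gfull_prod N c Finset.univ
    refine GInterp ν L v hLv hS x y horth _ f1 f2 h ?_
    intro a b z
    by_cases hab : a.1 = b.1
    · rw [hD0 a b hab]; simp
    · exact mul_nonneg (sub_nonneg.2 (hD a b)) (p2 a b z hab)
  have hlim : ∀ z : J × K → ℝ, Tendsto (fun N => F N z) atTop
      (nhds (if ∃ j, ∀ i, 0 < z (j, i) + c (j, i) then 0 else 1)) := by
    intro z
    have h1 : ∀ t : ℝ, Tendsto (fun N : ℕ => Real.smoothTransition (t * N)) atTop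
        (nhds (if 0 < t then 1 else 0)) := by
      intro t
      split_ifs with ht
      · refine tendsto_const_nhds.congr' ?_
        have := (tendsto_natCast_atTop_atTop (R := ℝ)).const_mul_atTop ht
        filter_upwards [this.eventually_ge_atTop 1] with N hN
        exact (Real.smoothTransition.one_of_one_le hN).symm
      · refine tendsto_const_nhds.congr fun N => ?_
        exact (Real.smoothTransition.zero_of_nonpos
          (mul_nonpos_of_nonpos_of_nonneg (not_lt.1 ht) (by positivity))).symm
    have h2 : Tendsto (fun N => F N z) atTop
        (nhds (∏ j, (1 - ∏ i, if 0 < z (j, i) + c (j, i) then (1:ℝ) else 0))) :=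
      tendsto_finsetProd _ fun j _ => (tendsto_finsetProd _ fun i _ => h1 _).const_sub 1
    convert h2 using 2
    have h3 : ∀ j, (1 - ∏ i, if 0 < z (j, i) + c (j, i) then (1:ℝ) else 0)
        = if ¬ (∀ i, 0 < z (j, i) + c (j, i)) then 1 else 0 := by
      intro j
      rw [Finset.prod_boole]
      by_cases h : ∀ i, 0 < z (j, i) + c (j, i)
      · simp [h]
      · simp [h]
    simp only [h3]
    rw [Finset.prod_boole]
    by_cases h : ∃ j, ∀ i, 0 < z (j, i) + c (j, i)
    · rw [if_pos h, if_neg]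
      push Not
      obtain ⟨j, hj⟩ := h
      exact ⟨j, Finset.mem_univ _, hj⟩
    · rw [if_neg h, if_pos]
      intro j _ hj
      exact h ⟨j, hj⟩
  have hF1 : ∀ N z, |F N z| ≤ 1 := by
    intro N z
    have hp : ∀ j, 0 ≤ ∏ i, Real.smoothTransition ((z (j, i) + c (j, i)) * N) := fun j =>
      Finset.prod_nonneg fun i _ => Real.smoothTransition.nonneg _
    have hle : ∀ j, 0 ≤ 1 - ∏ i, Real.smoothTransition ((z (j, i) + c (j, i)) * N) := by
      intro j
      rw [sub_nonneg]
      exact Finset.prod_le_one (fun i _ => Real.smoothTransition.nonneg _)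
        fun i _ => Real.smoothTransition.le_one _
    rw [abs_of_nonneg (Finset.prod_nonneg fun j _ => hle j)]
    exact Finset.prod_le_one (fun j _ => hle j) fun j _ => by linarith [hp j]
  clear_value F
  have hconv : ∀ w : J × K → κ → ℝ, Tendsto (fun N => ∫ ξ, F N (fun a => ∑ k, w a k * L k ξ) ∂ν) atTop
      (nhds (1 - ν.real {ξ | ∃ j, ∀ i, 0 < ∑ k, w (j, i) k * L k ξ + c (j, i)})) := by
    intro w
    have hm : MeasurableSet {ξ | ∃ j, ∀ i, 0 < ∑ k, w (j, i) k * L k ξ + c (j, i)} := by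
      have : {ξ | ∃ j, ∀ i, 0 < ∑ k, w (j, i) k * L k ξ + c (j, i)}
          = ⋃ j, ⋂ i, {ξ | 0 < ∑ k, w (j, i) k * L k ξ + c (j, i)} := by ext; simp
      rw [this]
      refine MeasurableSet.iUnion fun j => MeasurableSet.iInter fun i => ?_
      exact (isOpen_lt continuous_const (by fun_prop)).measurableSet
    have hw : Continuous fun ξ : E => fun a : J × K => ∑ k, w a k * L k ξ := by fun_prop
    have h1 := tendsto_integral_of_dominated_convergence (μ := ν) (fun _ => (1:ℝ))
      (F := fun N ξ => F N (fun a => ∑ k, w a k * L k ξ))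
      (fun N => ((hFc N).comp hw).aestronglyMeasurable)
      (integrable_const _) (fun N => ae_of_all _ fun ξ => (Real.norm_eq_abs _).le.trans (hF1 N _))
      (ae_of_all _ fun ξ => hlim (fun a => ∑ k, w a k * L k ξ))
    have h2 : ∫ ξ, (if ∃ j, ∀ i, 0 < ∑ k, w (j, i) k * L k ξ + c (j, i) then (0:ℝ) else 1) ∂ν
        = 1 - ν.real {ξ | ∃ j, ∀ i, 0 < ∑ k, w (j, i) k * L k ξ + c (j, i)} := by
      rw [← probReal_compl_eq_one_sub hm, ← integral_indicator_one hm.compl]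
      refine integral_congr_ae (ae_of_all _ fun ξ => ?_)
      by_cases h : ∃ j, ∀ i, 0 < ∑ k, w (j, i) k * L k ξ + c (j, i)
      · simp only [if_pos h]
        rw [Set.indicator_of_notMem]
        exact fun h' => h' h
      · simp only [if_neg h]
        rw [Set.indicator_of_mem]
        · rfl
        · exact h
    rw [← h2]
    exact h1
  have := le_of_tendsto_of_tendsto' (hconv y) (hconv x) hstep
  have h2 := (sub_le_sub_iff_left _).1 this
  exact (ENNReal.toReal_le_toReal (measure_ne_top _ _) (measure_ne_top _ _)).1 h2
theorem GCompact {E : Type*} [NormedAddCommGroup E] [NormedSpace ℝ E] [MeasurableSpace E]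
    [BorelSpace E] [SecondCountableTopology E] (ν : Measure E) [IsProbabilityMeasure ν]
    {κ : Type*} [Fintype κ] [DecidableEq κ] (L : κ → E →L[ℝ] ℝ) (v : κ → E)
    (hLv : ∀ k l, L k (v l) = if k = l then 1 else 0)
    (hS : ∀ k, GSteinDir ν (fun ξ => L k ξ) (v k))
    {R P : Type*} [TopologicalSpace R] [TopologicalSpace P] [CompactSpace P]
    [TopologicalSpace.SeparableSpace R] [TopologicalSpace.SeparableSpace P] [Nonempty R] [Nonempty P]
    (x y : R → P → κ → ℝ) (c : R → P → ℝ)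
    (hx : Continuous fun t : R × P => x t.1 t.2) (hy : Continuous fun t : R × P => y t.1 t.2)
    (hc : Continuous fun t : R × P => c t.1 t.2)
    (horth : ∀ r p r' p', ∑ k, x r p k * y r' p' k = 0)
    (hD0 : ∀ r p p', ∑ k, x r p k * x r p' k = ∑ k, y r p k * y r p' k)
    (hD : ∀ r p r' p', ∑ k, y r p k * y r' p' k ≤ ∑ k, x r p k * x r' p' k) :
    ν {ξ | ∃ r, ∀ p, 0 < ∑ k, x r p k * L k ξ + c r p}
      ≤ ν {ξ | ∃ r, ∀ p, 0 ≤ ∑ k, y r p k * L k ξ + c r p} := by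
  set rs := TopologicalSpace.denseSeq R
  set ps := TopologicalSpace.denseSeq P
  have hrs : DenseRange rs := TopologicalSpace.denseRange_denseSeq R
  have hps : DenseRange ps := TopologicalSpace.denseRange_denseSeq P
  have cX : ∀ ξ, Continuous fun t : R × P => ∑ k, x t.1 t.2 k * L k ξ + c t.1 t.2 := by
    intro ξ
    refine Continuous.add (continuous_finsetSum _ fun k _ => ?_) hc
    exact ((continuous_apply k).comp hx).mul continuous_const
  have cY : ∀ ξ, Continuous fun t : R × P => ∑ k, y t.1 t.2 k * L k ξ + c t.1 t.2 := by
    intro ξ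
    refine Continuous.add (continuous_finsetSum _ fun k _ => ?_) hc
    exact ((continuous_apply k).comp hy).mul continuous_const
  set U : ℕ → Set E := fun m => {ξ | ∃ j : Fin m, ∀ p, 0 < ∑ k, x (rs j) p k * L k ξ + c (rs j) p} with hU
  have hUm : Monotone U := by
    intro m m' hm ξ hξ
    obtain ⟨j, hj⟩ := hξ
    exact ⟨Fin.castLE hm j, hj⟩
  have hsub : {ξ | ∃ r, ∀ p, 0 < ∑ k, x r p k * L k ξ + c r p} ⊆ ⋃ m, U m := by
    rintro ξ ⟨r, hr⟩
    have hev : ∀ᶠ r' in nhds r, ∀ p ∈ (Set.univ : Set P), 0 < ∑ k, x r' p k * L k ξ + c r' p := by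
      refine isCompact_univ.eventually_forall_of_forall_eventually fun p _ => ?_
      exact (cX ξ).continuousAt.eventually_const_lt (hr p)
    obtain ⟨r', hr', ⟨j, rfl⟩⟩ := mem_closure_iff_nhds.1 (hrs r) _ hev
    exact Set.mem_iUnion.2 ⟨j + 1, ⟨⟨j, by omega⟩, fun p => hr' p trivial⟩⟩
  refine (measure_mono hsub).trans ?_
  rw [hUm.measure_iUnion]
  refine iSup_le fun m => ?_
  set W : ℕ → Set E := fun l => {ξ | ∃ j : Fin m, ∀ i : Fin l,
    0 ≤ ∑ k, y (rs j) (ps i) k * L k ξ + c (rs j) (ps i)} with hW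
  have hWa : Antitone W := by
    intro l l' hl ξ hξ
    obtain ⟨j, hj⟩ := hξ
    exact ⟨j, fun i => hj (Fin.castLE hl i)⟩
  have hWm : ∀ l, MeasurableSet (W l) := by
    intro l
    have : W l = ⋃ j : Fin m, ⋂ i : Fin l,
        {ξ | 0 ≤ ∑ k, y (rs j) (ps i) k * L k ξ + c (rs j) (ps i)} := by ext; simp [hW]
    rw [this]
    refine MeasurableSet.iUnion fun j => MeasurableSet.iInter fun i => ?_
    exact (isClosed_le continuous_const (by fun_prop)).measurableSet
  have hUW : ∀ l, ν (U m) ≤ ν (W l) := by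
    intro l
    have := GFinite ν L v hLv hS (J := Fin m) (K := Fin l)
      (fun a => x (rs a.1) (ps a.2)) (fun a => y (rs a.1) (ps a.2))
      (fun a b => horth _ _ _ _)
      (fun a b hab => by simp only [hab]; exact hD0 _ _ _)
      (fun a b => hD _ _ _ _) (fun a => c (rs a.1) (ps a.2))
    refine le_trans (measure_mono ?_) (this.trans (measure_mono ?_))
    · rintro ξ ⟨j, hj⟩
      exact ⟨j, fun i => hj _⟩
    · rintro ξ ⟨j, hj⟩
      exact ⟨j, fun i => (hj i).le⟩
  have hlim : ν (U m) ≤ ν (⋂ l, W l) := by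
    rw [hWa.measure_iInter (fun l => (hWm l).nullMeasurableSet) ⟨0, measure_ne_top _ _⟩]
    exact le_iInf hUW
  refine hlim.trans (measure_mono ?_)
  intro ξ hξ
  rw [Set.mem_iInter] at hξ
  have : ∃ j : Fin m, ∀ i : ℕ, 0 ≤ ∑ k, y (rs j) (ps i) k * L k ξ + c (rs j) (ps i) := by
    by_contra hcon
    push Not at hcon
    choose i hi using hcon
    obtain ⟨j, hj⟩ := hξ (Finset.univ.sup i + 1)
    have := hj ⟨i j, Nat.lt_succ_of_le (Finset.le_sup (Finset.mem_univ j))⟩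
    exact absurd (hi j) (not_lt.2 this)
  obtain ⟨j, hj⟩ := this
  refine ⟨rs j, fun p => ?_⟩
  refine hps.induction_on (p := fun p => 0 ≤ ∑ k, y (rs j) p k * L k ξ + c (rs j) p) p ?_ hj
  exact isClosed_le continuous_const ((cY ξ).comp (Continuous.prodMk_right (rs j)))
theorem ggauss_half (σ : ℝ) : 1 ≤ 2 * (gaussianReal 0 1) {γ : ℝ | 0 ≤ σ * γ} := by
  have hm : MeasurableSet {γ : ℝ | 0 ≤ σ * γ} :=
    (isClosed_le continuous_const (by fun_prop)).measurableSet
  have h1 : (gaussianReal 0 1) ((fun x : ℝ => -x) ⁻¹' {γ : ℝ | 0 ≤ σ * γ})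
      = (gaussianReal 0 1) {γ : ℝ | 0 ≤ σ * γ} := by
    rw [← Measure.map_apply measurable_neg hm, gaussianReal_map_neg, neg_zero]
  have h2 : (Set.univ : Set ℝ) ⊆ {γ : ℝ | 0 ≤ σ * γ} ∪ ((fun x : ℝ => -x) ⁻¹' {γ : ℝ | 0 ≤ σ * γ}) := by
    intro γ _
    rcases le_total 0 (σ * γ) with h | h
    · exact Or.inl h
    · right; simpa using h
  calc (1 : ENNReal) = (gaussianReal 0 1) Set.univ := by simp
    _ ≤ _ := measure_mono h2
    _ ≤ _ := measure_union_le _ _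
    _ = _ := by rw [h1, two_mul]

instance gstd_prob (d : ℕ) : IsProbabilityMeasure (_root_.stdGaussian d) := by
  unfold _root_.stdGaussian; infer_instance

/-- index set of all Gaussian coordinates -/
abbrev GIdx (d n : ℕ) : Type := (Fin n × Fin d) ⊕ Unit ⊕ Fin n ⊕ Fin d

/-- the ambient space -/
abbrev GSpace (d n : ℕ) : Type := (Fin n → Fin d → ℝ) × ℝ × (Fin n → ℝ) × (Fin d → ℝ)

/-- the Gaussian measure on the ambient space -/
def GMeas (d n : ℕ) : Measure (GSpace d n) :=
  (Measure.pi fun _ : Fin n => _root_.stdGaussian d).prod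
    ((gaussianReal 0 1).prod ((_root_.stdGaussian n).prod (_root_.stdGaussian d)))

instance gmeas_prob (d n : ℕ) : IsProbabilityMeasure (GMeas d n) := by
  unfold GMeas; infer_instance

/-- coordinate functionals -/
def GCoord (d n : ℕ) : GIdx d n → GSpace d n →L[ℝ] ℝ
  | .inl ij => (ContinuousLinearMap.proj (R := ℝ) (φ := fun _ : Fin d => ℝ) ij.2).comp
      ((ContinuousLinearMap.proj (R := ℝ) (φ := fun _ : Fin n => Fin d → ℝ) ij.1).comp
        (ContinuousLinearMap.fst ℝ _ _))
  | .inr (.inl _) => (ContinuousLinearMap.fst ℝ _ _).comp (ContinuousLinearMap.snd ℝ _ _)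
  | .inr (.inr (.inl i)) => (ContinuousLinearMap.proj (R := ℝ) (φ := fun _ : Fin n => ℝ) i).comp
      ((ContinuousLinearMap.fst ℝ _ _).comp
        ((ContinuousLinearMap.snd ℝ _ _).comp (ContinuousLinearMap.snd ℝ _ _)))
  | .inr (.inr (.inr j)) => (ContinuousLinearMap.proj (R := ℝ) (φ := fun _ : Fin d => ℝ) j).comp
      ((ContinuousLinearMap.snd ℝ _ _).comp
        ((ContinuousLinearMap.snd ℝ _ _).comp (ContinuousLinearMap.snd ℝ _ _)))

/-- coordinate directions -/
def GV (d n : ℕ) : GIdx d n → GSpace d n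
  | .inl ij => (Pi.single ij.1 (Pi.single ij.2 1), 0)
  | .inr (.inl _) => (0, 1, 0)
  | .inr (.inr (.inl i)) => (0, 0, Pi.single i 1, 0)
  | .inr (.inr (.inr j)) => (0, 0, 0, Pi.single j 1)

theorem GLV (d n : ℕ) (k l : GIdx d n) : GCoord d n k (GV d n l) = if k = l then 1 else 0 := by
  rcases k with ⟨i, j⟩ | ⟨⟩ | i | i <;> rcases l with ⟨i', j'⟩ | ⟨⟩ | i' | i' <;>
    simp [GCoord, GV, Pi.single_apply]
  by_cases h : i = i'
  · subst h; simp [Pi.single_apply]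
  · simp [h]

theorem GLS (d n : ℕ) (k : GIdx d n) : GSteinDir (GMeas d n) (fun ξ => GCoord d n k ξ) (GV d n k) := by
  have hstd : ∀ m (i : Fin m), GSteinDir (_root_.stdGaussian m) (fun x => x i) (Pi.single i 1) :=
    fun m i => GStein_pi _ GStein_gauss m i
  rcases k with ⟨i, j⟩ | ⟨⟩ | i | i
  · exact GStein_prod_left _ _ (GStein_pi _ (hstd d j) n i)
  · exact GStein_prod_right _ _ (GStein_prod_left _ _ GStein_gauss)
  · exact GStein_prod_right _ _ (GStein_prod_right _ _ (GStein_prod_left _ _ (hstd n i)))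
  · exact GStein_prod_right _ _ (GStein_prod_right _ _ (GStein_prod_right _ _ (hstd d i)))

/-- coefficients of the primary process -/
def GX {d n : ℕ} (σ : ℝ) (η : Fin n → ℝ) (u : Fin d → ℝ) : GIdx d n → ℝ
  | .inl ij => σ * (η ij.1 * u ij.2)
  | .inr (.inl _) => σ * (Real.sqrt (∑ j, u j ^ 2) * Real.sqrt (∑ i, η i ^ 2))
  | .inr (.inr _) => 0

/-- coefficients of the auxiliary process -/
def GY {d n : ℕ} (σ : ℝ) (η : Fin n → ℝ) (u : Fin d → ℝ) : GIdx d n → ℝ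
  | .inl _ => 0
  | .inr (.inl _) => 0
  | .inr (.inr (.inl i)) => σ * (Real.sqrt (∑ j, u j ^ 2) * η i)
  | .inr (.inr (.inr j)) => σ * (Real.sqrt (∑ i, η i ^ 2) * u j)

theorem GXX {d n : ℕ} (σ : ℝ) (η η' : Fin n → ℝ) (u u' : Fin d → ℝ) :
    ∑ k, GX σ η u k * GX σ η' u' k = σ ^ 2 * ((∑ i, η i * η' i) * (∑ j, u j * u' j)
      + Real.sqrt (∑ j, u j ^ 2) * Real.sqrt (∑ j, u' j ^ 2)
        * (Real.sqrt (∑ i, η i ^ 2) * Real.sqrt (∑ i, η' i ^ 2))) := by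
  simp only [Fintype.sum_sum_type, Fintype.sum_prod_type, GX]
  rw [Finset.sum_mul_sum]
  simp only [mul_zero, Finset.sum_const_zero, add_zero, Finset.univ_unique, Finset.sum_const,
    Finset.card_singleton, one_smul, mul_add, Finset.mul_sum]
  congr 1
  · refine Finset.sum_congr rfl fun i _ => Finset.sum_congr rfl fun j _ => ?_
    ring
  · ring

theorem GYY {d n : ℕ} (σ : ℝ) (η η' : Fin n → ℝ) (u u' : Fin d → ℝ) :
    ∑ k, GY σ η u k * GY σ η' u' k = σ ^ 2 * (
      Real.sqrt (∑ j, u j ^ 2) * Real.sqrt (∑ j, u' j ^ 2) * (∑ i, η i * η' i)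
      + (Real.sqrt (∑ i, η i ^ 2) * Real.sqrt (∑ i, η' i ^ 2)) * (∑ j, u j * u' j)) := by
  simp only [Fintype.sum_sum_type, GY]
  simp only [mul_zero, Finset.sum_const_zero, zero_add, mul_add, Finset.mul_sum]
  congr 1 <;> refine Finset.sum_congr rfl fun i _ => ?_ <;> ring

theorem GXY {d n : ℕ} (σ : ℝ) (η η' : Fin n → ℝ) (u u' : Fin d → ℝ) :
    ∑ k, GX σ η u k * GY σ η' u' k = 0 := by
  simp [Fintype.sum_sum_type, GX, GY]

theorem GXL {d n : ℕ} (σ : ℝ) (η : Fin n → ℝ) (u : Fin d → ℝ) (ξ : GSpace d n) :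
    ∑ k, GX σ η u k * GCoord d n k ξ = σ * (∑ i, η i * ∑ j, ξ.1 i j * u j)
      + (σ * ξ.2.1) * (Real.sqrt (∑ j, u j ^ 2) * Real.sqrt (∑ i, η i ^ 2)) := by
  simp only [Fintype.sum_sum_type, Fintype.sum_prod_type, GX, GCoord]
  simp [Finset.mul_sum]
  congr 1
  · refine Finset.sum_congr rfl fun i _ => Finset.sum_congr rfl fun j _ => ?_
    ring
  · ring

theorem GYL {d n : ℕ} (σ : ℝ) (η : Fin n → ℝ) (u : Fin d → ℝ) (ξ : GSpace d n) :
    ∑ k, GY σ η u k * GCoord d n k ξ = σ * (Real.sqrt (∑ j, u j ^ 2) * (∑ i, η i * ξ.2.2.1 i)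
          + Real.sqrt (∑ i, η i ^ 2) * (∑ j, u j * ξ.2.2.2 j)) := by
  simp only [Fintype.sum_sum_type, GY, GCoord]
  simp [mul_add, Finset.mul_sum]
  congr 1 <;> refine Finset.sum_congr rfl fun i _ => ?_ <;> ring

theorem GMain {Ω : Type*} [MeasurableSpace Ω] (μ : Measure Ω) [IsProbabilityMeasure μ]
    (d n : ℕ)
    (X : Ω → Fin n → Fin d → ℝ) (g : Ω → Fin n → ℝ) (h : Ω → Fin d → ℝ)
    (hXmeas : Measurable X) (hgmeas : Measurable g) (hhmeas : Measurable h)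
    (hXlaw : μ.map X = Measure.pi fun _ : Fin n => _root_.stdGaussian d)
    (hglaw : μ.map g = _root_.stdGaussian n) (hhlaw : μ.map h = _root_.stdGaussian d)
    (hindep₂ : IndepFun g h μ)
    {R P : Type*} [TopologicalSpace R] [TopologicalSpace P] [CompactSpace R] [CompactSpace P]
    [TopologicalSpace.SeparableSpace R] [TopologicalSpace.SeparableSpace P] [Nonempty R] [Nonempty P]
    (η : R → P → Fin n → ℝ) (u : R → P → Fin d → ℝ) (c : R → P → ℝ) (σ : ℝ)
    (hη : Continuous fun t : R × P => η t.1 t.2) (hu : Continuous fun t : R × P => u t.1 t.2)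
    (hc : Continuous fun t : R × P => c t.1 t.2)
    (hdep : (∀ r p p', η r p = η r p') ∨ (∀ r p p', u r p = u r p')) :
    μ {ω | ∃ r, ∀ p, 0 < σ * (∑ i, η r p i * ∑ j, X ω i j * u r p j) + c r p}
      ≤ 2 * μ {ω | ∃ r, ∀ p, 0 ≤ σ * (Real.sqrt (∑ j, u r p j ^ 2) * (∑ i, η r p i * g ω i)
          + Real.sqrt (∑ i, η r p i ^ 2) * (∑ j, u r p j * h ω j)) + c r p} := by
  have hηi : ∀ i, Continuous fun t : R × P => η t.1 t.2 i := fun i => (continuous_apply i).comp hη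
  have hui : ∀ i, Continuous fun t : R × P => u t.1 t.2 i := fun i => (continuous_apply i).comp hu
  have hηn : Continuous fun t : R × P => Real.sqrt (∑ i, η t.1 t.2 i ^ 2) :=
    Real.continuous_sqrt.comp (continuous_finsetSum _ fun i _ => (hηi i).pow 2)
  have hun : Continuous fun t : R × P => Real.sqrt (∑ i, u t.1 t.2 i ^ 2) :=
    Real.continuous_sqrt.comp (continuous_finsetSum _ fun i _ => (hui i).pow 2)
  set SX : Set (Fin n → Fin d → ℝ) :=
    {M | ∃ r, ∀ p, 0 < σ * (∑ i, η r p i * ∑ j, M i j * u r p j) + c r p} with hSX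
  set SY : Set ((Fin n → ℝ) × (Fin d → ℝ)) :=
    {z | ∃ r, ∀ p, 0 ≤ σ * (Real.sqrt (∑ j, u r p j ^ 2) * (∑ i, η r p i * z.1 i)
          + Real.sqrt (∑ i, η r p i ^ 2) * (∑ j, u r p j * z.2 j)) + c r p} with hSY
  have key := GCompact (GMeas d n) (GCoord d n) (GV d n) (GLV d n) (GLS d n)
    (fun r p => GX σ (η r p) (u r p)) (fun r p => GY σ (η r p) (u r p)) c
    (by
      refine continuous_pi fun k => ?_
      rcases k with ⟨i, j⟩ | ⟨⟩ | i | i <;> simp only [GX]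
      · exact continuous_const.mul ((hηi i).mul (hui j))
      · exact continuous_const.mul (hun.mul hηn)
      · exact continuous_const
      · exact continuous_const)
    (by
      refine continuous_pi fun k => ?_
      rcases k with ⟨i, j⟩ | ⟨⟩ | i | i <;> simp only [GY]
      · exact continuous_const
      · exact continuous_const
      · exact continuous_const.mul (hun.mul (hηi i))
      · exact continuous_const.mul (hηn.mul (hui i)))
    hc (fun r p r' p' => GXY _ _ _ _ _)
    (by
      intro r p p'
      rw [GXX, GYY]
      rcases hdep with h | h
      · rw [h r p p', Real.mul_self_sqrt (Finset.sum_nonneg fun i _ => sq_nonneg _)]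
        simp only [pow_two]; ring
      · rw [h r p p', Real.mul_self_sqrt (Finset.sum_nonneg fun i _ => sq_nonneg _)]
        simp only [pow_two]; ring)
    (by
      intro r p r' p'
      rw [GXX, GYY]
      refine mul_le_mul_of_nonneg_left ?_ (sq_nonneg _)
      have h1 := Real.sum_mul_le_sqrt_mul_sqrt Finset.univ (η r p) (η r' p')
      have h2 := Real.sum_mul_le_sqrt_mul_sqrt Finset.univ (u r p) (u r' p')
      nlinarith [mul_nonneg (sub_nonneg.2 h1) (sub_nonneg.2 h2)])
  simp only [GXL, GYL] at key
  have e2 : {ξ : GSpace d n | ∃ r, ∀ p, 0 ≤ σ * (Real.sqrt (∑ j, u r p j ^ 2) * (∑ i, η r p i * ξ.2.2.1 i)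
          + Real.sqrt (∑ i, η r p i ^ 2) * (∑ j, u r p j * ξ.2.2.2 j)) + c r p}
      = Set.univ ×ˢ (Set.univ ×ˢ SY) := by
    ext ξ; simp [hSY]
  have e1 : SX ×ˢ ({γ : ℝ | 0 ≤ σ * γ} ×ˢ (Set.univ : Set ((Fin n → ℝ) × (Fin d → ℝ)))) ⊆
      {ξ : GSpace d n | ∃ r, ∀ p, 0 < σ * (∑ i, η r p i * ∑ j, ξ.1 i j * u r p j)
      + (σ * ξ.2.1) * (Real.sqrt (∑ j, u r p j ^ 2) * Real.sqrt (∑ i, η r p i ^ 2)) + c r p} := by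
    rintro ⟨M, γ, z⟩ ⟨⟨r, hr⟩, hγ, -⟩
    refine ⟨r, fun p => ?_⟩
    have h1 := hr p
    have h2 : 0 ≤ σ * γ := hγ
    have h3 := mul_nonneg h2 (mul_nonneg (Real.sqrt_nonneg (∑ j, u r p j ^ 2))
      (Real.sqrt_nonneg (∑ i, η r p i ^ 2)))
    simp only
    linarith
  have key2 := (measure_mono e1).trans key
  rw [e2] at key2
  unfold GMeas at key2
  simp only [Measure.prod_prod, measure_univ, one_mul, mul_one] at key2
  have hSYm : MeasurableSet SY := by
    have hcl : IsClosed {t : R × ((Fin n → ℝ) × (Fin d → ℝ)) | ∀ p, 0 ≤ σ * (Real.sqrt (∑ j, u t.1 p j ^ 2) * (∑ i, η t.1 p i * t.2.1 i)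
          + Real.sqrt (∑ i, η t.1 p i ^ 2) * (∑ j, u t.1 p j * t.2.2 j)) + c t.1 p} := by
      rw [Set.ofPred_forall]
      refine isClosed_iInter fun p => isClosed_le continuous_const ?_
      have hm : Continuous fun t : R × ((Fin n → ℝ) × (Fin d → ℝ)) => (t.1, p) := by fun_prop
      have a1 := hun.comp hm
      have a2 := hηn.comp hm
      have a3 := fun i => (hηi i).comp hm
      have a4 := fun i => (hui i).comp hm
      have a5 := hc.comp hm
      simp only [Function.comp_def] at a1 a2 a3 a4 a5
      refine Continuous.add (continuous_const.mul (Continuous.add (a1.mul ?_) (a2.mul ?_))) a5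
      · exact continuous_finsetSum _ fun i _ => (a3 i).mul (by fun_prop)
      · exact continuous_finsetSum _ fun i _ => (a4 i).mul (by fun_prop)
    have := (isClosedMap_snd_of_compactSpace (X := R) (Y := (Fin n → ℝ) × (Fin d → ℝ))) _ hcl
    have e : SY = Prod.snd '' {t : R × ((Fin n → ℝ) × (Fin d → ℝ)) | ∀ p, 0 ≤ σ * (Real.sqrt (∑ j, u t.1 p j ^ 2) * (∑ i, η t.1 p i * t.2.1 i)
          + Real.sqrt (∑ i, η t.1 p i ^ 2) * (∑ j, u t.1 p j * t.2.2 j)) + c t.1 p} := by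
      ext z; simp [hSY]
    rw [e]
    exact this.measurableSet
  have hgh : μ.map (fun ω => (g ω, h ω)) = (_root_.stdGaussian n).prod (_root_.stdGaussian d) := by
    rw [(indepFun_iff_map_prod_eq_prod_map_map hgmeas.aemeasurable hhmeas.aemeasurable).1 hindep₂,
      hglaw, hhlaw]
  have f1 : μ {ω | ∃ r, ∀ p, 0 < σ * (∑ i, η r p i * ∑ j, X ω i j * u r p j) + c r p}
      ≤ (Measure.pi fun _ : Fin n => _root_.stdGaussian d) SX := by
    rw [← hXlaw]
    exact Measure.le_map_apply hXmeas.aemeasurable SX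
  have f2 : ((_root_.stdGaussian n).prod (_root_.stdGaussian d)) SY = μ {ω | ∃ r, ∀ p, 0 ≤ σ * (Real.sqrt (∑ j, u r p j ^ 2) * (∑ i, η r p i * g ω i)
          + Real.sqrt (∑ i, η r p i ^ 2) * (∑ j, u r p j * h ω j)) + c r p} := by
    rw [← hgh, Measure.map_apply (hgmeas.prodMk hhmeas) hSYm]
    rfl
  rw [← f2]
  refine f1.trans ?_
  calc _ = (Measure.pi fun _ : Fin n => _root_.stdGaussian d) SX * 1 := (mul_one _).symm
    _ ≤ (Measure.pi fun _ : Fin n => _root_.stdGaussian d) SX * (2 * (gaussianReal 0 1) {γ : ℝ | 0 ≤ σ * γ}) := by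
        gcongr; exact ggauss_half σ
    _ = 2 * ((Measure.pi fun _ : Fin n => _root_.stdGaussian d) SX * (gaussianReal 0 1) {γ : ℝ | 0 ≤ σ * γ}) := by ring
    _ ≤ _ := by gcongr

section GMinimax

variable {E F : Type*} [TopologicalSpace E] [TopologicalSpace F]

theorem gbddBelow (f : E → F → ℝ) (hf : Continuous fun t : E × F => f t.1 t.2)
    (A : Set E) (hA : IsCompact A) (q : F) : BddBelow ((fun p => f p q) '' A) :=
  hA.bddBelow_image (Continuous.continuousOn (hf.comp (by fun_prop : Continuous fun p : E => (p, q))))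

theorem gbddAbove (f : E → F → ℝ) (hf : Continuous fun t : E × F => f t.1 t.2)
    (A : Set E) (B : Set F) (hA : IsCompact A) (hB : IsCompact B) (hAne : A.Nonempty) :
    BddAbove ((fun q => sInf ((fun p => f p q) '' A)) '' B) := by
  obtain ⟨a, ha⟩ := hAne
  have h1 : BddAbove ((fun q => f a q) '' B) :=
    hB.bddAbove_image
      (Continuous.continuousOn (hf.comp (by fun_prop : Continuous fun q : F => (a, q))))
  obtain ⟨M, hM⟩ := h1
  refine ⟨M, ?_⟩
  rintro _ ⟨q, hq, rfl⟩
  exact (csInf_le (gbddBelow f hf A hA q) ⟨a, ha, rfl⟩).trans (hM ⟨q, hq, rfl⟩)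

theorem gmm1 (f : E → F → ℝ) (hf : Continuous fun t : E × F => f t.1 t.2)
    (A : Set E) (B : Set F) (hA : IsCompact A) (hBne : B.Nonempty) (c : ℝ)
    (h : c < sSup ((fun q => sInf ((fun p => f p q) '' A)) '' B)) :
    ∃ q : B, ∀ p : A, c < f p q := by
  obtain ⟨_, ⟨q, hq, rfl⟩, h1⟩ := exists_lt_of_lt_csSup (hBne.image _) h
  exact ⟨⟨q, hq⟩, fun p => h1.trans_le (csInf_le (gbddBelow f hf A hA q) ⟨p, p.2, rfl⟩)⟩

theorem gmm2 (f : E → F → ℝ) (hf : Continuous fun t : E × F => f t.1 t.2)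
    (A : Set E) (B : Set F) (hA : IsCompact A) (hB : IsCompact B) (hAne : A.Nonempty) (c : ℝ)
    (h : ∃ q : B, ∀ p : A, c ≤ f p q) :
    c ≤ sSup ((fun q => sInf ((fun p => f p q) '' A)) '' B) := by
  obtain ⟨q, hq⟩ := h
  refine le_trans ?_ (le_csSup (gbddAbove f hf A B hA hB hAne) ⟨q, q.2, rfl⟩)
  refine le_csInf (hAne.image _) ?_
  rintro _ ⟨p, hp, rfl⟩
  exact hq ⟨p, hp⟩

theorem gmm3 (f : E → F → ℝ) (hf : Continuous fun t : E × F => f t.1 t.2)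
    (A : Set E) (B : Set F) (hA : IsCompact A) (hB : IsCompact B) (hAne : A.Nonempty) (c : ℝ)
    (hs : ∃ a ∈ A, ∃ b ∈ B, IsSaddlePointOn A B f a b)
    (h : sSup ((fun q => sInf ((fun p => f p q) '' A)) '' B) < c) :
    ∃ p : A, ∀ q : B, f p q < c := by
  obtain ⟨a, ha, b, hb, hab⟩ := hs
  refine ⟨⟨a, ha⟩, fun q => lt_of_le_of_lt ?_ h⟩
  refine le_trans ?_ (le_csSup (gbddAbove f hf A B hA hB hAne) ⟨b, hb, rfl⟩)
  refine le_csInf (hAne.image _) ?_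
  rintro _ ⟨p, hp, rfl⟩
  exact hab p hp q q.2

theorem gmm4 (f : E → F → ℝ) (hf : Continuous fun t : E × F => f t.1 t.2)
    (A : Set E) (B : Set F) (hA : IsCompact A) (hBne : B.Nonempty) (c : ℝ)
    (h : ∃ p : A, ∀ q : B, f p q ≤ c) :
    sSup ((fun q => sInf ((fun p => f p q) '' A)) '' B) ≤ c := by
  obtain ⟨p, hp⟩ := h
  refine csSup_le (hBne.image _) ?_
  rintro _ ⟨q, hq, rfl⟩
  exact (csInf_le (gbddBelow f hf A hA q) ⟨p, p.2, rfl⟩).trans (hp ⟨q, hq⟩)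

end GMinimax

/-- Gordon comparison inequality, Proposition 3 of the paper.  Let
`X ∈ ℝ^{n×d}` have i.i.d. `N(0,1)` entries, `g ∼ N(0, I_n)`, `h ∼ N(0, I_d)` with `X, g, h`
independent.  Let `Q(β₀, u, r, η, s)` be jointly continuous, convex in `(β₀, u, r)` and concave
in `(η, s)`, and fix compact sets `A` and `B`.  With `Φ` and `φ` the max–min values above,
`P(Φ > c) ≤ 2 P(φ ≥ c)` for all `c`; if moreover `A` and `B` are convex then
`P(Φ < c) ≤ 2 P(φ ≤ c)` for all `c`. -/
theorem gordon_comparison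
    {Ω : Type*} [MeasurableSpace Ω] (μ : Measure Ω) [IsProbabilityMeasure μ]
    (d n : ℕ)
    (X : Ω → Fin n → Fin d → ℝ) (g : Ω → Fin n → ℝ) (h : Ω → Fin d → ℝ)
    (hXmeas : Measurable X) (hgmeas : Measurable g) (hhmeas : Measurable h)
    (hXlaw : μ.map X = Measure.pi fun _ : Fin n => stdGaussian d)
    (hglaw : μ.map g = stdGaussian n) (hhlaw : μ.map h = stdGaussian d)
    (hindep₁ : IndepFun X (fun ω => (g ω, h ω)) μ) (hindep₂ : IndepFun g h μ)
    (Q : ℝ → (Fin d → ℝ) → (Fin n → ℝ) → (Fin n → ℝ) → (Fin d → ℝ) → ℝ)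
    (hQcont : Continuous fun t : ℝ × (Fin d → ℝ) × (Fin n → ℝ) × (Fin n → ℝ) × (Fin d → ℝ) =>
      Q t.1 t.2.1 t.2.2.1 t.2.2.2.1 t.2.2.2.2)
    (hQconvex : ∀ η s, ConvexOn ℝ Set.univ
      (fun p : ℝ × (Fin d → ℝ) × (Fin n → ℝ) => Q p.1 p.2.1 p.2.2 η s))
    (hQconcave : ∀ β₀ u r, ConcaveOn ℝ Set.univ
      (fun q : (Fin n → ℝ) × (Fin d → ℝ) => Q β₀ u r q.1 q.2))
    (A : Set (ℝ × (Fin d → ℝ) × (Fin n → ℝ))) (B : Set ((Fin n → ℝ) × (Fin d → ℝ)))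
    (hA : IsCompact A) (hB : IsCompact B) (hAne : A.Nonempty) (hBne : B.Nonempty) :
    (∀ c : ℝ, μ {ω | c < gordonPhi (X ω) Q A B}
        ≤ 2 * μ {ω | c ≤ gordonphi (g ω) (h ω) Q A B}) ∧
    (Convex ℝ A → Convex ℝ B → ∀ c : ℝ,
      μ {ω | gordonPhi (X ω) Q A B < c}
        ≤ 2 * μ {ω | gordonphi (g ω) (h ω) Q A B ≤ c}) := by
  classical
  have hQc : Continuous fun t : (ℝ × (Fin d → ℝ) × (Fin n → ℝ)) × ((Fin n → ℝ) × (Fin d → ℝ)) =>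
      Q t.1.1 t.1.2.1 t.1.2.2 t.2.1 t.2.2 :=
    hQcont.comp (by fun_prop : Continuous fun t : (ℝ × (Fin d → ℝ) × (Fin n → ℝ)) ×
      ((Fin n → ℝ) × (Fin d → ℝ)) => (t.1.1, t.1.2.1, t.1.2.2, t.2.1, t.2.2))
  have hf1 : ∀ M : Fin n → Fin d → ℝ, Continuous
      fun t : (ℝ × (Fin d → ℝ) × (Fin n → ℝ)) × ((Fin n → ℝ) × (Fin d → ℝ)) =>
      (fun (p : ℝ × (Fin d → ℝ) × (Fin n → ℝ)) (q : (Fin n → ℝ) × (Fin d → ℝ)) =>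
        (∑ i, q.1 i * ∑ j, M i j * p.2.1 j) + Q p.1 p.2.1 p.2.2 q.1 q.2) t.1 t.2 := by
    intro M
    exact Continuous.add (by fun_prop) hQc
  have hf2 : ∀ (x : Fin n → ℝ) (y : Fin d → ℝ), Continuous
      fun t : (ℝ × (Fin d → ℝ) × (Fin n → ℝ)) × ((Fin n → ℝ) × (Fin d → ℝ)) =>
      (fun (p : ℝ × (Fin d → ℝ) × (Fin n → ℝ)) (q : (Fin n → ℝ) × (Fin d → ℝ)) =>
        Real.sqrt (∑ j, p.2.1 j ^ 2) * (∑ i, q.1 i * x i)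
          + Real.sqrt (∑ i, q.1 i ^ 2) * (∑ j, p.2.1 j * y j)
          + Q p.1 p.2.1 p.2.2 q.1 q.2) t.1 t.2 := by
    intro x y
    exact Continuous.add (by fun_prop) hQc
  haveI : CompactSpace A := isCompact_iff_compactSpace.1 hA
  haveI : CompactSpace B := isCompact_iff_compactSpace.1 hB
  haveI : Nonempty A := hAne.to_subtype
  haveI : Nonempty B := hBne.to_subtype
  refine ⟨fun c => ?_, fun hAc hBc c => ?_⟩
  · have key := GMain μ d n X g h hXmeas hgmeas hhmeas hXlaw hglaw hhlaw hindep₂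
      (R := B) (P := A) (fun q _ => q.1.1) (fun _ p => p.1.2.1)
      (fun q p => Q p.1.1 p.1.2.1 p.1.2.2 q.1.1 q.1.2 - c) 1 (by fun_prop) (by fun_prop)
      ((hQc.comp (by fun_prop : Continuous fun t : B × A => (t.2.1, t.1.1))).sub continuous_const)
      (Or.inl fun _ _ _ => rfl)
    refine (measure_mono ?_).trans (key.trans (mul_le_mul_right (measure_mono ?_) _))
    · intro ω hω
      obtain ⟨q, hq⟩ := gmm1 _ (hf1 (X ω)) A B hA hBne c hω
      refine ⟨q, fun p => ?_⟩
      have := hq p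
      linarith
    · rintro ω ⟨q, hq⟩
      refine gmm2 _ (hf2 (g ω) (h ω)) A B hA hB hAne c ⟨q, fun p => ?_⟩
      have := hq p
      linarith
  · have key := GMain μ d n X g h hXmeas hgmeas hhmeas hXlaw hglaw hhlaw hindep₂
      (R := A) (P := B) (fun _ q => q.1.1) (fun p _ => p.1.2.1)
      (fun p q => c - Q p.1.1 p.1.2.1 p.1.2.2 q.1.1 q.1.2) (-1) (by fun_prop) (by fun_prop)
      (continuous_const.sub (hQc.comp (by fun_prop : Continuous fun t : A × B => (t.1.1, t.2.1))))
      (Or.inr fun _ _ _ => rfl)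
    refine (measure_mono ?_).trans (key.trans (mul_le_mul_right (measure_mono ?_) _))
    · intro ω hω
      obtain ⟨p, hp⟩ := gmm3 _ (hf1 (X ω)) A B hA hB hAne c
        (by
          refine Sion.exists_isSaddlePointOn hAne hAc hA (fun q _ => ?_) (fun q _ => ?_) hBc hBne hB
            (fun p _ => ?_) (fun p _ => ?_)
          · exact (Continuous.lowerSemicontinuous ((hf1 (X ω)).comp (by fun_prop :
              Continuous fun p : ℝ × (Fin d → ℝ) × (Fin n → ℝ) => (p, q)))).lowerSemicontinuousOn _
          · refine ConvexOn.quasiconvexOn (ConvexOn.add ?_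
              ((hQconvex q.1 q.2).subset (Set.subset_univ _) hAc))
            refine ⟨hAc, fun x _ y _ a b _ _ _ => le_of_eq ?_⟩
            simp only [Prod.snd_add, Prod.fst_add, Prod.smul_snd, Prod.smul_fst, Pi.add_apply,
              Pi.smul_apply, smul_eq_mul, Finset.mul_sum, ← Finset.sum_add_distrib]
            refine Finset.sum_congr rfl fun i _ => Finset.sum_congr rfl fun j _ => ?_
            ring
          · exact (Continuous.upperSemicontinuous ((hf1 (X ω)).comp (by fun_prop :
              Continuous fun q : (Fin n → ℝ) × (Fin d → ℝ) => (p, q)))).upperSemicontinuousOn _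
          · refine ConcaveOn.quasiconcaveOn (ConcaveOn.add ?_
              ((hQconcave p.1 p.2.1 p.2.2).subset (Set.subset_univ _) hBc))
            refine ⟨hBc, fun x _ y _ a b _ _ _ => le_of_eq ?_⟩
            simp only [Prod.snd_add, Prod.fst_add, Prod.smul_snd, Prod.smul_fst, Pi.add_apply,
              Pi.smul_apply, smul_eq_mul, Finset.mul_sum, ← Finset.sum_add_distrib]
            refine Finset.sum_congr rfl fun i _ => Finset.sum_congr rfl fun j _ => ?_
            ring) hω
      refine ⟨p, fun q => ?_⟩
      have := hp q
      linarith
    · rintro ω ⟨p, hp⟩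
      refine gmm4 _ (hf2 (g ω) (h ω)) A B hA hBne c ⟨p, fun q => ?_⟩
      have := hp q
      linarith

end
end

section
/- Fix any C_η > c_η > 0 and C₂ > 0. Under the stated distributional assumptions, the function (β₀, M_u, ρ₁) ↦ max over M_η ∈ [c_η, C_η] and ρ₂ ∈ (0, C₂] of A(β₀, M_u, ρ₁, M_η, ρ₂) is jointly strictly convex on ℝ × ℝ_{≥0} × ℝ_{>0}. Moreover, at ρ₁ = 0 this function is jointly strictly convex in (β₀, M_u) on ℝ × ℝ_{≥0}. -/
open MeasureTheory ProbabilityTheory Filter Finset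

noncomputable section

/-- The pinball (quantile) loss `ℓ_τ(r) = τ·r − min{r, 0}`. -/
def pinball (τ r : ℝ) : ℝ := τ * r - min r 0

/-- The Moreau envelope of a scalar function, `e_f(x; ρ) = inf_v (x − v)²/(2ρ) + f(v)` for
`ρ > 0`, continuously extended by `e_f(x; 0) = f(x)`. -/
def moreau (f : ℝ → ℝ) (x ρ : ℝ) : ℝ :=
  if ρ = 0 then f x else ⨅ v : ℝ, ((x - v) ^ 2 / (2 * ρ) + f v)

/-- The convex (Fenchel) conjugate of a scalar function, with values in `EReal`. -/
def conjE (f : ℝ → ℝ) (x : ℝ) : EReal := ⨆ v : ℝ, ((v * x - f v : ℝ) : EReal)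

/-- The Moreau envelope of the convex conjugate `f*` of a scalar function `f`. -/
def moreauConj (f : ℝ → ℝ) (x ρ : ℝ) : ℝ :=
  (⨅ v : ℝ, ((((x - v) ^ 2 / (2 * ρ) : ℝ) : EReal) + conjE f v)).toReal

/-- Assumptions on the noise distribution `P_ε`: mean zero, finite second moment and a bounded,
continuous density that is positive on all of `ℝ` (hence, in particular, continuous). -/
structure NoiseAssumption (Pε : Measure ℝ) : Prop where
  mean_zero : ∫ x, x ∂Pε = 0
  second_moment : Integrable (fun x => x ^ 2) Pε
  density : ∃ f : ℝ → ℝ, Continuous f ∧ (∀ x, 0 < f x) ∧ (∃ C, ∀ x, f x ≤ C) ∧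
    Pε = volume.withDensity fun x => ENNReal.ofReal (f x)

/-- The deterministic asymptotic objective
`A(β₀, M_u, ρ₁, M_η, ρ₂) = E[e_{ℓ_τ}(M_u g₁ + ε₁ − β₀; ρ₁/M_η)] − M_η² M_u γ/(2ρ₂)
  + γ E[e_ν((M_η M_u/ρ₂) h₁ + γ √d β̃₁; M_u/ρ₂)] + M_η ρ₁/2 − M_u ρ₂/2`,
where `(g₁, ε₁) ∼ N(0,1) ⊗ P_ε` and `(h₁, √d β̃₁) ∼ N(0,1) ⊗ P_β`. -/
def asymObj (τ γ : ℝ) (Pε Pβ : Measure ℝ) (ν : ℝ → ℝ) (β₀ Mu ρ₁ Mη ρ₂ : ℝ) : ℝ :=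
  (∫ z, moreau (pinball τ) (Mu * z.1 + z.2 - β₀) (ρ₁ / Mη) ∂((gaussianReal 0 1).prod Pε))
    - Mη ^ 2 * Mu * γ / (2 * ρ₂)
    + γ * (∫ z, moreau ν (Mη * Mu / ρ₂ * z.1 + γ * z.2) (Mu / ρ₂)
        ∂((gaussianReal 0 1).prod Pβ))
    + Mη * ρ₁ / 2 - Mu * ρ₂ / 2

/-- The inner maximum of the asymptotic objective over `M_η ∈ [c_η, C_η]` and `ρ₂ ∈ (0, C₂]`,
as a function of `(β₀, M_u, ρ₁)`. -/
def asymFmax (τ γ : ℝ) (Pε Pβ : Measure ℝ) (ν : ℝ → ℝ) (cη Cη C₂ : ℝ)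
    (p : ℝ × ℝ × ℝ) : ℝ :=
  sSup ((fun q : ℝ × ℝ => asymObj τ γ Pε Pβ ν p.1 p.2.1 p.2.2 q.1 q.2) ''
    (Set.Icc cη Cη ×ˢ Set.Ioc (0 : ℝ) C₂))

/-- The constraint box `{|β₀| ≤ C_{β₀}} × {0 ≤ M_u ≤ C_u} × {0 ≤ ρ₁ ≤ C₁}` of the outer
minimization of the asymptotic program. -/
def asymBox (Cβ0 Cu C₁ : ℝ) : Set (ℝ × ℝ × ℝ) :=
  Set.Icc (-Cβ0) Cβ0 ×ˢ Set.Icc (0 : ℝ) Cu ×ˢ Set.Icc (0 : ℝ) C₁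

/-- Parts (v) and (vi) of the regularizer assumption, stated for the limiting scalar penalty `ν`:
there exist a.e. first and second derivatives `D1, D2` of `x ↦ e_{ν*}(x; ρ)` satisfying the
differentiation-under-the-integral / Stein identities, and the expected second derivative is
bounded away from zero on compacts. -/
def ConjDerivAssumption (γ : ℝ) (Pβ : Measure ℝ) (ν : ℝ → ℝ) : Prop :=
  ∃ D1 D2 : ℝ → ℝ → ℝ,
    (∀ ρ > (0 : ℝ),
      (∀ᵐ x ∂(volume : Measure ℝ), HasDerivAt (fun t => moreauConj ν t ρ) (D1 x ρ) x) ∧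
      (∀ᵐ x ∂(volume : Measure ℝ), HasDerivAt (fun t => D1 t ρ) (D2 x ρ) x) ∧
      (∀ c : ℝ,
        HasDerivAt (fun c' => ∫ z, moreauConj ν (c' * z.1 + ρ * γ * z.2) ρ
            ∂((gaussianReal 0 1).prod Pβ))
          (∫ z, z.1 * D1 (c * z.1 + ρ * γ * z.2) ρ ∂((gaussianReal 0 1).prod Pβ)) c ∧
        (∫ z, z.1 * D1 (c * z.1 + ρ * γ * z.2) ρ ∂((gaussianReal 0 1).prod Pβ))
          = c * ∫ z, D2 (c * z.1 + ρ * γ * z.2) ρ ∂((gaussianReal 0 1).prod Pβ))) ∧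
    (∀ A : Set ℝ, IsCompact A → A ⊆ Set.Ioi 0 → ∀ Cρ > (0 : ℝ), ∃ m > (0 : ℝ),
      ∀ c ∈ A, ∀ ρ ∈ Set.Ioc (0 : ℝ) Cρ,
        m ≤ ∫ z, D2 (c * z.1 + ρ * γ * z.2) ρ ∂((gaussianReal 0 1).prod Pβ))

/-! ### Helper lemmas -/

lemma mp_ge {τ : ℝ} (s x ρ : ℝ) (hs : s ∈ Set.Icc (τ - 1) τ) (hρ : 0 ≤ ρ) :
    s * x - ρ * s ^ 2 / 2 ≤ moreau (pinball τ) x ρ := by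
  have hl : ∀ v, s * v ≤ pinball τ v := by
    intro v
    unfold pinball
    obtain ⟨h1, h2⟩ := hs
    rcases le_total v 0 with h | h
    · rw [min_eq_left h]; nlinarith
    · rw [min_eq_right h]; nlinarith
  unfold moreau
  split_ifs with h0
  · subst h0; have := hl x; linarith
  · have hp : 0 < ρ := lt_of_le_of_ne hρ (Ne.symm h0)
    refine le_ciInf fun v => ?_
    have h1 := hl v
    have h2 : (x - v) ^ 2 / (2 * ρ) - (s * (x - v) - ρ * s ^ 2 / 2)
        = (x - v - ρ * s) ^ 2 / (2 * ρ) := by field_simp; ring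
    have h3 : 0 ≤ (x - v - ρ * s) ^ 2 / (2 * ρ) := by positivity
    nlinarith

lemma mp_le_of {τ : ℝ} (hτ : τ ∈ Set.Ioo (0 : ℝ) 1) (x ρ v : ℝ) (hρ : 0 < ρ) :
    moreau (pinball τ) x ρ ≤ (x - v) ^ 2 / (2 * ρ) + pinball τ v := by
  unfold moreau
  rw [if_neg hρ.ne']
  refine ciInf_le (f := fun v => (x - v) ^ 2 / (2 * ρ) + pinball τ v) ⟨0, ?_⟩ v
  rintro _ ⟨w, rfl⟩
  have : 0 ≤ pinball τ w := by
    unfold pinball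
    rcases le_total w 0 with h | h
    · rw [min_eq_left h]; nlinarith [hτ.2]
    · rw [min_eq_right h]; nlinarith [hτ.1]
  positivity

lemma mp_exists {τ : ℝ} (hτ : τ ∈ Set.Ioo (0 : ℝ) 1) (x ρ : ℝ) (hρ : 0 ≤ ρ) :
    ∃ s ∈ Set.Icc (τ - 1) τ, moreau (pinball τ) x ρ = s * x - ρ * s ^ 2 / 2 := by
  suffices h : ∃ s ∈ Set.Icc (τ - 1) τ, moreau (pinball τ) x ρ ≤ s * x - ρ * s ^ 2 / 2 by
    obtain ⟨s, hs, h⟩ := h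
    exact ⟨s, hs, le_antisymm h (mp_ge s x ρ hs hρ)⟩
  rcases hρ.eq_or_lt with h0 | hp
  · subst h0
    unfold moreau pinball
    rw [if_pos rfl]
    rcases le_total x 0 with h | h
    · exact ⟨τ - 1, ⟨le_rfl, by linarith⟩, by rw [min_eq_left h]; linarith⟩
    · exact ⟨τ, ⟨by linarith, le_rfl⟩, by rw [min_eq_right h]; linarith⟩
  · rcases le_total (ρ * τ) x with h | h
    · refine ⟨τ, ⟨by linarith, le_rfl⟩, (mp_le_of hτ x ρ (x - ρ * τ) hp).trans (le_of_eq ?_)⟩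
      unfold pinball
      rw [min_eq_right (by linarith)]
      field_simp; ring
    · rcases le_total x (ρ * (τ - 1)) with h' | h'
      · refine ⟨τ - 1, ⟨le_rfl, by linarith⟩,
          (mp_le_of hτ x ρ (x - ρ * (τ - 1)) hp).trans (le_of_eq ?_)⟩
        unfold pinball
        rw [min_eq_left (by linarith)]
        field_simp; ring
      · refine ⟨x / ρ, ⟨?_, ?_⟩, (mp_le_of hτ x ρ 0 hp).trans (le_of_eq ?_)⟩
        · rw [le_div_iff₀ hp]; linarith
        · rw [div_le_iff₀ hp]; linarith
        · unfold pinball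
          simp only [min_self]
          field_simp; ring

lemma mp_sub_le {τ : ℝ} (hτ : τ ∈ Set.Ioo (0 : ℝ) 1) (x ρ x' ρ' : ℝ) (hρ : 0 ≤ ρ)
    (hρ' : 0 ≤ ρ') :
    moreau (pinball τ) x ρ - moreau (pinball τ) x' ρ' ≤ |x - x'| + |ρ - ρ'| := by
  obtain ⟨s, hs, h⟩ := mp_exists hτ x ρ hρ
  have h2 := mp_ge s x' ρ' hs hρ'
  have hs1 : |s| ≤ 1 := abs_le.2 ⟨by linarith [hs.1, hτ.1], by linarith [hs.2, hτ.2]⟩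
  have hs2 : s ^ 2 ≤ 1 := (sq_le_one_iff_abs_le_one s).2 hs1
  have h3 : s * (x - x') ≤ |x - x'| := by
    calc s * (x - x') ≤ |s * (x - x')| := le_abs_self _
      _ = |s| * |x - x'| := abs_mul _ _
      _ ≤ 1 * |x - x'| := by gcongr
      _ = _ := one_mul _
  have h4 : s ^ 2 / 2 * (ρ' - ρ) ≤ |ρ - ρ'| := by
    have : ρ' - ρ ≤ |ρ - ρ'| := by rw [abs_sub_comm]; exact le_abs_self _
    nlinarith [abs_nonneg (ρ - ρ'), sq_nonneg s]
  nlinarith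

lemma mp_nonneg {τ : ℝ} (hτ : τ ∈ Set.Ioo (0 : ℝ) 1) (x ρ : ℝ) (hρ : 0 ≤ ρ) :
    0 ≤ moreau (pinball τ) x ρ := by
  have := mp_ge (τ := τ) 0 x ρ ⟨by linarith [hτ.2], hτ.1.le⟩ hρ
  simpa using this

lemma mp_zero {τ : ℝ} (hτ : τ ∈ Set.Ioo (0 : ℝ) 1) (ρ : ℝ) (hρ : 0 ≤ ρ) :
    moreau (pinball τ) 0 ρ = 0 := by
  obtain ⟨s, hs, h⟩ := mp_exists hτ 0 ρ hρ
  have := mp_nonneg hτ 0 ρ hρ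
  nlinarith [mul_nonneg hρ (sq_nonneg s)]

lemma mp_continuous {τ : ℝ} (hτ : τ ∈ Set.Ioo (0 : ℝ) 1) (ρ : ℝ) (hρ : 0 ≤ ρ) :
    Continuous fun x => moreau (pinball τ) x ρ := by
  refine (LipschitzWith.of_dist_le_mul (K := 1) fun x y => ?_).continuous
  rw [Real.dist_eq, Real.dist_eq, abs_le]
  have h1 := mp_sub_le hτ x ρ y ρ hρ hρ
  have h2 := mp_sub_le hτ y ρ x ρ hρ hρ
  rw [abs_sub_comm y x] at h2
  simp only [sub_self, abs_zero, add_zero, NNReal.coe_one, one_mul] at h1 h2 ⊢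
  constructor <;> linarith

lemma mp_convex {τ : ℝ} (hτ : τ ∈ Set.Ioo (0 : ℝ) 1) (x ρ x' ρ' a b : ℝ) (hρ : 0 ≤ ρ)
    (hρ' : 0 ≤ ρ') (ha : 0 ≤ a) (hb : 0 ≤ b) :
    moreau (pinball τ) (a * x + b * x') (a * ρ + b * ρ') ≤
      a * moreau (pinball τ) x ρ + b * moreau (pinball τ) x' ρ' := by
  obtain ⟨s, hs, h⟩ := mp_exists hτ (a * x + b * x') (a * ρ + b * ρ') (by positivity)
  have h1 := mul_le_mul_of_nonneg_left (mp_ge s x ρ hs hρ) ha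
  have h2 := mul_le_mul_of_nonneg_left (mp_ge s x' ρ' hs hρ') hb
  rw [h]
  linarith

lemma mp_pos {τ : ℝ} (hτ : τ ∈ Set.Ioo (0 : ℝ) 1) (x ρ : ℝ) (hρ : 0 ≤ ρ) (hx : x ≠ 0) :
    0 < moreau (pinball τ) x ρ := by
  rcases lt_or_gt_of_ne hx with h | h
  · set s := max (τ - 1) (x / (ρ + 1)) with hsdef
    have hx0 : x / (ρ + 1) < 0 := div_neg_of_neg_of_pos h (by linarith)
    have hs0 : s < 0 := max_lt (by linarith [hτ.2]) hx0
    have hsx : x / (ρ + 1) ≤ s := le_max_right _ _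
    rw [div_le_iff₀ (by linarith)] at hsx
    have := mp_ge (τ := τ) s x ρ ⟨le_max_left _ _, by linarith [hτ.1]⟩ hρ
    nlinarith [mul_pos_of_neg_of_neg hs0 h, mul_nonneg_of_nonpos_of_nonpos hs0.le
      (show x - s * (ρ + 1) ≤ 0 by linarith), mul_pos_of_neg_of_neg hs0 hs0]
  · set s := min τ (x / (ρ + 1)) with hsdef
    have hx0 : 0 < x / (ρ + 1) := div_pos h (by linarith)
    have hs0 : 0 < s := lt_min hτ.1 hx0
    have hsx : s ≤ x / (ρ + 1) := min_le_right _ _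
    rw [le_div_iff₀ (by linarith)] at hsx
    have := mp_ge (τ := τ) s x ρ ⟨by linarith [hτ.2], min_le_left _ _⟩ hρ
    nlinarith [mul_pos hs0 h, mul_nonneg hs0.le
      (show 0 ≤ x - s * (ρ + 1) by linarith), mul_pos hs0 hs0]

/-- strictness in `ρ` : with `x = (τ/2) (a ρ + b ρ')`, `ρ < ρ'`. -/
lemma mp_strict_rho {τ : ℝ} (hτ : τ ∈ Set.Ioo (0 : ℝ) 1) (ρ ρ' a b : ℝ) (hρ : 0 < ρ)
    (hρ' : 0 < ρ') (hne : ρ ≠ ρ') (ha : 0 < a) (hb : 0 < b) (hab : a + b = 1) :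
    moreau (pinball τ) (τ / 2 * (a * ρ + b * ρ')) (a * ρ + b * ρ') <
      a * moreau (pinball τ) (τ / 2 * (a * ρ + b * ρ')) ρ
        + b * moreau (pinball τ) (τ / 2 * (a * ρ + b * ρ')) ρ' := by
  have hτ0 := hτ.1
  have hτ1 := hτ.2
  set R := a * ρ + b * ρ' with hR
  have hRp : 0 < R := by positivity
  set x := τ / 2 * R with hx
  have hmid : moreau (pinball τ) x R ≤ τ / 2 * x - R * (τ / 2) ^ 2 / 2 := by
    refine (mp_le_of hτ x R 0 hRp).trans (le_of_eq ?_)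
    unfold pinball
    simp only [min_self]
    rw [hx]; field_simp; ring
  have h1 := mp_ge (τ := τ) (τ / 2) x ρ' ⟨by linarith, by linarith⟩ hρ'.le
  have hRρ : R - ρ ≠ 0 := by
    intro h
    have : b * (ρ' - ρ) = 0 := by
      have : R - ρ = b * (ρ' - ρ) := by rw [hR, show a = 1 - b by linarith]; ring
      linarith
    rcases mul_eq_zero.1 this with h | h
    · linarith
    · exact hne (by linarith)
  have h2 : τ / 2 * x - ρ * (τ / 2) ^ 2 / 2 < moreau (pinball τ) x ρ := by
    obtain ⟨δ, hδ0, hδ1, hδ2⟩ : ∃ δ : ℝ, |δ| ≤ τ / 2 ∧ ρ * δ ^ 2 / 2 < δ * (τ / 2 * (R - ρ)) ∧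
        τ - 1 ≤ τ / 2 + δ := by
      rcases lt_or_gt_of_ne hRρ with h | h
      · have hc : 0 < τ / 2 * (ρ - R) := mul_pos (by linarith) (by linarith)
        set c := τ / 2 * (ρ - R)
        have hm : 0 < min (min (τ / 2) (1 - τ)) (c / ρ) :=
          lt_min (lt_min (by linarith) (by linarith)) (by positivity)
        set m := min (min (τ / 2) (1 - τ)) (c / ρ)
        have e1 : m ≤ τ / 2 := (min_le_left _ _).trans (min_le_left _ _)
        have e2 : m ≤ 1 - τ := (min_le_left _ _).trans (min_le_right _ _)
        have e3 : m ≤ c / ρ := min_le_right _ _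
        rw [le_div_iff₀ hρ] at e3
        refine ⟨-m, ?_, ?_, by linarith⟩
        · rw [abs_neg, abs_of_pos hm]; exact e1
        · have : -m * (τ / 2 * (R - ρ)) = m * c := by simp only [c]; ring
          rw [this]
          nlinarith [mul_pos hm hc, mul_le_mul_of_nonneg_left e3 hm.le]
      · have hc : 0 < τ / 2 * (R - ρ) := mul_pos (by linarith) (by linarith)
        set c := τ / 2 * (R - ρ)
        have hm : 0 < min (τ / 2) (c / ρ) := lt_min (by linarith) (by positivity)
        set m := min (τ / 2) (c / ρ)
        have e1 : m ≤ τ / 2 := min_le_left _ _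
        have e3 : m ≤ c / ρ := min_le_right _ _
        rw [le_div_iff₀ hρ] at e3
        refine ⟨m, ?_, ?_, by linarith⟩
        · rw [abs_of_pos hm]; exact e1
        · nlinarith [mul_pos hm hc, mul_le_mul_of_nonneg_left e3 hm.le]
    have h3 := mp_ge (τ := τ) (τ / 2 + δ) x ρ ⟨hδ2, by linarith [(abs_le.1 hδ0).2]⟩ hρ.le
    refine lt_of_lt_of_le ?_ h3
    rw [hx]
    nlinarith
  have h4 := mul_lt_mul_of_pos_left h2 ha
  have h5 := mul_le_mul_of_nonneg_left h1 hb.le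
  have h6 : a * (τ / 2 * x) + b * (τ / 2 * x) = τ / 2 * x := by rw [← add_mul, hab, one_mul]
  rw [hR] at hmid
  rw [hR]
  nlinarith

/-! ### the regularizer term -/

lemma convex_minorant (ν : ℝ → ℝ) (hν : ConvexOn ℝ Set.univ ν) :
    ∃ k c : ℝ, ∀ v, k * v + c ≤ ν v := by
  have hc : Continuous ν :=
    continuousOn_univ.1 (ConvexOn.continuousOn isOpen_univ hν)
  obtain ⟨k, c, h⟩ := ConvexOn.exists_affine_le_real isClosed_univ
    (lowerSemicontinuousOn_univ_iff.2 hc.lowerSemicontinuous) hν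
  exact ⟨k, c, fun v => h v (Set.mem_univ v)⟩

lemma mnu_le (ν : ℝ → ℝ) (hν : ConvexOn ℝ Set.univ ν) (x r v : ℝ) (hr : 0 < r) :
    moreau ν x r ≤ (x - v) ^ 2 / (2 * r) + ν v := by
  obtain ⟨k, c, h⟩ := convex_minorant ν hν
  unfold moreau
  rw [if_neg hr.ne']
  refine ciInf_le (f := fun v => (x - v) ^ 2 / (2 * r) + ν v) ⟨k * x - r * k ^ 2 / 2 + c, ?_⟩ v
  rintro _ ⟨w, rfl⟩
  have h1 := h w
  have h2 : (x - w) ^ 2 / (2 * r) - (k * (x - w) - r * k ^ 2 / 2)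
      = (x - w - r * k) ^ 2 / (2 * r) := by field_simp; ring
  have h3 : 0 ≤ (x - w - r * k) ^ 2 / (2 * r) := by positivity
  simp only
  nlinarith

lemma H_le (ν : ℝ → ℝ) (hν : ConvexOn ℝ Set.univ ν) (k y r v w : ℝ) (hr : 0 ≤ r) (hw : 0 ≤ w)
    (hc : (y - v) ^ 2 ≤ 2 * r * w) :
    moreau ν (k * r + y) r - k ^ 2 * r / 2 ≤ k * (y - v) + w + ν v := by
  rcases hr.eq_or_lt with h0 | hp
  · subst h0
    have : y = v := by
      have : (y - v) ^ 2 = 0 := le_antisymm (by simpa using hc) (sq_nonneg _)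
      have := pow_eq_zero_iff (two_ne_zero) |>.1 this
      linarith
    subst this
    simp [moreau, hw]
  · have h1 := mnu_le ν hν (k * r + y) r v hp
    have h2 : (k * r + y - v) ^ 2 / (2 * r) = k ^ 2 * r / 2 + k * (y - v) + (y - v) ^ 2 / (2 * r) := by
      field_simp; ring
    have h3 : (y - v) ^ 2 / (2 * r) ≤ w := by
      rw [div_le_iff₀ (by positivity)]; linarith
    linarith

lemma H_exists (ν : ℝ → ℝ) (k y r δ : ℝ) (hr : 0 ≤ r) (hδ : 0 < δ) :
    ∃ v w : ℝ, 0 ≤ w ∧ (y - v) ^ 2 ≤ 2 * r * w ∧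
      k * (y - v) + w + ν v ≤ moreau ν (k * r + y) r - k ^ 2 * r / 2 + δ := by
  rcases hr.eq_or_lt with h0 | hp
  · subst h0
    exact ⟨y, 0, le_rfl, by simp, by simp [moreau, hδ.le]⟩
  · have : moreau ν (k * r + y) r < moreau ν (k * r + y) r + δ := by linarith
    conv_lhs at this => unfold moreau
    rw [if_neg hp.ne'] at this
    obtain ⟨v, hv⟩ := exists_lt_of_ciInf_lt this
    refine ⟨v, (y - v) ^ 2 / (2 * r), by positivity, ?_, ?_⟩
    · apply le_of_eq; field_simp
    · have h2 : (k * r + y - v) ^ 2 / (2 * r)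
          = k ^ 2 * r / 2 + k * (y - v) + (y - v) ^ 2 / (2 * r) := by
        field_simp; ring
      linarith

lemma H_convex (ν : ℝ → ℝ) (hν : ConvexOn ℝ Set.univ ν) (k y r r' a b : ℝ) (hr : 0 ≤ r)
    (hr' : 0 ≤ r') (ha : 0 ≤ a) (hb : 0 ≤ b) (hab : a + b = 1) :
    moreau ν (k * (a * r + b * r') + y) (a * r + b * r') - k ^ 2 * (a * r + b * r') / 2 ≤
      a * (moreau ν (k * r + y) r - k ^ 2 * r / 2)
        + b * (moreau ν (k * r' + y) r' - k ^ 2 * r' / 2) := by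
  refine le_of_forall_pos_le_add fun δ hδ => ?_
  obtain ⟨v, w, hw, hc, h⟩ := H_exists ν k y r δ hr hδ
  obtain ⟨v', w', hw', hc', h'⟩ := H_exists ν k y r' δ hr' hδ
  have key : (y - (a * v + b * v')) ^ 2 ≤ 2 * (a * r + b * r') * (a * w + b * w') := by
    have e : y - (a * v + b * v') = a * (y - v) + b * (y - v') := by
      linear_combination (-y) * hab
    rw [e]
    set s := y - v
    set s' := y - v'
    have hss : s * s' ≤ r * w' + r' * w := by
      refine abs_le_of_sq_le_sq' ?_ (by positivity) |>.2
      have : s ^ 2 * s' ^ 2 ≤ (2 * r * w) * (2 * r' * w') :=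
        mul_le_mul hc hc' (sq_nonneg _) (by positivity)
      nlinarith [sq_nonneg (r * w' - r' * w)]
    have q1 := mul_le_mul_of_nonneg_left hss (mul_nonneg ha hb)
    have q2 := mul_le_mul_of_nonneg_left hc (mul_nonneg ha ha)
    have q3 := mul_le_mul_of_nonneg_left hc' (mul_nonneg hb hb)
    nlinarith
  have h1 := H_le ν hν k y (a * r + b * r') (a * v + b * v') (a * w + b * w') (by positivity)
    (by positivity) key
  have h2 : ν (a * v + b * v') ≤ a * ν v + b * ν v' := by
    simpa using hν.2 (Set.mem_univ v) (Set.mem_univ v') ha hb hab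
  have h3 := mul_le_mul_of_nonneg_left h ha
  have h4 := mul_le_mul_of_nonneg_left h' hb
  have e1 : k * (y - (a * v + b * v')) = a * (k * (y - v)) + b * (k * (y - v')) := by
    linear_combination (-(k * y)) * hab
  have e2 : a * δ + b * δ = δ := by rw [← add_mul, hab, one_mul]
  nlinarith

lemma gauss_sq_integrable (Pβ : Measure ℝ) [IsProbabilityMeasure Pβ] :
    Integrable (fun z : ℝ × ℝ => z.1 ^ 2) ((gaussianReal 0 1).prod Pβ) := by
  have : Integrable (fun x : ℝ => x ^ 2) (gaussianReal 0 1) :=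
    (memLp_id_gaussianReal 2).integrable_sq
  exact this.comp_fst Pβ

lemma gauss_sq_integral (Pβ : Measure ℝ) [IsProbabilityMeasure Pβ] :
    ∫ z : ℝ × ℝ, z.1 ^ 2 ∂((gaussianReal 0 1).prod Pβ) = 1 := by
  rw [integral_fun_fst (μ := gaussianReal 0 1) (ν := Pβ) (fun x : ℝ => x ^ 2)]
  have h := variance_fun_id_gaussianReal (μ := 0) (v := 1)
  rw [variance_eq_integral (by fun_prop)] at h
  simpa using h

def Gpart (γ : ℝ) (Pβ : Measure ℝ) (ν : ℝ → ℝ) (Mu Mη ρ₂ : ℝ) : ℝ :=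
  - (Mη ^ 2 * Mu * γ / (2 * ρ₂))
    + γ * (∫ z, moreau ν (Mη * Mu / ρ₂ * z.1 + γ * z.2) (Mu / ρ₂)
        ∂((gaussianReal 0 1).prod Pβ))

lemma H_integrable (γ : ℝ) (Pβ : Measure ℝ) [IsProbabilityMeasure Pβ] (ν : ℝ → ℝ)
    (hνfin : ∀ (c ρ : ℝ), 0 ≤ ρ →
      Integrable (fun z : ℝ × ℝ => moreau ν (c * z.1 + γ * z.2) ρ)
        ((gaussianReal 0 1).prod Pβ)) (η r : ℝ) (hr : 0 ≤ r) :
    Integrable (fun z : ℝ × ℝ => moreau ν ((η * z.1) * r + γ * z.2) r - (η * z.1) ^ 2 * r / 2)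
      ((gaussianReal 0 1).prod Pβ) := by
  have h := (hνfin (η * r) r hr).sub ((gauss_sq_integrable Pβ).const_mul (η ^ 2 * r / 2))
  refine h.congr (Filter.Eventually.of_forall fun z => ?_)
  simp only [Pi.sub_apply]
  rw [show η * r * z.1 = η * z.1 * r by ring]
  ring

lemma Gpart_eq (γ : ℝ) (Pβ : Measure ℝ) [IsProbabilityMeasure Pβ] (ν : ℝ → ℝ)
    (hνfin : ∀ (c ρ : ℝ), 0 ≤ ρ →
      Integrable (fun z : ℝ × ℝ => moreau ν (c * z.1 + γ * z.2) ρ)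
        ((gaussianReal 0 1).prod Pβ)) (Mu η ρ₂ : ℝ) (hu : 0 ≤ Mu) (h2 : 0 < ρ₂) :
    Gpart γ Pβ ν Mu η ρ₂ = γ * ∫ z : ℝ × ℝ, (moreau ν ((η * z.1) * (Mu / ρ₂) + γ * z.2) (Mu / ρ₂)
      - (η * z.1) ^ 2 * (Mu / ρ₂) / 2) ∂((gaussianReal 0 1).prod Pβ) := by
  have hr : 0 ≤ Mu / ρ₂ := by positivity
  have h := integral_sub (hνfin (η * (Mu / ρ₂)) (Mu / ρ₂) hr)
    ((gauss_sq_integrable Pβ).const_mul (η ^ 2 * (Mu / ρ₂) / 2))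
  rw [integral_const_mul, gauss_sq_integral] at h
  have e : (∫ z : ℝ × ℝ, (moreau ν ((η * z.1) * (Mu / ρ₂) + γ * z.2) (Mu / ρ₂)
      - (η * z.1) ^ 2 * (Mu / ρ₂) / 2) ∂((gaussianReal 0 1).prod Pβ))
      = ∫ z : ℝ × ℝ, (moreau ν (η * (Mu / ρ₂) * z.1 + γ * z.2) (Mu / ρ₂)
      - η ^ 2 * (Mu / ρ₂) / 2 * z.1 ^ 2) ∂((gaussianReal 0 1).prod Pβ) := by
    refine integral_congr_ae (Filter.Eventually.of_forall fun z => ?_)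
    simp only
    rw [show η * (Mu / ρ₂) * z.1 = η * z.1 * (Mu / ρ₂) by ring]
    ring
  rw [e, h]
  unfold Gpart
  rw [show η * Mu / ρ₂ = η * (Mu / ρ₂) by ring]
  field_simp
  ring

lemma Gpart_convex (γ : ℝ) (hγ : 0 ≤ γ) (Pβ : Measure ℝ) [IsProbabilityMeasure Pβ] (ν : ℝ → ℝ)
    (hν : ConvexOn ℝ Set.univ ν)
    (hνfin : ∀ (c ρ : ℝ), 0 ≤ ρ →
      Integrable (fun z : ℝ × ℝ => moreau ν (c * z.1 + γ * z.2) ρ)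
        ((gaussianReal 0 1).prod Pβ)) (u u' η ρ₂ a b : ℝ) (hu : 0 ≤ u) (hu' : 0 ≤ u')
    (h2 : 0 < ρ₂) (ha : 0 ≤ a) (hb : 0 ≤ b) (hab : a + b = 1) :
    Gpart γ Pβ ν (a * u + b * u') η ρ₂ ≤ a * Gpart γ Pβ ν u η ρ₂ + b * Gpart γ Pβ ν u' η ρ₂ := by
  rw [Gpart_eq γ Pβ ν hνfin _ η ρ₂ (by positivity) h2, Gpart_eq γ Pβ ν hνfin u η ρ₂ hu h2,
    Gpart_eq γ Pβ ν hνfin u' η ρ₂ hu' h2]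
  rw [mul_left_comm a, mul_left_comm b, ← mul_add, ← integral_const_mul a, ← integral_const_mul b,
    ← integral_add ((H_integrable γ Pβ ν hνfin η (u / ρ₂) (by positivity)).const_mul a)
      ((H_integrable γ Pβ ν hνfin η (u' / ρ₂) (by positivity)).const_mul b)]
  refine mul_le_mul_of_nonneg_left ?_ hγ
  refine integral_mono (H_integrable γ Pβ ν hνfin η _ (by positivity))
    (((H_integrable γ Pβ ν hνfin η (u / ρ₂) (by positivity)).const_mul a).add
      ((H_integrable γ Pβ ν hνfin η (u' / ρ₂) (by positivity)).const_mul b)) fun z => ?_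
  simp only [Pi.add_apply]
  rw [show (a * u + b * u') / ρ₂ = a * (u / ρ₂) + b * (u' / ρ₂) by ring]
  exact H_convex ν hν (η * z.1) (γ * z.2) _ _ a b (by positivity) (by positivity) ha hb hab

lemma Gpart_bdd (γ : ℝ) (hγ : 0 ≤ γ) (Pβ : Measure ℝ) [IsProbabilityMeasure Pβ] (ν : ℝ → ℝ)
    (hν : ConvexOn ℝ Set.univ ν)
    (hνfin : ∀ (c ρ : ℝ), 0 ≤ ρ →
      Integrable (fun z : ℝ × ℝ => moreau ν (c * z.1 + γ * z.2) ρ)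
        ((gaussianReal 0 1).prod Pβ)) (u η ρ₂ : ℝ) (hu : 0 ≤ u) (h2 : 0 < ρ₂) :
    Gpart γ Pβ ν u η ρ₂ ≤ γ * ∫ z : ℝ × ℝ, ν (γ * z.2) ∂((gaussianReal 0 1).prod Pβ) := by
  rw [Gpart_eq γ Pβ ν hνfin u η ρ₂ hu h2]
  refine mul_le_mul_of_nonneg_left ?_ hγ
  refine integral_mono (H_integrable γ Pβ ν hνfin η _ (by positivity)) ?_ fun z => ?_
  · have := hνfin 0 0 le_rfl
    simpa [moreau] using this
  · have := H_le ν hν (η * z.1) (γ * z.2) (u / ρ₂) (γ * z.2) 0 (by positivity) le_rfl (by simp)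
    simpa using this

/-! ### the loss term -/

def Fpart (τ : ℝ) (Pε : Measure ℝ) (β u ρ : ℝ) : ℝ :=
  ∫ z, moreau (pinball τ) (u * z.1 + z.2 - β) ρ ∂((gaussianReal 0 1).prod Pε)

lemma Fint {τ : ℝ} (hτ : τ ∈ Set.Ioo (0 : ℝ) 1) (Pε : Measure ℝ) [IsProbabilityMeasure Pε]
    (hPε : NoiseAssumption Pε) (β u ρ : ℝ) (hρ : 0 ≤ ρ) :
    Integrable (fun z : ℝ × ℝ => moreau (pinball τ) (u * z.1 + z.2 - β) ρ)
      ((gaussianReal 0 1).prod Pε) := by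
  have i1 : Integrable (fun z : ℝ × ℝ => z.1) ((gaussianReal 0 1).prod Pε) := by
    have : Integrable (fun x : ℝ => x) (gaussianReal 0 1) :=
      (memLp_id_gaussianReal 1).integrable le_rfl
    exact this.comp_fst Pε
  have i2 : Integrable (fun z : ℝ × ℝ => z.2) ((gaussianReal 0 1).prod Pε) := by
    have : Integrable (fun x : ℝ => x) Pε := by
      refine Integrable.mono' (hPε.second_moment.add (integrable_const 1)) (by fun_prop)
        (Filter.Eventually.of_forall fun x => ?_)
      simp only [Real.norm_eq_abs, Pi.add_apply]
      rw [abs_le]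
      constructor <;> nlinarith [sq_nonneg (x - 1), sq_nonneg (x + 1)]
    exact this.comp_snd (gaussianReal 0 1)
  have i3 : Integrable (fun z : ℝ × ℝ => |u * z.1 + z.2 - β|) ((gaussianReal 0 1).prod Pε) :=
    (((i1.const_mul u).add i2).sub (integrable_const β)).abs
  refine Integrable.mono' i3 ?_ (Filter.Eventually.of_forall fun z => ?_)
  · exact ((mp_continuous hτ ρ hρ).comp (by fun_prop :
      Continuous fun z : ℝ × ℝ => u * z.1 + z.2 - β)).aestronglyMeasurable
  · rw [Real.norm_eq_abs, abs_of_nonneg (mp_nonneg hτ _ _ hρ)]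
    have := mp_sub_le hτ (u * z.1 + z.2 - β) ρ 0 ρ hρ hρ
    rw [mp_zero hτ ρ hρ] at this
    simpa using this

lemma Fpart_cont {τ : ℝ} (hτ : τ ∈ Set.Ioo (0 : ℝ) 1) (Pε : Measure ℝ) [IsProbabilityMeasure Pε]
    (hPε : NoiseAssumption Pε) (β u : ℝ) :
    ContinuousOn (fun ρ => Fpart τ Pε β u ρ) (Set.Ici 0) := by
  have key : ∀ ρ ρ' : ℝ, 0 ≤ ρ → 0 ≤ ρ' →
      Fpart τ Pε β u ρ - Fpart τ Pε β u ρ' ≤ |ρ - ρ'| := by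
    intro ρ ρ' h h'
    unfold Fpart
    rw [← integral_sub (Fint hτ Pε hPε β u ρ h) (Fint hτ Pε hPε β u ρ' h')]
    calc _ ≤ ∫ z : ℝ × ℝ, |ρ - ρ'| ∂((gaussianReal 0 1).prod Pε) := by
          refine integral_mono ((Fint hτ Pε hPε β u ρ h).sub (Fint hτ Pε hPε β u ρ' h'))
            (integrable_const _) fun z => ?_
          have := mp_sub_le hτ (u * z.1 + z.2 - β) ρ (u * z.1 + z.2 - β) ρ' h h'
          simpa using this
      _ = |ρ - ρ'| := by simp
  refine (LipschitzOnWith.of_dist_le_mul (K := 1) fun x hx y hy => ?_).continuousOn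
  rw [Real.dist_eq, Real.dist_eq, abs_le]
  have h1 := key x y hx hy
  have h2 := key y x hy hx
  rw [abs_sub_comm y x] at h2
  simp only [NNReal.coe_one, one_mul]
  constructor <;> linarith

lemma noise_openPos (Pε : Measure ℝ) (hPε : NoiseAssumption Pε) : Pε.IsOpenPosMeasure := by
  obtain ⟨f, hf, hpos, -, rfl⟩ := hPε.density
  refine Measure.AbsolutelyContinuous.isOpenPosMeasure (μ := volume) ?_
  refine withDensity_absolutelyContinuous' ?_ ?_
  · exact (hf.measurable.ennreal_ofReal).aemeasurable
  · exact Filter.Eventually.of_forall fun x => by simpa using hpos x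

lemma Fpart_strict {τ : ℝ} (hτ : τ ∈ Set.Ioo (0 : ℝ) 1) (Pε : Measure ℝ) [IsProbabilityMeasure Pε]
    (hPε : NoiseAssumption Pε) (β u ρ β' u' ρ' a b : ℝ) (hρ : 0 ≤ ρ) (hρ' : 0 ≤ ρ')
    (ha : 0 < a) (hb : 0 < b) (hab : a + b = 1)
    (hne : (β ≠ β' ∨ u ≠ u') ∨ (0 < ρ ∧ 0 < ρ' ∧ ρ ≠ ρ')) :
    Fpart τ Pε (a * β + b * β') (a * u + b * u') (a * ρ + b * ρ') <
      a * Fpart τ Pε β u ρ + b * Fpart τ Pε β' u' ρ' := by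
  have hR : 0 ≤ a * ρ + b * ρ' := by positivity
  set D : ℝ × ℝ → ℝ := fun z =>
    (a * moreau (pinball τ) (u * z.1 + z.2 - β) ρ + b * moreau (pinball τ) (u' * z.1 + z.2 - β') ρ')
      - moreau (pinball τ) ((a * u + b * u') * z.1 + z.2 - (a * β + b * β')) (a * ρ + b * ρ')
    with hD
  have hmix : ∀ z : ℝ × ℝ, (a * u + b * u') * z.1 + z.2 - (a * β + b * β')
      = a * (u * z.1 + z.2 - β) + b * (u' * z.1 + z.2 - β') := by
    intro z
    linear_combination (-z.2) * hab
  have hD0 : ∀ z, 0 ≤ D z := by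
    intro z
    simp only [hD]
    rw [hmix]
    have := mp_convex hτ (u * z.1 + z.2 - β) ρ (u' * z.1 + z.2 - β') ρ' a b hρ hρ' ha.le hb.le
    linarith
  have i1 := (Fint hτ Pε hPε β u ρ hρ).const_mul a
  have i2 := (Fint hτ Pε hPε β' u' ρ' hρ').const_mul b
  have i3 := Fint hτ Pε hPε (a * β + b * β') (a * u + b * u') (a * ρ + b * ρ') hR
  have hDi : Integrable D ((gaussianReal 0 1).prod Pε) := (i1.add i2).sub i3
  have hDc : Continuous D := by
    have c1 := mp_continuous hτ ρ hρ
    have c2 := mp_continuous hτ ρ' hρ'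
    have c3 := mp_continuous hτ (a * ρ + b * ρ') hR
    have d1 := c1.comp (by fun_prop : Continuous fun z : ℝ × ℝ => u * z.1 + z.2 - β)
    have d2 := c2.comp (by fun_prop : Continuous fun z : ℝ × ℝ => u' * z.1 + z.2 - β')
    have d3 := c3.comp (by fun_prop : Continuous fun z : ℝ × ℝ =>
      (a * u + b * u') * z.1 + z.2 - (a * β + b * β'))
    exact ((d1.const_mul a).add (d2.const_mul b)).sub d3
  have hex : ∃ z, 0 < D z := by
    by_cases hc : β ≠ β' ∨ u ≠ u'
    · obtain ⟨g, hg⟩ : ∃ g : ℝ, u * g - β ≠ u' * g - β' := by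
        by_contra! hcon
        have h0 := hcon 0
        have h1 := hcon 1
        rcases hc with h | h
        · exact h (by linarith)
        · exact h (by linarith)
      refine ⟨(g, - (a * (u * g - β) + b * (u' * g - β'))), ?_⟩
      simp only [hD]
      rw [hmix (g, - (a * (u * g - β) + b * (u' * g - β')))]
      simp only
      set e := - (a * (u * g - β) + b * (u' * g - β')) with he
      have hz : a * (u * g + e - β) + b * (u' * g + e - β') = 0 := by
        rw [he]
        linear_combination (-(a * (u * g - β) + b * (u' * g - β'))) * hab
      rw [hz, mp_zero hτ _ hR]
      have hx : u * g + e - β ≠ 0 := by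
        intro h
        rw [h] at hz
        have : u' * g + e - β' = 0 := by
          have : b * (u' * g + e - β') = 0 := by linarith
          exact (mul_eq_zero.1 this).resolve_left hb.ne'
        exact hg (by linarith)
      have p1 := mul_pos ha (mp_pos hτ _ ρ hρ hx)
      have p2 := mul_nonneg hb.le (mp_nonneg hτ (u' * g + e - β') ρ' hρ')
      linarith
    · have h3 := hne.resolve_left hc
      push Not at hc
      obtain ⟨rfl, rfl⟩ := hc
      obtain ⟨hp, hp', hnn⟩ := h3
      have hs := mp_strict_rho hτ ρ ρ' a b hp hp' hnn ha hb hab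
      refine ⟨(0, β + τ / 2 * (a * ρ + b * ρ')), ?_⟩
      simp only [hD]
      rw [hmix (0, β + τ / 2 * (a * ρ + b * ρ'))]
      simp only
      have e1 : u * 0 + (β + τ / 2 * (a * ρ + b * ρ')) - β = τ / 2 * (a * ρ + b * ρ') := by ring
      rw [e1, ← add_mul, hab, one_mul]
      linarith
  have hpos : 0 < ∫ z, D z ∂((gaussianReal 0 1).prod Pε) := by
    rw [integral_pos_iff_support_of_nonneg hD0 hDi]
    haveI := noise_openPos Pε hPε
    haveI : (gaussianReal 0 1).IsOpenPosMeasure :=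
      Measure.AbsolutelyContinuous.isOpenPosMeasure (μ := volume)
        (gaussianReal_absolutelyContinuous' 0 one_ne_zero)
    obtain ⟨z, hz⟩ := hex
    exact (hDc.isOpen_support).measure_pos _ ⟨z, hz.ne'⟩
  have hval : ∫ z, D z ∂((gaussianReal 0 1).prod Pε) =
      (a * Fpart τ Pε β u ρ + b * Fpart τ Pε β' u' ρ')
        - Fpart τ Pε (a * β + b * β') (a * u + b * u') (a * ρ + b * ρ') := by
    unfold Fpart
    rw [← integral_const_mul, ← integral_const_mul, ← integral_add i1 i2]
    exact integral_sub (i1.add i2) i3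
  linarith

lemma asymObj_eq (τ γ : ℝ) (Pε Pβ : Measure ℝ) (ν : ℝ → ℝ) (β₀ Mu ρ₁ Mη ρ₂ : ℝ) :
    asymObj τ γ Pε Pβ ν β₀ Mu ρ₁ Mη ρ₂ =
      Fpart τ Pε β₀ Mu (ρ₁ / Mη) + Gpart γ Pβ ν Mu Mη ρ₂ + Mη * ρ₁ / 2 - Mu * ρ₂ / 2 := by
  unfold asymObj Fpart Gpart
  ring

lemma asymFmax_key
    (τ γ : ℝ) (hτ : τ ∈ Set.Ioo (0 : ℝ) 1) (hγ : 0 ≤ γ)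
    (Pε Pβ : Measure ℝ) [IsProbabilityMeasure Pε] [IsProbabilityMeasure Pβ]
    (hPε : NoiseAssumption Pε)
    (ν : ℝ → ℝ) (hν : ConvexOn ℝ Set.univ ν)
    (hνfin : ∀ (c ρ : ℝ), 0 ≤ ρ →
      Integrable (fun z : ℝ × ℝ => moreau ν (c * z.1 + γ * z.2) ρ)
        ((gaussianReal 0 1).prod Pβ))
    (cη Cη C₂ : ℝ) (hcη : 0 < cη) (hCη : cη < Cη) (hC₂ : 0 < C₂)
    (β u ρ β' u' ρ' a b : ℝ) (hρ : 0 ≤ ρ) (hρ' : 0 ≤ ρ') (hu : 0 ≤ u) (hu' : 0 ≤ u')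
    (ha : 0 < a) (hb : 0 < b) (hab : a + b = 1)
    (hne : (β ≠ β' ∨ u ≠ u') ∨ (0 < ρ ∧ 0 < ρ' ∧ ρ ≠ ρ')) :
    asymFmax τ γ Pε Pβ ν cη Cη C₂ (a * β + b * β', a * u + b * u', a * ρ + b * ρ') <
      a * asymFmax τ γ Pε Pβ ν cη Cη C₂ (β, u, ρ)
        + b * asymFmax τ γ Pε Pβ ν cη Cη C₂ (β', u', ρ') := by
  have hdiv : ∀ r : ℝ, 0 ≤ r → ∀ β u : ℝ,
      ContinuousOn (fun η => Fpart τ Pε β u (r / η)) (Set.Icc cη Cη) := by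
    intro r hr β u
    refine (Fpart_cont hτ Pε hPε β u).comp (t := Set.Ici 0) (f := fun η => r / η) ?_ ?_
    · refine continuousOn_const.div continuousOn_id fun x hx => ?_
      have h : 0 < x := by linarith [hx.1]
      exact h.ne'
    · intro x hx
      have : 0 < x := by linarith [hx.1]
      simp only [Set.mem_Ici]
      positivity
  have hR : 0 ≤ a * ρ + b * ρ' := by positivity
  obtain ⟨δ, hδ, hgap⟩ : ∃ δ > 0, ∀ η ∈ Set.Icc cη Cη,
      Fpart τ Pε (a * β + b * β') (a * u + b * u') ((a * ρ + b * ρ') / η) + δ ≤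
      a * Fpart τ Pε β u (ρ / η) + b * Fpart τ Pε β' u' (ρ' / η) := by
    have hc : ContinuousOn (fun η => a * Fpart τ Pε β u (ρ / η) + b * Fpart τ Pε β' u' (ρ' / η)
        - Fpart τ Pε (a * β + b * β') (a * u + b * u') ((a * ρ + b * ρ') / η)) (Set.Icc cη Cη) :=
      (((hdiv ρ hρ β u).const_mul a).add ((hdiv ρ' hρ' β' u').const_mul b)).sub (hdiv _ hR _ _)
    obtain ⟨η₀, hη₀, hmin⟩ := isCompact_Icc.exists_isMinOn (Set.nonempty_Icc.2 hCη.le) hc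
    have hη0 : 0 < η₀ := by linarith [hη₀.1]
    refine ⟨a * Fpart τ Pε β u (ρ / η₀) + b * Fpart τ Pε β' u' (ρ' / η₀)
        - Fpart τ Pε (a * β + b * β') (a * u + b * u') ((a * ρ + b * ρ') / η₀), ?_,
        fun η hη => ?_⟩
    rotate_left
    · have := hmin hη
      simp only [Set.mem_setOf_eq] at this
      rw [← le_sub_iff_add_le']
      exact this
    · have := Fpart_strict hτ Pε hPε β u (ρ / η₀) β' u' (ρ' / η₀) a b (by positivity)
        (by positivity) ha hb hab (by
          rcases hne with h | ⟨h1, h2, h3⟩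
          · exact Or.inl h
          · refine Or.inr ⟨by positivity, by positivity, fun h => h3 ?_⟩
            field_simp at h
            exact h)
      rw [show a * (ρ / η₀) + b * (ρ' / η₀) = (a * ρ + b * ρ') / η₀ by ring] at this
      exact sub_pos.2 this
  have hbdd : ∀ β u ρ : ℝ, 0 ≤ u → 0 ≤ ρ →
      BddAbove ((fun q : ℝ × ℝ => asymObj τ γ Pε Pβ ν β u ρ q.1 q.2) ''
        (Set.Icc cη Cη ×ˢ Set.Ioc (0 : ℝ) C₂)) := by
    intro β u ρ hu hρ
    obtain ⟨B, hB⟩ := (isCompact_Icc.bddAbove_image (hdiv ρ hρ β u))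
    refine ⟨B + γ * (∫ z : ℝ × ℝ, ν (γ * z.2) ∂((gaussianReal 0 1).prod Pβ)) + Cη * ρ / 2, ?_⟩
    rintro _ ⟨⟨η, r⟩, ⟨hη, hr⟩, rfl⟩
    simp only at hη hr ⊢
    rw [asymObj_eq]
    have h1 : Fpart τ Pε β u (ρ / η) ≤ B := hB ⟨η, hη, rfl⟩
    have h2 := Gpart_bdd γ hγ Pβ ν hν hνfin u η r hu hr.1
    have h3 := mul_le_mul_of_nonneg_right hη.2 hρ
    have h4 := mul_nonneg hu hr.1.le
    linarith
  have hle : asymFmax τ γ Pε Pβ ν cη Cη C₂ (a * β + b * β', a * u + b * u', a * ρ + b * ρ') ≤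
      a * asymFmax τ γ Pε Pβ ν cη Cη C₂ (β, u, ρ)
        + b * asymFmax τ γ Pε Pβ ν cη Cη C₂ (β', u', ρ') - δ := by
    conv_lhs => unfold asymFmax
    refine csSup_le ?_ ?_
    · exact Set.Nonempty.image _ ⟨(cη, C₂), ⟨le_rfl, hCη.le⟩, ⟨hC₂, le_rfl⟩⟩
    · rintro _ ⟨⟨η, r⟩, ⟨hη, hr⟩, rfl⟩
      simp only at hη hr ⊢
      have h1 : asymObj τ γ Pε Pβ ν β u ρ η r ≤ asymFmax τ γ Pε Pβ ν cη Cη C₂ (β, u, ρ) :=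
        le_csSup (hbdd β u ρ hu hρ) ⟨(η, r), ⟨hη, hr⟩, rfl⟩
      have h2 : asymObj τ γ Pε Pβ ν β' u' ρ' η r ≤ asymFmax τ γ Pε Pβ ν cη Cη C₂ (β', u', ρ') :=
        le_csSup (hbdd β' u' ρ' hu' hρ') ⟨(η, r), ⟨hη, hr⟩, rfl⟩
      have h3 := mul_le_mul_of_nonneg_left h1 ha.le
      have h4 := mul_le_mul_of_nonneg_left h2 hb.le
      have h5 := hgap η hη
      have h6 := Gpart_convex γ hγ Pβ ν hν hνfin u u' η r a b hu hu' hr.1 ha.le hb.le hab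
      rw [asymObj_eq] at h3 h4 ⊢
      linarith
  linarith

/-- Lemma 12 of the paper, strict convexity of the partially maximized
asymptotic objective.  Fix `C_η > c_η > 0` and `C₂ > 0`.  Then
`(β₀, M_u, ρ₁) ↦ max_{M_η ∈ [c_η, C_η], ρ₂ ∈ (0, C₂]} A(β₀, M_u, ρ₁, M_η, ρ₂)` is jointly
strictly convex on `ℝ × ℝ_{≥0} × ℝ_{>0}`, and at `ρ₁ = 0` it is jointly strictly convex in
`(β₀, M_u)` on `ℝ × ℝ_{≥0}`. -/
theorem asymFmax_strictConvexOn
    (τ γ : ℝ) (hτ : τ ∈ Set.Ioo (0 : ℝ) 1) (hγ : γ ∈ Set.Ioo (0 : ℝ) (2 / Real.pi))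
    (Pε Pβ : Measure ℝ) [IsProbabilityMeasure Pε] [IsProbabilityMeasure Pβ]
    (hPε : NoiseAssumption Pε) (hPβ2 : Integrable (fun x => x ^ 2) Pβ)
    (ν : ℝ → ℝ) (hν : ConvexOn ℝ Set.univ ν)
    (hνfin : ∀ (c ρ : ℝ), 0 ≤ ρ →
      Integrable (fun z : ℝ × ℝ => moreau ν (c * z.1 + γ * z.2) ρ)
        ((gaussianReal 0 1).prod Pβ))
    (hνcont : ContinuousOn
      (fun q : ℝ × ℝ =>
        ∫ z, moreau ν (q.1 * z.1 + γ * z.2) q.2 ∂((gaussianReal 0 1).prod Pβ))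
      (Set.univ ×ˢ Set.Ici 0))
    (cη Cη C₂ : ℝ) (hcη : 0 < cη) (hCη : cη < Cη) (hC₂ : 0 < C₂) :
    StrictConvexOn ℝ (Set.univ ×ˢ Set.Ici (0 : ℝ) ×ˢ Set.Ioi (0 : ℝ))
      (asymFmax τ γ Pε Pβ ν cη Cη C₂) ∧
    StrictConvexOn ℝ (Set.univ ×ˢ Set.Ici (0 : ℝ))
      (fun p : ℝ × ℝ => asymFmax τ γ Pε Pβ ν cη Cη C₂ (p.1, p.2, 0)) := by
  constructor
  · refine ⟨(convex_univ.prod ((convex_Ici 0).prod (convex_Ioi 0))), ?_⟩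
    rintro ⟨β, u, ρ⟩ ⟨-, hu, hρ⟩ ⟨β', u', ρ'⟩ ⟨-, hu', hρ'⟩ hne a b ha hb hab
    have hρ0 : 0 < ρ := hρ
    have hρ0' : 0 < ρ' := hρ'
    have := asymFmax_key τ γ hτ hγ.1.le Pε Pβ hPε ν hν hνfin cη Cη C₂ hcη hCη hC₂
      β u ρ β' u' ρ' a b hρ0.le hρ0'.le hu hu' ha hb hab (by
        by_cases h : β ≠ β' ∨ u ≠ u'
        · exact Or.inl h
        · push Not at h
          refine Or.inr ⟨hρ0, hρ0', fun h3 => hne ?_⟩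
          rw [h.1, h.2, h3])
    simpa using this
  · refine ⟨(convex_univ.prod (convex_Ici 0)), ?_⟩
    rintro ⟨β, u⟩ ⟨-, hu⟩ ⟨β', u'⟩ ⟨-, hu'⟩ hne a b ha hb hab
    have := asymFmax_key τ γ hτ hγ.1.le Pε Pβ hPε ν hν hνfin cη Cη C₂ hcη hCη hC₂
      β u 0 β' u' 0 a b le_rfl le_rfl hu hu' ha hb hab (by
        by_contra! h
        exact hne (by rw [h.1.1, h.1.2]))
    simpa using this

end
end

section
/- Fix constants C_{β₀}, C_u, C₁, C₂, C_η, c_η > 0 with C_η > c_η and c_η < √((1/2)·min{τ², (1−τ)²}). Then the asymptotic program min over (|β₀| ≤ C_{β₀}, 0 ≤ M_u ≤ C_u, 0 ≤ ρ₁ ≤ C₁) of max over (0 < ρ₂ ≤ C₂, c_η ≤ M_η ≤ C_η) of A(β₀, M_u, ρ₁, M_η, ρ₂) admits a unique minimizing triple (β₀*, M_u*, ρ₁*). Moreover, if M_u* > 0 then ρ₁* > 0. -/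
open MeasureTheory ProbabilityTheory Filter Finset

noncomputable section

/-! ### Moreau envelopes of convex functions -/

lemma aux_prox_exists (ν : ℝ → ℝ) (hν : ConvexOn ℝ Set.univ ν) (x ρ : ℝ) (hρ : 0 < ρ) :
    ∃ v, ∀ w, (x - v) ^ 2 / (2 * ρ) + ν v ≤ (x - w) ^ 2 / (2 * ρ) + ν w := by
  have hc : Continuous ν := by
    have := hν.continuousOn isOpen_univ
    rwa [← continuousOn_univ]
  obtain ⟨a, b, hab⟩ : ∃ a b : ℝ, ∀ w, a * w + b ≤ ν w := by
    obtain ⟨a, b, h⟩ := hν.exists_affine_le_real isClosed_univ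
      (hc.lowerSemicontinuous.lowerSemicontinuousOn _)
    exact ⟨a, b, fun w => h w trivial⟩
  have hk : 0 < 1 / (2 * ρ) := by positivity
  set k := 1 / (2 * ρ) with hkdef
  have hform : ∀ w, (x - w) ^ 2 / (2 * ρ) = k * (x - w) ^ 2 := by
    intro w; rw [hkdef]; ring
  simp only [hform]
  apply Continuous.exists_forall_le (f := fun w => k * (x - w) ^ 2 + ν w)
  · fun_prop
  · have h1 : Tendsto (fun w : ℝ => k / 2 * ‖w‖ ^ 2 + (b - (a - 2 * k * x) ^ 2 / (2 * k))) (cocompact ℝ) atTop := by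
      apply tendsto_atTop_add_const_right
      apply Tendsto.const_mul_atTop (by positivity)
      exact (tendsto_pow_atTop (by norm_num)).comp (tendsto_norm_cocompact_atTop)
    refine tendsto_atTop_mono (fun w => ?_) h1
    have h2 := hab w
    have h3 : k / 2 * w ^ 2 + (a - 2 * k * x) * w + (a - 2 * k * x) ^ 2 / (2 * k)
        = (k * w + (a - 2 * k * x)) ^ 2 / (2 * k) := by
      field_simp
      ring
    have h4 : 0 ≤ (k * w + (a - 2 * k * x)) ^ 2 / (2 * k) := by positivity
    have h5 : 0 ≤ k * x ^ 2 := by positivity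
    simp only [Real.norm_eq_abs, sq_abs]
    nlinarith

lemma moreau_eq_of_min (ν : ℝ → ℝ) (x ρ v : ℝ) (hρ : 0 < ρ)
    (hv : ∀ w, (x - v) ^ 2 / (2 * ρ) + ν v ≤ (x - w) ^ 2 / (2 * ρ) + ν w) :
    moreau ν x ρ = (x - v) ^ 2 / (2 * ρ) + ν v := by
  unfold moreau
  rw [if_neg hρ.ne']
  apply le_antisymm
  · exact ciInf_le ⟨_, by rintro _ ⟨w, rfl⟩; exact hv w⟩ v
  · exact le_ciInf hv

/-- attained infimum, including `ρ = 0` -/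
lemma moreau_attained (ν : ℝ → ℝ) (hν : ConvexOn ℝ Set.univ ν) (x ρ : ℝ) (hρ : 0 ≤ ρ) :
    ∃ v, moreau ν x ρ = (x - v) ^ 2 / (2 * ρ) + ν v ∧ (ρ = 0 → v = x) := by
  rcases hρ.eq_or_lt with h | h
  · subst h
    exact ⟨x, by simp [moreau], fun _ => rfl⟩
  · obtain ⟨v, hv⟩ := aux_prox_exists ν hν x ρ h
    exact ⟨v, moreau_eq_of_min ν x ρ v h hv, fun h0 => absurd h0 h.ne'⟩

lemma moreau_le (ν : ℝ → ℝ) (hν : ConvexOn ℝ Set.univ ν) (x ρ v : ℝ) (hρ : 0 ≤ ρ)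
    (h0 : ρ = 0 → v = x) :
    moreau ν x ρ ≤ (x - v) ^ 2 / (2 * ρ) + ν v := by
  rcases hρ.eq_or_lt with h | h
  · rw [h0 h.symm, ← h]; simp [moreau]
  · obtain ⟨w, hw⟩ := aux_prox_exists ν hν x ρ h
    rw [moreau_eq_of_min ν x ρ w h hw]
    exact hw v

lemma persp_mid (a a' ρ ρ' : ℝ) (hρ : 0 ≤ ρ) (hρ' : 0 ≤ ρ') (h0 : ρ = 0 → a = 0)
    (h0' : ρ' = 0 → a' = 0) :
    ((a + a') / 2) ^ 2 / (2 * ((ρ + ρ') / 2)) ≤ (a ^ 2 / (2 * ρ) + a' ^ 2 / (2 * ρ')) / 2 := by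
  rcases hρ.eq_or_lt with h | h
  · rw [h0 h.symm, ← h]
    rcases hρ'.eq_or_lt with h' | h'
    · rw [h0' h'.symm, ← h']; simp
    · apply le_of_eq; field_simp; ring
  · rcases hρ'.eq_or_lt with h' | h'
    · rw [h0' h'.symm, ← h']; apply le_of_eq; field_simp; ring
    · rw [div_add_div _ _ (by positivity) (by positivity), div_div, div_le_div_iff₀ (by positivity) (by positivity)]
      have : (a ^ 2 * (2 * ρ') + 2 * ρ * a' ^ 2) * (2 * ((ρ + ρ') / 2)) - ((a + a') / 2) ^ 2 * (2 * ρ * (2 * ρ') * 2) = 2 * (a * ρ' - a' * ρ) ^ 2 := by ring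
      nlinarith [sq_nonneg (a * ρ' - a' * ρ)]

lemma moreau_mid (ν : ℝ → ℝ) (hν : ConvexOn ℝ Set.univ ν) (x x' ρ ρ' : ℝ) (hρ : 0 ≤ ρ)
    (hρ' : 0 ≤ ρ') :
    moreau ν ((x + x') / 2) ((ρ + ρ') / 2) ≤ (moreau ν x ρ + moreau ν x' ρ') / 2 := by
  obtain ⟨v, hv, hv0⟩ := moreau_attained ν hν x ρ hρ
  obtain ⟨v', hv', hv0'⟩ := moreau_attained ν hν x' ρ' hρ'
  have h1 := moreau_le ν hν ((x + x') / 2) ((ρ + ρ') / 2) ((v + v') / 2) (by positivity)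
    (fun h => by rw [hv0 (by linarith), hv0' (by linarith)])
  have h2 := persp_mid (x - v) (x' - v') ρ ρ' hρ hρ' (fun h => by rw [hv0 h]; simp)
    (fun h => by rw [hv0' h]; simp)
  have h3 : ν ((v + v') / 2) ≤ (ν v + ν v') / 2 := by
    have := hν.2 (Set.mem_univ v) (Set.mem_univ v') (show (0:ℝ) ≤ 1 / 2 by norm_num)
      (show (0:ℝ) ≤ 1 / 2 by norm_num) (by norm_num)
    simp only [smul_eq_mul] at this
    rw [show (v + v') / 2 = 1 / 2 * v + 1 / 2 * v' by ring]
    linarith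
  rw [hv, hv']
  rw [show (x - v + (x' - v')) / 2 = (x + x') / 2 - (v + v') / 2 by ring] at h2
  linarith

lemma subgrad_of_min (ν : ℝ → ℝ) (hν : ConvexOn ℝ Set.univ ν) (x ρ v : ℝ)
    (hv : ∀ w, (x - v) ^ 2 / (2 * ρ) + ν v ≤ (x - w) ^ 2 / (2 * ρ) + ν w) (w : ℝ) :
    ν v + (x - v) / ρ * (w - v) ≤ ν w := by
  have key : ∀ t : ℝ, 0 < t → t ≤ 1 →
      ν v + (x - v) / ρ * (w - v) ≤ ν w + t * ((w - v) ^ 2 / (2 * ρ)) := by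
    intro t ht ht1
    have h1 := hv ((1 - t) * v + t * w)
    have h2 := hν.2 (Set.mem_univ v) (Set.mem_univ w) (show 0 ≤ 1 - t by linarith)
      ht.le (by ring)
    simp only [smul_eq_mul] at h2
    have h3 : (x - ((1 - t) * v + t * w)) ^ 2 / (2 * ρ) - (x - v) ^ 2 / (2 * ρ)
        = t * (- ((x - v) / ρ * (w - v)) + t * ((w - v) ^ 2 / (2 * ρ))) := by
      by_cases hρ : ρ = 0
      · subst hρ; simp
      · field_simp; ring
    have h4 : 0 ≤ t * (- ((x - v) / ρ * (w - v)) + t * ((w - v) ^ 2 / (2 * ρ)) + ν w - ν v) := by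
      linarith
    have := nonneg_of_mul_nonneg_right h4 ht
    linarith
  have hlim : Tendsto (fun t : ℝ => ν w + t * ((w - v) ^ 2 / (2 * ρ))) (nhdsWithin 0 (Set.Ioi 0))
      (nhds (ν w + 0 * ((w - v) ^ 2 / (2 * ρ)))) := by
    apply Tendsto.mono_left _ nhdsWithin_le_nhds
    exact Continuous.tendsto (by fun_prop) 0
  have := ge_of_tendsto hlim (b := ν v + (x - v) / ρ * (w - v)) (by
    have : Set.Ioo (0:ℝ) 1 ∈ nhdsWithin (0:ℝ) (Set.Ioi 0) := Ioo_mem_nhdsGT (by norm_num)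
    filter_upwards [this] with t ht
    exact key t ht.1 ht.2.le)
  simpa using this

/-- The Moreau identity. -/
lemma moreauConj_eq (ν : ℝ → ℝ) (hν : ConvexOn ℝ Set.univ ν) (x ρ : ℝ) (hρ : 0 < ρ) :
    moreauConj ν x ρ = x ^ 2 / (2 * ρ) - moreau ν (x / ρ) (1 / ρ) := by
  obtain ⟨w, hw⟩ := aux_prox_exists ν hν (x / ρ) (1 / ρ) (by positivity)
  rw [moreau_eq_of_min ν (x / ρ) (1 / ρ) w (by positivity) hw]
  have hsub := subgrad_of_min ν hν (x / ρ) (1 / ρ) w hw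
  have hconj : conjE ν (x - ρ * w) = ((w * (x - ρ * w) - ν w : ℝ) : EReal) := by
    unfold conjE
    apply le_antisymm
    · apply iSup_le
      intro u
      rw [EReal.coe_le_coe_iff]
      have := hsub u
      rw [show (x / ρ - w) / (1 / ρ) = x - ρ * w by field_simp] at this
      linarith
    · exact le_iSup (fun v : ℝ => ((v * (x - ρ * w) - ν v : ℝ) : EReal)) w
  unfold moreauConj
  have : (⨅ v : ℝ, ((((x - v) ^ 2 / (2 * ρ) : ℝ) : EReal) + conjE ν v))
      = ((x ^ 2 / (2 * ρ) - ((x / ρ - w) ^ 2 / (2 * (1 / ρ)) + ν w) : ℝ) : EReal) := by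
    apply le_antisymm
    · refine (iInf_le _ (x - ρ * w)).trans ?_
      rw [hconj, ← EReal.coe_add, EReal.coe_le_coe_iff]
      apply le_of_eq; field_simp; ring
    · apply le_iInf
      intro v
      have h1 : ((w * v - ν w : ℝ) : EReal) ≤ conjE ν v :=
        le_iSup (fun u : ℝ => ((u * v - ν u : ℝ) : EReal)) w
      refine le_trans ?_ (add_le_add le_rfl h1)
      rw [← EReal.coe_add, EReal.coe_le_coe_iff]
      have : (x - v) ^ 2 / (2 * ρ) + (w * v - ν w)
          - (x ^ 2 / (2 * ρ) - ((x / ρ - w) ^ 2 / (2 * (1 / ρ)) + ν w))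
          = (x - v - ρ * w) ^ 2 / (2 * ρ) := by
        field_simp; ring
      have h2 : 0 ≤ (x - v - ρ * w) ^ 2 / (2 * ρ) := by positivity
      linarith
  rw [this, EReal.toReal_coe]

/-! ### The envelope of the pinball loss -/

lemma pinball_ge (τ s v : ℝ) (hs : s ∈ Set.Icc (τ - 1) τ) : s * v ≤ pinball τ v := by
  unfold pinball
  obtain ⟨h1, h2⟩ := hs
  rcases le_total v 0 with h | h
  · rw [min_eq_left h]; nlinarith
  · rw [min_eq_right h]; nlinarith

lemma pb_lower (τ s x ρ : ℝ) (hs : s ∈ Set.Icc (τ - 1) τ) (hρ : 0 ≤ ρ) :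
    s * x - ρ * s ^ 2 / 2 ≤ moreau (pinball τ) x ρ := by
  unfold moreau
  split_ifs with h
  · subst h
    have := pinball_ge τ s x hs
    linarith
  · have hρ' : 0 < ρ := lt_of_le_of_ne hρ (Ne.symm h)
    apply le_ciInf
    intro v
    have h1 := pinball_ge τ s v hs
    have h2 : (x - v) ^ 2 / (2 * ρ) + s * v - (s * x - ρ * s ^ 2 / 2)
        = (x - v - ρ * s) ^ 2 / (2 * ρ) := by
      field_simp; ring
    have h3 : 0 ≤ (x - v - ρ * s) ^ 2 / (2 * ρ) := by positivity
    linarith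

lemma pb_upper_aux (τ s x ρ : ℝ) (hτ : τ ∈ Set.Ioo (0 : ℝ) 1) (hρ : 0 < ρ)
    (h : pinball τ (x - ρ * s) = s * (x - ρ * s)) :
    moreau (pinball τ) x ρ ≤ s * x - ρ * s ^ 2 / 2 := by
  have h0 : (0 : ℝ) ∈ Set.Icc (τ - 1) τ := ⟨by linarith [hτ.2], hτ.1.le⟩
  unfold moreau
  rw [if_neg hρ.ne']
  refine (ciInf_le ⟨0, ?_⟩ (x - ρ * s)).trans ?_
  · rintro _ ⟨v, rfl⟩
    have h1 := pinball_ge τ 0 v h0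
    have h3 : 0 ≤ (x - v) ^ 2 / (2 * ρ) := by positivity
    simp only
    linarith
  · rw [h]
    apply le_of_eq
    field_simp
    ring

lemma pb_att (τ x ρ : ℝ) (hτ : τ ∈ Set.Ioo (0 : ℝ) 1) (hρ : 0 ≤ ρ) :
    ∃ s ∈ Set.Icc (τ - 1) τ, moreau (pinball τ) x ρ = s * x - ρ * s ^ 2 / 2 := by
  have hτ1 : τ ∈ Set.Icc (τ - 1) τ := ⟨by linarith, le_rfl⟩
  have hτ2 : τ - 1 ∈ Set.Icc (τ - 1) τ := ⟨le_rfl, by linarith⟩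
  rcases hρ.eq_or_lt with h | h
  · subst h
    rcases le_total x 0 with hx | hx
    · refine ⟨τ - 1, hτ2, ?_⟩
      simp [moreau, pinball, min_eq_left hx]; ring
    · refine ⟨τ, hτ1, ?_⟩
      simp [moreau, pinball, min_eq_right hx]
  · have key : ∃ s ∈ Set.Icc (τ - 1) τ, pinball τ (x - ρ * s) = s * (x - ρ * s) := by
      by_cases h1 : ρ * τ ≤ x
      · exact ⟨τ, hτ1, by unfold pinball; rw [min_eq_right (by linarith)]; ring⟩
      by_cases h2 : x ≤ ρ * (τ - 1)
      · exact ⟨τ - 1, hτ2, by unfold pinball; rw [min_eq_left (by linarith)]; ring⟩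
      push Not at h1 h2
      refine ⟨x / ρ, ⟨?_, ?_⟩, ?_⟩
      · rw [le_div_iff₀ h]; linarith
      · rw [div_le_iff₀ h]; linarith
      · rw [mul_div_cancel₀ _ h.ne']; simp [pinball]
    obtain ⟨s, hs, hs'⟩ := key
    exact ⟨s, hs, le_antisymm (pb_upper_aux τ s x ρ hτ h hs') (pb_lower τ s x ρ hs hρ)⟩

lemma pb_lip_aux (τ x x' ρ ρ' : ℝ) (hτ : τ ∈ Set.Ioo (0 : ℝ) 1) (hρ : 0 ≤ ρ) (hρ' : 0 ≤ ρ') :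
    moreau (pinball τ) x ρ - moreau (pinball τ) x' ρ' ≤ |x - x'| + |ρ - ρ'| := by
  obtain ⟨s, hs, h⟩ := pb_att τ x ρ hτ hρ
  have h' := pb_lower τ s x' ρ' hs hρ'
  have hs1 : |s| ≤ 1 := abs_le.2 ⟨by linarith [hs.1, hτ.1], by linarith [hs.2, hτ.2]⟩
  have h1 : s * (x - x') ≤ |x - x'| := by
    calc s * (x - x') ≤ |s * (x - x')| := le_abs_self _
      _ = |s| * |x - x'| := abs_mul _ _
      _ ≤ 1 * |x - x'| := by gcongr
      _ = _ := one_mul _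
  have h2 : s ^ 2 ≤ 1 := by rw [← sq_abs]; nlinarith [abs_nonneg s]
  have h3 : -(ρ - ρ') * (s ^ 2 / 2) ≤ |ρ - ρ'| := by
    have := neg_abs_le (ρ - ρ')
    have h4 : 0 ≤ s ^ 2 := sq_nonneg s
    have h5 := abs_nonneg (ρ - ρ')
    nlinarith
  rw [h]
  nlinarith

lemma pb_lip (τ x x' ρ ρ' : ℝ) (hτ : τ ∈ Set.Ioo (0 : ℝ) 1) (hρ : 0 ≤ ρ) (hρ' : 0 ≤ ρ') :
    |moreau (pinball τ) x ρ - moreau (pinball τ) x' ρ'| ≤ |x - x'| + |ρ - ρ'| := by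
  rw [abs_le]
  have h1 := pb_lip_aux τ x x' ρ ρ' hτ hρ hρ'
  have h2 := pb_lip_aux τ x' x ρ' ρ hτ hρ' hρ
  rw [abs_sub_comm x' x, abs_sub_comm ρ' ρ] at h2
  constructor <;> linarith

lemma pb_zero (τ : ℝ) : moreau (pinball τ) 0 0 = 0 := by simp [moreau, pinball]

lemma pb_cont (τ ρ : ℝ) (hτ : τ ∈ Set.Ioo (0 : ℝ) 1) (hρ : 0 ≤ ρ) :
    Continuous fun x => moreau (pinball τ) x ρ := by
  have : LipschitzWith 1 fun x => moreau (pinball τ) x ρ := by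
    apply LipschitzWith.of_dist_le_mul
    intro x y
    simpa [Real.dist_eq] using pb_lip τ x y ρ ρ hτ hρ hρ
  exact this.continuous

lemma pb_mid (τ x x' ρ ρ' : ℝ) (hτ : τ ∈ Set.Ioo (0 : ℝ) 1) (hρ : 0 ≤ ρ) (hρ' : 0 ≤ ρ') :
    0 ≤ moreau (pinball τ) x ρ + moreau (pinball τ) x' ρ'
      - 2 * moreau (pinball τ) ((x + x') / 2) ((ρ + ρ') / 2) := by
  obtain ⟨s, hs, h⟩ := pb_att τ ((x + x') / 2) ((ρ + ρ') / 2) hτ (by positivity)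
  have h1 := pb_lower τ s x ρ hs hρ
  have h2 := pb_lower τ s x' ρ' hs hρ'
  rw [h]
  linarith

lemma pb_gap_zero (τ x x' ρ ρ' t : ℝ) (hτ : τ ∈ Set.Ioo (0 : ℝ) 1) (hρ : 0 < ρ) (hρ' : 0 ≤ ρ')
    (ht : t ∈ Set.Ioo (τ - 1) τ) (hx : x = ρ * t)
    (hgap : moreau (pinball τ) x ρ + moreau (pinball τ) x' ρ'
      - 2 * moreau (pinball τ) ((x + x') / 2) ((ρ + ρ') / 2) = 0) : x' = ρ' * t := by
  obtain ⟨s, hs, h⟩ := pb_att τ ((x + x') / 2) ((ρ + ρ') / 2) hτ (by positivity)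
  have h1 := pb_lower τ t x ρ ⟨ht.1.le, ht.2.le⟩ hρ.le
  have h2 := pb_lower τ s x' ρ' hs hρ'
  have hst : s = t := by
    have h3 : ρ * (t - s) ^ 2 ≤ 0 := by
      rw [h] at hgap
      subst hx
      nlinarith
    have h4 : (t - s) ^ 2 ≤ 0 := by
      by_contra hc
      push Not at hc
      nlinarith
    nlinarith [sq_nonneg (t - s)]
  subst hst
  have hup : ∀ s' ∈ Set.Icc (τ - 1) τ, (s' - s) * (x' - ρ' * s) ≤ ρ' * (s' - s) ^ 2 / 2 := by
    intro s' hs'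
    have h5 := pb_lower τ s' x' ρ' hs' hρ'
    rw [h] at hgap
    nlinarith
  by_contra hne
  have hy : 0 < |x' - ρ' * s| := abs_pos.2 (sub_ne_zero.2 hne)
  set δ := min (min (τ - s) (s - (τ - 1))) (|x' - ρ' * s| / (ρ' + 1)) with hδ
  have hδ0 : 0 < δ := by
    apply lt_min (lt_min _ _) (by positivity)
    · linarith [ht.2]
    · linarith [ht.1]
  have hδ1 : δ ≤ τ - s := (min_le_left _ _).trans (min_le_left _ _)
  have hδ2 : δ ≤ s - (τ - 1) := (min_le_left _ _).trans (min_le_right _ _)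
  have hδ3 : δ * (ρ' + 1) ≤ |x' - ρ' * s| := by
    rw [← le_div_iff₀ (by positivity)]; exact min_le_right _ _
  have hfin : δ * |x' - ρ' * s| ≤ ρ' * δ ^ 2 / 2 := by
    rcases abs_cases (x' - ρ' * s) with ⟨ha, _⟩ | ⟨ha, _⟩
    · have := hup (s + δ) ⟨by linarith [ht.1], by linarith⟩
      rw [ha]; nlinarith
    · have := hup (s - δ) ⟨by linarith, by linarith [ht.2]⟩
      rw [ha]; nlinarith
  nlinarith [mul_pos hδ0 hδ0, mul_nonneg hρ' (mul_pos hδ0 hδ0).le]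

/-- decrease in `ρ` away from the kink -/
lemma pb_le_zero (τ x ρ : ℝ) (hτ : τ ∈ Set.Ioo (0 : ℝ) 1) (hρ : 0 ≤ ρ) :
    moreau (pinball τ) x ρ ≤ moreau (pinball τ) x 0 := by
  obtain ⟨s, hs, h⟩ := pb_att τ x ρ hτ hρ
  have h1 := pb_lower τ s x 0 hs le_rfl
  rw [h]
  nlinarith [mul_nonneg hρ (sq_nonneg s)]

lemma pb_le_zero' (τ x ρ : ℝ) (hτ : τ ∈ Set.Ioo (0 : ℝ) 1) (hρ : 0 < ρ) (hx : ρ < |x|) :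
    moreau (pinball τ) x ρ ≤ moreau (pinball τ) x 0 - ρ / 2 * min (τ ^ 2) ((1 - τ) ^ 2) := by
  obtain ⟨h0, h1⟩ := hτ
  rcases abs_cases x with ⟨ha, hb⟩ | ⟨ha, hb⟩
  · rw [ha] at hx
    have := pb_upper_aux τ τ x ρ ⟨h0, h1⟩ hρ (by
      unfold pinball; rw [min_eq_right (by nlinarith)]; ring)
    have h2 := pb_lower τ τ x 0 ⟨by linarith, le_rfl⟩ le_rfl
    have := min_le_left (τ ^ 2) ((1 - τ) ^ 2)
    nlinarith
  · rw [ha] at hx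
    have := pb_upper_aux τ (τ - 1) x ρ ⟨h0, h1⟩ hρ (by
      unfold pinball; rw [min_eq_left (by nlinarith)]; ring)
    have h2 := pb_lower τ (τ - 1) x 0 ⟨le_rfl, by linarith⟩ le_rfl
    have := min_le_right (τ ^ 2) ((1 - τ) ^ 2)
    nlinarith

/-! ### The expected pinball envelope -/

def Lfun (τ : ℝ) (Pε : Measure ℝ) (β M ρ : ℝ) : ℝ :=
  ∫ z, moreau (pinball τ) (M * z.1 + z.2 - β) ρ ∂((gaussianReal 0 1).prod Pε)

lemma int_sq_gauss : Integrable (fun x : ℝ => x ^ 2) (gaussianReal 0 1) :=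
  (memLp_two_iff_integrable_sq (by fun_prop)).1 (memLp_id_gaussianReal 2)

lemma int_id_of_sq (P : Measure ℝ) [IsProbabilityMeasure P]
    (h : Integrable (fun x : ℝ => x ^ 2) P) : Integrable (fun x : ℝ => x) P :=
  ((memLp_two_iff_integrable_sq (f := fun x : ℝ => x) (by fun_prop)).2 h).integrable (by norm_num)

lemma integral_sq_gauss : ∫ x : ℝ, x ^ 2 ∂(gaussianReal 0 1) = 1 := by
  have h := variance_eq_sub (memLp_id_gaussianReal (μ := 0) (v := 1) 2)
  rw [variance_id_gaussianReal] at h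
  simp at h
  exact h.symm

lemma L_int (τ : ℝ) (hτ : τ ∈ Set.Ioo (0 : ℝ) 1) (Pε : Measure ℝ) [IsProbabilityMeasure Pε]
    (h2 : Integrable (fun x : ℝ => x ^ 2) Pε) (β M ρ : ℝ) (hρ : 0 ≤ ρ) :
    Integrable (fun z : ℝ × ℝ => moreau (pinball τ) (M * z.1 + z.2 - β) ρ)
      ((gaussianReal 0 1).prod Pε) := by
  have hi1 := (int_id_of_sq _ int_sq_gauss).comp_fst Pε
  have hi2 := (int_id_of_sq _ h2).comp_snd (gaussianReal 0 1)
  have hb : Integrable (fun z : ℝ × ℝ => |M * z.1 + z.2 - β| + |ρ|)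
      ((gaussianReal 0 1).prod Pε) :=
    ((((hi1.const_mul M).add hi2).sub (integrable_const β)).abs).add (integrable_const _)
  refine hb.mono' ?_ (Eventually.of_forall fun z => ?_)
  · apply Continuous.aestronglyMeasurable
    exact (pb_cont τ ρ hτ hρ).comp (by fun_prop)
  · have := pb_lip τ (M * z.1 + z.2 - β) 0 ρ 0 hτ hρ le_rfl
    rw [pb_zero] at this
    simpa using this

lemma L_lip (τ : ℝ) (hτ : τ ∈ Set.Ioo (0 : ℝ) 1) (Pε : Measure ℝ) [IsProbabilityMeasure Pε]
    (h2 : Integrable (fun x : ℝ => x ^ 2) Pε) (β M ρ β' M' ρ' : ℝ) (hρ : 0 ≤ ρ) (hρ' : 0 ≤ ρ') :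
    |Lfun τ Pε β M ρ - Lfun τ Pε β' M' ρ'|
      ≤ |M - M'| * (∫ x, |x| ∂(gaussianReal 0 1)) + |β - β'| + |ρ - ρ'| := by
  unfold Lfun
  rw [← integral_sub (L_int τ hτ Pε h2 β M ρ hρ) (L_int τ hτ Pε h2 β' M' ρ' hρ')]
  have hi1 := ((int_id_of_sq _ int_sq_gauss).abs).comp_fst Pε
  have hb : Integrable (fun z : ℝ × ℝ => |M - M'| * |z.1| + (|β - β'| + |ρ - ρ'|))
      ((gaussianReal 0 1).prod Pε) := (hi1.const_mul _).add (integrable_const _)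
  have h := norm_integral_le_of_norm_le hb (f := fun z : ℝ × ℝ =>
    moreau (pinball τ) (M * z.1 + z.2 - β) ρ - moreau (pinball τ) (M' * z.1 + z.2 - β') ρ')
    (Eventually.of_forall fun z => ?_)
  · rw [Real.norm_eq_abs] at h
    refine h.trans (le_of_eq ?_)
    rw [integral_add (hi1.const_mul _) (integrable_const _), integral_const_mul,
      integral_fun_fst (fun x : ℝ => |x|)]
    simp
    ring
  · rw [Real.norm_eq_abs]
    refine (pb_lip τ _ _ ρ ρ' hτ hρ hρ').trans ?_
    have : M * z.1 + z.2 - β - (M' * z.1 + z.2 - β') = (M - M') * z.1 - (β - β') := by ring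
    rw [this]
    have h3 := abs_sub ((M - M') * z.1) (β - β')
    rw [abs_mul] at h3
    linarith

lemma L_cont (τ : ℝ) (hτ : τ ∈ Set.Ioo (0 : ℝ) 1) (Pε : Measure ℝ) [IsProbabilityMeasure Pε]
    (h2 : Integrable (fun x : ℝ => x ^ 2) Pε) :
    ContinuousOn (fun p : ℝ × ℝ × ℝ => Lfun τ Pε p.1 p.2.1 p.2.2) {p | 0 ≤ p.2.2} := by
  intro p hp
  rw [ContinuousWithinAt, tendsto_iff_norm_sub_tendsto_zero]
  have hlim : Tendsto (fun q : ℝ × ℝ × ℝ => |q.2.1 - p.2.1| * (∫ x, |x| ∂(gaussianReal 0 1))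
      + |q.1 - p.1| + |q.2.2 - p.2.2|) (nhdsWithin p {p | 0 ≤ p.2.2}) (nhds 0) := by
    apply Tendsto.mono_left _ nhdsWithin_le_nhds
    have hc : Continuous (fun q : ℝ × ℝ × ℝ => |q.2.1 - p.2.1| * (∫ x, |x| ∂(gaussianReal 0 1))
      + |q.1 - p.1| + |q.2.2 - p.2.2|) := by fun_prop
    have := hc.tendsto p
    simpa using this
  refine squeeze_zero' (Eventually.of_forall fun _ => norm_nonneg _) ?_ hlim
  filter_upwards [self_mem_nhdsWithin] with q hq
  exact L_lip τ hτ Pε h2 _ _ _ _ _ _ hq hp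

lemma noise_ac (Pε : Measure ℝ) (hPε : NoiseAssumption Pε) : Pε ≪ volume ∧ volume ≪ Pε := by
  obtain ⟨f, hf, hpos, -, h⟩ := hPε.density
  rw [h]
  refine ⟨withDensity_absolutelyContinuous _ _, withDensity_absolutelyContinuous' ?_ ?_⟩
  · exact (ENNReal.measurable_ofReal.comp hf.measurable).aemeasurable
  · exact Eventually.of_forall fun x => by simpa using hpos x

lemma prod_openPos (Pε : Measure ℝ) [IsProbabilityMeasure Pε] (hPε : NoiseAssumption Pε) :
    ((gaussianReal 0 1).prod Pε).IsOpenPosMeasure := by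
  have h1 : (gaussianReal 0 1).IsOpenPosMeasure :=
    (gaussianReal_absolutelyContinuous' 0 (one_ne_zero)).isOpenPosMeasure
  have h2 : Pε.IsOpenPosMeasure := (noise_ac Pε hPε).2.isOpenPosMeasure
  infer_instance

lemma gap_zero_imp (τ : ℝ) (hτ : τ ∈ Set.Ioo (0 : ℝ) 1) (β M ρ β' M' ρ' : ℝ)
    (hρ : 0 < ρ) (hρ' : 0 ≤ ρ')
    (h : ∀ z : ℝ × ℝ, moreau (pinball τ) (M * z.1 + z.2 - β) ρ
      + moreau (pinball τ) (M' * z.1 + z.2 - β') ρ'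
      - 2 * moreau (pinball τ) ((M * z.1 + z.2 - β + (M' * z.1 + z.2 - β')) / 2) ((ρ + ρ') / 2)
      = 0) : β = β' ∧ M = M' ∧ ρ = ρ' := by
  have key : ∀ g t, t ∈ Set.Ioo (τ - 1) τ → M' * g + (ρ * t + β - M * g) - β' = ρ' * t := by
    intro g t ht
    exact pb_gap_zero τ _ _ ρ ρ' t hτ hρ hρ' ht (by simp only; ring) (h (g, ρ * t + β - M * g))
  have h0 : (0 : ℝ) ∈ Set.Ioo (τ - 1) τ := ⟨by linarith [hτ.2], hτ.1⟩
  have h1 : τ / 2 ∈ Set.Ioo (τ - 1) τ := ⟨by linarith [hτ.2], by linarith [hτ.1]⟩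
  have k1 := key 0 0 h0
  have k2 := key 1 0 h0
  have k3 := key 0 (τ / 2) h1
  refine ⟨by linarith, by linarith, ?_⟩
  have : (ρ - ρ') * τ = 0 := by linarith
  rcases mul_eq_zero.1 this with h | h
  · linarith
  · exact absurd h hτ.1.ne'

lemma gap_zero_imp0 (τ : ℝ) (β M β' M' : ℝ)
    (h : ∀ z : ℝ × ℝ, moreau (pinball τ) (M * z.1 + z.2 - β) 0
      + moreau (pinball τ) (M' * z.1 + z.2 - β') 0
      - 2 * moreau (pinball τ) ((M * z.1 + z.2 - β + (M' * z.1 + z.2 - β')) / 2) ((0 + 0) / 2)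
      = 0) : β = β' ∧ M = M' := by
  have key : ∀ g, (M - M') * g - (β - β') = 0 := by
    intro g
    have h1 := h (g, ((β + β') - (M + M') * g) / 2)
    simp only [moreau, pinball] at h1
    have e1 : M * g + ((β + β') - (M + M') * g) / 2 - β = ((M - M') * g - (β - β')) / 2 := by ring
    have e2 : M' * g + ((β + β') - (M + M') * g) / 2 - β' = -(((M - M') * g - (β - β')) / 2) := by
      ring
    rw [e1, e2] at h1
    set y := ((M - M') * g - (β - β')) / 2
    simp at h1
    rcases le_total y 0 with hy | hy
    · rw [min_eq_left hy, min_eq_right (by linarith)] at h1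
      linarith
    · rw [min_eq_right hy, min_eq_left (by linarith)] at h1
      linarith
  have k1 := key 0
  have k2 := key 1
  constructor <;> linarith

lemma L_gap (τ : ℝ) (hτ : τ ∈ Set.Ioo (0 : ℝ) 1) (Pε : Measure ℝ) [IsProbabilityMeasure Pε]
    (hPε : NoiseAssumption Pε) (β M ρ β' M' ρ' : ℝ) (hρ : 0 ≤ ρ) (hρ' : 0 ≤ ρ')
    (hne : ¬ (β = β' ∧ M = M' ∧ ρ = ρ')) :
    0 < Lfun τ Pε β M ρ + Lfun τ Pε β' M' ρ'
      - 2 * Lfun τ Pε ((β + β') / 2) ((M + M') / 2) ((ρ + ρ') / 2) := by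
  have i1 := L_int τ hτ Pε hPε.second_moment β M ρ hρ
  have i2 := L_int τ hτ Pε hPε.second_moment β' M' ρ' hρ'
  have i3 := L_int τ hτ Pε hPε.second_moment ((β + β') / 2) ((M + M') / 2) ((ρ + ρ') / 2)
    (by positivity)
  have hpt : ∀ z : ℝ × ℝ, (M + M') / 2 * z.1 + z.2 - (β + β') / 2
      = (M * z.1 + z.2 - β + (M' * z.1 + z.2 - β')) / 2 := by intro z; ring
  simp only [hpt] at i3
  have heq : Lfun τ Pε β M ρ + Lfun τ Pε β' M' ρ'
      - 2 * Lfun τ Pε ((β + β') / 2) ((M + M') / 2) ((ρ + ρ') / 2)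
      = ∫ z, (moreau (pinball τ) (M * z.1 + z.2 - β) ρ
      + moreau (pinball τ) (M' * z.1 + z.2 - β') ρ'
      - 2 * moreau (pinball τ) ((M * z.1 + z.2 - β + (M' * z.1 + z.2 - β')) / 2) ((ρ + ρ') / 2))
        ∂((gaussianReal 0 1).prod Pε) := by
    have i12 : Integrable (fun z : ℝ × ℝ => moreau (pinball τ) (M * z.1 + z.2 - β) ρ
      + moreau (pinball τ) (M' * z.1 + z.2 - β') ρ') ((gaussianReal 0 1).prod Pε) := i1.add i2
    rw [integral_sub i12 (i3.const_mul 2), integral_add i1 i2, integral_const_mul]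
    unfold Lfun
    simp only [hpt]
  rw [heq]
  set F : ℝ × ℝ → ℝ := fun z => (moreau (pinball τ) (M * z.1 + z.2 - β) ρ
      + moreau (pinball τ) (M' * z.1 + z.2 - β') ρ'
      - 2 * moreau (pinball τ) ((M * z.1 + z.2 - β + (M' * z.1 + z.2 - β')) / 2) ((ρ + ρ') / 2))
    with hF
  have hF0 : 0 ≤ F := fun z => pb_mid τ _ _ ρ ρ' hτ hρ hρ'
  have hFi : Integrable F ((gaussianReal 0 1).prod Pε) := (i1.add i2).sub (i3.const_mul 2)
  refine lt_of_le_of_ne (integral_nonneg hF0) fun h0 => ?_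
  have hae := (integral_eq_zero_iff_of_nonneg hF0 hFi).1 h0.symm
  have := prod_openPos Pε hPε
  have hFc : Continuous F := by
    have c1 := pb_cont τ ρ hτ hρ
    have c2 := pb_cont τ ρ' hτ hρ'
    have c3 := pb_cont τ ((ρ + ρ') / 2) hτ (by positivity)
    refine ((c1.comp ?_).add (c2.comp ?_)).sub (continuous_const.mul (c3.comp ?_)) <;> fun_prop
  have hz := (Continuous.ae_eq_iff_eq _ hFc continuous_zero).1 hae
  have hz' : ∀ z, F z = 0 := fun z => congrFun hz z
  simp only [hF] at hz'
  rcases hρ.eq_or_lt with h | h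
  · rcases hρ'.eq_or_lt with h' | h'
    · subst h; subst h'
      have := gap_zero_imp0 τ β M β' M' hz'
      exact hne ⟨this.1, this.2, rfl⟩
    · have := gap_zero_imp τ hτ β' M' ρ' β M ρ h' hρ (fun z => by
        have := hz' z
        rw [add_comm ρ' ρ, add_comm (M' * z.1 + z.2 - β')]
        linarith)
      exact hne ⟨this.1.symm, this.2.1.symm, this.2.2.symm⟩
  · exact hne (gap_zero_imp τ hτ β M ρ β' M' ρ' h hρ' hz')

lemma L_le_zero (τ : ℝ) (hτ : τ ∈ Set.Ioo (0 : ℝ) 1) (Pε : Measure ℝ) [IsProbabilityMeasure Pε]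
    (h2 : Integrable (fun x : ℝ => x ^ 2) Pε) (β M ρ : ℝ) (hρ : 0 ≤ ρ) :
    Lfun τ Pε β M ρ ≤ Lfun τ Pε β M 0 :=
  integral_mono (L_int τ hτ Pε h2 β M ρ hρ) (L_int τ hτ Pε h2 β M 0 le_rfl)
    fun _ => pb_le_zero τ _ ρ hτ hρ

lemma L_drop (τ : ℝ) (hτ : τ ∈ Set.Ioo (0 : ℝ) 1) (Pε : Measure ℝ) [IsProbabilityMeasure Pε]
    (hPε : NoiseAssumption Pε) (β M : ℝ) :
    ∃ δ > 0, ∀ ρ, 0 < ρ → ρ ≤ δ →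
      Lfun τ Pε β M ρ ≤ Lfun τ Pε β M 0 - ρ / 2 * min (τ ^ 2) ((1 - τ) ^ 2) * (3 / 4) := by
  set P := (gaussianReal 0 1).prod Pε with hP
  set S : ℕ → Set (ℝ × ℝ) := fun n => {z | |M * z.1 + z.2 - β| ≤ 1 / ((n : ℝ) + 1)} with hS
  have hmeas : ∀ n, MeasurableSet (S n) := fun n => by
    apply IsClosed.measurableSet
    exact isClosed_le (by fun_prop) continuous_const
  have hanti : Antitone S := by
    intro m n hmn z hz
    simp only [hS, Set.mem_ofPred_eq] at hz ⊢
    exact hz.trans (one_div_le_one_div_of_le (by positivity) (by gcongr))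
  have hinter : (⋂ n, S n) ⊆ {z | M * z.1 + z.2 - β = 0} := by
    intro z hz
    simp only [Set.mem_iInter, hS, Set.mem_ofPred_eq] at hz ⊢
    have : |M * z.1 + z.2 - β| ≤ 0 :=
      ge_of_tendsto' (tendsto_one_div_add_atTop_nhds_zero_nat (𝕜 := ℝ)) hz
    exact abs_nonpos_iff.1 this
  have hnull : P {z | M * z.1 + z.2 - β = 0} = 0 := by
    have hm : MeasurableSet {z : ℝ × ℝ | M * z.1 + z.2 - β = 0} :=
      (isClosed_eq (by fun_prop) continuous_const).measurableSet
    rw [hP, Measure.measure_prod_null hm]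
    refine Eventually.of_forall fun g => ?_
    apply (noise_ac Pε hPε).1
    have : Prod.mk g ⁻¹' {z : ℝ × ℝ | M * z.1 + z.2 - β = 0} ⊆ {β - M * g} := by
      intro e he
      simp at he ⊢
      linarith
    exact measure_mono_null this (by simp)
  have hlim := tendsto_measure_iInter_atTop (μ := P) (fun n => (hmeas n).nullMeasurableSet) hanti
    ⟨0, measure_ne_top _ _⟩
  rw [measure_mono_null hinter hnull] at hlim
  obtain ⟨n, hn⟩ := (hlim.eventually (gt_mem_nhds (show (0 : ENNReal) < ENNReal.ofReal (1 / 4) by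
    simp))).exists
  have hn' : P.real (S n) ≤ 1 / 4 := by
    rw [Measure.real]
    exact ENNReal.toReal_le_of_le_ofReal (by norm_num) hn.le
  refine ⟨1 / ((n : ℝ) + 1), by positivity, fun ρ hρ hρn => ?_⟩
  set μ := min (τ ^ 2) ((1 - τ) ^ 2) with hμ
  have hμ0 : 0 ≤ μ := le_min (sq_nonneg _) (sq_nonneg _)
  have i1 := L_int τ hτ Pε hPε.second_moment β M ρ hρ.le
  have i0 := L_int τ hτ Pε hPε.second_moment β M 0 le_rfl
  have ii : Integrable ((S n)ᶜ.indicator fun _ => ρ / 2 * μ) P :=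
    (integrable_const _).indicator (hmeas n).compl
  have hle : Lfun τ Pε β M ρ ≤ ∫ z, (moreau (pinball τ) (M * z.1 + z.2 - β) 0
      - (S n)ᶜ.indicator (fun _ => ρ / 2 * μ) z) ∂P := by
    refine integral_mono i1 (i0.sub ii) fun z => ?_
    by_cases hz : z ∈ S n
    · simpa [hz] using pb_le_zero τ (M * z.1 + z.2 - β) ρ hτ hρ.le
    · have hz' : 1 / ((n : ℝ) + 1) < |M * z.1 + z.2 - β| := by
        simpa only [hS, Set.mem_ofPred_eq, not_le] using hz
      have := pb_le_zero' τ (M * z.1 + z.2 - β) ρ hτ hρ (lt_of_le_of_lt hρn hz')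
      simpa [hz] using this
  rw [integral_sub i0 ii, integral_indicator_const _ (hmeas n).compl,
    probReal_compl_eq_one_sub (hmeas n), smul_eq_mul] at hle
  have : (3 / 4) * (ρ / 2 * μ) ≤ (1 - P.real (S n)) * (ρ / 2 * μ) := by
    gcongr
    linarith
  unfold Lfun at hle ⊢
  linarith

/-! ### The regularizer part of the objective -/

def Bfun (γ : ℝ) (Pβ : Measure ℝ) (ν : ℝ → ℝ) (M η r : ℝ) : ℝ :=
  - (η ^ 2 * M * γ / (2 * r)) + γ * ∫ z, moreau ν (η * M / r * z.1 + γ * z.2) (M / r)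
        ∂((gaussianReal 0 1).prod Pβ)

lemma asymObj_eq_s16 (τ γ : ℝ) (Pε Pβ : Measure ℝ) (ν : ℝ → ℝ) (β M ρ η r : ℝ) :
    asymObj τ γ Pε Pβ ν β M ρ η r
      = Lfun τ Pε β M (ρ / η) + Bfun γ Pβ ν M η r + η * ρ / 2 - M * r / 2 := by
  unfold asymObj Lfun Bfun
  ring

lemma B_le (γ : ℝ) (hγ : 0 < γ) (Pβ : Measure ℝ) [IsProbabilityMeasure Pβ]
    (ν : ℝ → ℝ) (hν : ConvexOn ℝ Set.univ ν)
    (hνfin : ∀ (c ρ : ℝ), 0 ≤ ρ →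
      Integrable (fun z : ℝ × ℝ => moreau ν (c * z.1 + γ * z.2) ρ)
        ((gaussianReal 0 1).prod Pβ)) (M η r : ℝ) (hM : 0 ≤ M) (hr : 0 < r) :
    Bfun γ Pβ ν M η r ≤ γ * ∫ z, moreau ν (0 * z.1 + γ * z.2) 0 ∂((gaussianReal 0 1).prod Pβ) := by
  have i1 := hνfin (η * M / r) (M / r) (by positivity)
  have i0 := hνfin 0 0 le_rfl
  have is := (int_sq_gauss.comp_fst Pβ).const_mul (η ^ 2 * M / (2 * r))
  have h := integral_mono i1 (is.add i0) (fun z => by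
    have := moreau_le ν hν (η * M / r * z.1 + γ * z.2) (M / r) (γ * z.2) (by positivity) (by
      intro h0
      have : M = 0 := by
        rcases div_eq_zero_iff.1 h0 with h | h
        · exact h
        · exact absurd h hr.ne'
      subst this; simp)
    refine this.trans (le_of_eq ?_)
    simp only [moreau, if_true, Pi.add_apply, zero_mul, zero_add]
    rcases hM.eq_or_lt with h | h
    · rw [← h]; simp
    · field_simp; ring)
  simp only [Pi.add_apply] at h
  rw [integral_add is i0, integral_const_mul, integral_fun_fst (fun x : ℝ => x ^ 2),
    integral_sq_gauss] at h
  simp only [probReal_univ, smul_eq_mul, mul_one] at h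
  unfold Bfun
  have := mul_le_mul_of_nonneg_left h hγ.le
  have e : η ^ 2 * M * γ / (2 * r) = γ * (η ^ 2 * M / (2 * r)) := by ring
  rw [e]
  linarith

lemma B_cont (γ : ℝ) (Pβ : Measure ℝ) (ν : ℝ → ℝ)
    (hνcont : ContinuousOn
      (fun q : ℝ × ℝ =>
        ∫ z, moreau ν (q.1 * z.1 + γ * z.2) q.2 ∂((gaussianReal 0 1).prod Pβ))
      (Set.univ ×ˢ Set.Ici 0)) (η r : ℝ) (hr : 0 < r) :
    ContinuousOn (fun M => Bfun γ Pβ ν M η r) (Set.Ici 0) := by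
  unfold Bfun
  refine ContinuousOn.add (by fun_prop) (continuousOn_const.mul ?_)
  refine hνcont.comp (f := fun M => (η * M / r, M / r)) (by fun_prop) ?_
  intro M hM
  have : 0 ≤ M := hM
  exact ⟨trivial, by simp only [Set.mem_Ici]; positivity⟩

lemma B_mid (γ : ℝ) (hγ : 0 < γ) (Pβ : Measure ℝ) [IsProbabilityMeasure Pβ]
    (ν : ℝ → ℝ) (hν : ConvexOn ℝ Set.univ ν)
    (hνfin : ∀ (c ρ : ℝ), 0 ≤ ρ →
      Integrable (fun z : ℝ × ℝ => moreau ν (c * z.1 + γ * z.2) ρ)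
        ((gaussianReal 0 1).prod Pβ)) (M M' η r : ℝ) (hM : 0 ≤ M) (hM' : 0 ≤ M') (hr : 0 < r) :
    2 * Bfun γ Pβ ν ((M + M') / 2) η r ≤ Bfun γ Pβ ν M η r + Bfun γ Pβ ν M' η r := by
  have i1 := hνfin (η * M / r) (M / r) (by positivity)
  have i2 := hνfin (η * M' / r) (M' / r) (by positivity)
  have i3 := hνfin (η * ((M + M') / 2) / r) ((M + M') / 2 / r) (by positivity)
  have i12 : Integrable (fun z : ℝ × ℝ => moreau ν (η * M / r * z.1 + γ * z.2) (M / r)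
    + moreau ν (η * M' / r * z.1 + γ * z.2) (M' / r)) ((gaussianReal 0 1).prod Pβ) := i1.add i2
  have h := integral_mono (i3.const_mul 2) i12 (fun z => by
    have := moreau_mid ν hν (η * M / r * z.1 + γ * z.2) (η * M' / r * z.1 + γ * z.2) (M / r)
      (M' / r) (by positivity) (by positivity)
    have e1 : (η * M / r * z.1 + γ * z.2 + (η * M' / r * z.1 + γ * z.2)) / 2
      = η * ((M + M') / 2) / r * z.1 + γ * z.2 := by ring
    have e2 : (M / r + M' / r) / 2 = (M + M') / 2 / r := by ring
    rw [e1, e2] at this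
    simp only
    linarith)
  rw [integral_add i1 i2, integral_const_mul] at h
  have := mul_le_mul_of_nonneg_left h hγ.le
  unfold Bfun
  have e : 2 * (η ^ 2 * ((M + M') / 2) * γ / (2 * r))
    = η ^ 2 * M * γ / (2 * r) + η ^ 2 * M' * γ / (2 * r) := by ring
  linarith

lemma B_conj (γ : ℝ) (Pβ : Measure ℝ) [IsProbabilityMeasure Pβ]
    (hPβ2 : Integrable (fun x => x ^ 2) Pβ)
    (ν : ℝ → ℝ) (hν : ConvexOn ℝ Set.univ ν)
    (hνfin : ∀ (c ρ : ℝ), 0 ≤ ρ →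
      Integrable (fun z : ℝ × ℝ => moreau ν (c * z.1 + γ * z.2) ρ)
        ((gaussianReal 0 1).prod Pβ)) (M η r : ℝ) (hM : 0 < M) (hr : 0 < r) :
    Bfun γ Pβ ν M η r = γ * ((r / M) * γ ^ 2 / 2 * ∫ x, x ^ 2 ∂Pβ)
      - γ * ∫ z, moreauConj ν (η * z.1 + r / M * γ * z.2) (r / M)
          ∂((gaussianReal 0 1).prod Pβ) := by
  have hρ : 0 < r / M := by positivity
  have i1 := hνfin (η * M / r) (M / r) (by positivity)
  have ia := (int_sq_gauss.comp_fst Pβ).const_mul (η ^ 2 * M / (2 * r))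
  have ib := (hPβ2.comp_snd (gaussianReal 0 1)).const_mul ((r / M) * γ ^ 2 / 2)
  have ic : Integrable (fun z : ℝ × ℝ => z.1 * z.2) ((gaussianReal 0 1).prod Pβ) :=
    (int_id_of_sq _ int_sq_gauss).mul_prod (int_id_of_sq _ hPβ2)
  have ic' := ic.const_mul (η * γ)
  have hpt : ∀ z : ℝ × ℝ, moreauConj ν (η * z.1 + r / M * γ * z.2) (r / M)
      = (η ^ 2 * M / (2 * r) * z.1 ^ 2 + (r / M) * γ ^ 2 / 2 * z.2 ^ 2 + η * γ * (z.1 * z.2))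
        - moreau ν (η * M / r * z.1 + γ * z.2) (M / r) := by
    intro z
    rw [moreauConj_eq ν hν _ _ hρ]
    have e1 : (η * z.1 + r / M * γ * z.2) / (r / M) = η * M / r * z.1 + γ * z.2 := by
      field_simp
    have e2 : 1 / (r / M) = M / r := by field_simp
    rw [e1, e2]
    congr 1
    field_simp
    ring
  have iab : Integrable (fun z : ℝ × ℝ => η ^ 2 * M / (2 * r) * z.1 ^ 2
    + (r / M) * γ ^ 2 / 2 * z.2 ^ 2) ((gaussianReal 0 1).prod Pβ) := ia.add ib
  have iabc : Integrable (fun z : ℝ × ℝ => η ^ 2 * M / (2 * r) * z.1 ^ 2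
    + (r / M) * γ ^ 2 / 2 * z.2 ^ 2 + η * γ * (z.1 * z.2)) ((gaussianReal 0 1).prod Pβ) :=
    iab.add ic'
  have hcross : ∫ z : ℝ × ℝ, z.1 * z.2 ∂((gaussianReal 0 1).prod Pβ) = 0 := by
    rw [integral_prod_mul (fun x : ℝ => x) (fun x : ℝ => x), integral_id_gaussianReal, zero_mul]
  simp only [hpt]
  rw [integral_sub iabc i1, integral_add iab ic', integral_add ia ib, integral_const_mul,
    integral_const_mul, integral_const_mul, hcross, integral_fun_fst (fun x : ℝ => x ^ 2),
    integral_fun_snd (fun x : ℝ => x ^ 2), integral_sq_gauss]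
  simp only [probReal_univ, smul_eq_mul, mul_one, one_mul, mul_zero, add_zero]
  unfold Bfun
  ring

lemma B_decr (γ : ℝ) (hγ : 0 < γ) (Pβ : Measure ℝ) [IsProbabilityMeasure Pβ]
    (hPβ2 : Integrable (fun x => x ^ 2) Pβ)
    (ν : ℝ → ℝ) (hν : ConvexOn ℝ Set.univ ν)
    (hνfin : ∀ (c ρ : ℝ), 0 ≤ ρ →
      Integrable (fun z : ℝ × ℝ => moreau ν (c * z.1 + γ * z.2) ρ)
        ((gaussianReal 0 1).prod Pβ))
    (hνconj : ConjDerivAssumption γ Pβ ν) (M C₂ cη Cη : ℝ) (hM : 0 < M) (hC₂ : 0 < C₂)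
    (hcη : 0 < cη) :
    ∃ m > 0, ∀ η ∈ Set.Icc cη Cη, ∀ r ∈ Set.Ioc 0 C₂,
      Bfun γ Pβ ν M η r ≤ Bfun γ Pβ ν M cη r - m * (η ^ 2 - cη ^ 2) := by
  obtain ⟨D1, D2, hD, hbd⟩ := hνconj
  obtain ⟨m, hm, hmb⟩ := hbd (Set.Icc cη Cη) isCompact_Icc (fun x hx => lt_of_lt_of_le hcη hx.1)
    (C₂ / M) (by positivity)
  refine ⟨γ * (m / 2), by positivity, fun η hη r hr => ?_⟩
  have hρ : 0 < r / M := div_pos hr.1 hM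
  have hρ' : r / M ∈ Set.Ioc 0 (C₂ / M) := ⟨hρ, by gcongr; exact hr.2⟩
  rw [B_conj γ Pβ hPβ2 ν hν hνfin M η r hM hr.1, B_conj γ Pβ hPβ2 ν hν hνfin M cη r hM hr.1]
  set G : ℝ → ℝ := fun c => ∫ z, moreauConj ν (c * z.1 + r / M * γ * z.2) (r / M)
          ∂((gaussianReal 0 1).prod Pβ) with hG
  have hder := (hD (r / M) hρ).2.2
  have hd : ∀ c, HasDerivAt (fun c => G c - m / 2 * c ^ 2)
      (c * (∫ z, D2 (c * z.1 + r / M * γ * z.2) (r / M) ∂((gaussianReal 0 1).prod Pβ))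
        - m / 2 * (2 * c)) c := by
    intro c
    have h1 := (hder c).1
    rw [(hder c).2] at h1
    refine h1.sub ?_
    have := (hasDerivAt_pow 2 c).const_mul (m / 2)
    simpa using this
  have hmono : MonotoneOn (fun c => G c - m / 2 * c ^ 2) (Set.Icc cη Cη) := by
    apply monotoneOn_of_deriv_nonneg (convex_Icc _ _)
    · exact fun c _ => (hd c).continuousAt.continuousWithinAt
    · exact fun c _ => (hd c).differentiableAt.differentiableWithinAt
    · intro c hc
      have hc' := interior_subset hc
      rw [(hd c).deriv]
      have := hmb c hc' (r / M) hρ'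
      have hc0 : 0 < c := lt_of_lt_of_le hcη hc'.1
      nlinarith
  have := hmono (Set.left_mem_Icc.2 (hη.1.trans hη.2)) hη hη.1
  simp only at this
  have h3 : γ * (G cη + m / 2 * (η ^ 2 - cη ^ 2)) ≤ γ * G η := by
    apply mul_le_mul_of_nonneg_left _ hγ.le
    linarith
  change _ - γ * G η ≤ _ - γ * G cη - _
  linarith

/-! ### Main theorem -/

/-- Lemma 13 of the paper, unique solution of the asymptotic program.  Fix
constants `C_{β₀}, C_u, C₁, C₂, C_η, c_η > 0` with `C_η > c_η` and
`c_η < √((1/2)·min{τ², (1−τ)²})`.  Then the asymptotic program — minimize over the box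
`|β₀| ≤ C_{β₀}`, `0 ≤ M_u ≤ C_u`, `0 ≤ ρ₁ ≤ C₁` the inner maximum over `ρ₂ ∈ (0, C₂]`,
`M_η ∈ [c_η, C_η]` of `A` — admits a unique minimizing triple `(β₀*, M_u*, ρ₁*)`; moreover
`M_u* > 0` implies `ρ₁* > 0`. -/
theorem asym_program_unique_solution
    (τ γ : ℝ) (hτ : τ ∈ Set.Ioo (0 : ℝ) 1) (hγ : γ ∈ Set.Ioo (0 : ℝ) (2 / Real.pi))
    (Pε Pβ : Measure ℝ) [IsProbabilityMeasure Pε] [IsProbabilityMeasure Pβ]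
    (hPε : NoiseAssumption Pε) (hPβ2 : Integrable (fun x => x ^ 2) Pβ)
    (ν : ℝ → ℝ) (hν : ConvexOn ℝ Set.univ ν)
    (hνfin : ∀ (c ρ : ℝ), 0 ≤ ρ →
      Integrable (fun z : ℝ × ℝ => moreau ν (c * z.1 + γ * z.2) ρ)
        ((gaussianReal 0 1).prod Pβ))
    (hνcont : ContinuousOn
      (fun q : ℝ × ℝ =>
        ∫ z, moreau ν (q.1 * z.1 + γ * z.2) q.2 ∂((gaussianReal 0 1).prod Pβ))
      (Set.univ ×ˢ Set.Ici 0))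
    (hνconj : ConjDerivAssumption γ Pβ ν)
    (Cβ0 Cu C₁ C₂ cη Cη : ℝ)
    (hCβ0 : 0 < Cβ0) (hCu : 0 < Cu) (hC₁ : 0 < C₁) (hC₂ : 0 < C₂)
    (hcη : 0 < cη) (hcηCη : cη < Cη)
    (hcη' : cη < Real.sqrt ((1 / 2) * min (τ ^ 2) ((1 - τ) ^ 2))) :
    (∃! p : ℝ × ℝ × ℝ, p ∈ asymBox Cβ0 Cu C₁ ∧
        IsMinOn (asymFmax τ γ Pε Pβ ν cη Cη C₂) (asymBox Cβ0 Cu C₁) p) ∧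
    (∀ p ∈ asymBox Cβ0 Cu C₁,
      IsMinOn (asymFmax τ γ Pε Pβ ν cη Cη C₂) (asymBox Cβ0 Cu C₁) p →
        0 < p.2.1 → 0 < p.2.2) := by
  have hγ0 : 0 < γ := hγ.1
  have h2 := hPε.second_moment
  set F := asymFmax τ γ Pε Pβ ν cη Cη C₂ with hF
  set Q : Set (ℝ × ℝ) := Set.Icc cη Cη ×ˢ Set.Ioc (0 : ℝ) C₂ with hQ
  have hCη : 0 < Cη := hcη.trans hcηCη
  have hQne : Q.Nonempty := ⟨(cη, C₂), ⟨⟨le_rfl, hcηCη.le⟩, ⟨hC₂, le_rfl⟩⟩⟩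
  have hbdd : ∀ p : ℝ × ℝ × ℝ, 0 ≤ p.2.1 → 0 ≤ p.2.2 →
      BddAbove ((fun q : ℝ × ℝ => asymObj τ γ Pε Pβ ν p.1 p.2.1 p.2.2 q.1 q.2) '' Q) := by
    intro p hM hρ
    refine ⟨Lfun τ Pε p.1 p.2.1 0
      + γ * (∫ z, moreau ν (0 * z.1 + γ * z.2) 0 ∂((gaussianReal 0 1).prod Pβ))
      + Cη * p.2.2 / 2, ?_⟩
    rintro _ ⟨⟨η, r⟩, ⟨⟨hη1, hη2⟩, hr1, hr2⟩, rfl⟩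
    simp only at hη1 hη2 hr1 hr2 ⊢
    have hη0 : 0 < η := hcη.trans_le hη1
    rw [asymObj_eq_s16]
    have e1 := L_le_zero τ hτ Pε h2 p.1 p.2.1 (p.2.2 / η) (by positivity)
    have e2 := B_le γ hγ0 Pβ ν hν hνfin p.2.1 η r hM hr1
    have e3 : η * p.2.2 ≤ Cη * p.2.2 := by gcongr
    have e4 : 0 ≤ p.2.1 * r := by positivity
    linarith
  have hle : ∀ p : ℝ × ℝ × ℝ, 0 ≤ p.2.1 → 0 ≤ p.2.2 → ∀ q ∈ Q,
      asymObj τ γ Pε Pβ ν p.1 p.2.1 p.2.2 q.1 q.2 ≤ F p := by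
    intro p hM hρ q hq
    exact le_csSup (hbdd p hM hρ) ⟨q, hq, rfl⟩
  have hub : ∀ (p : ℝ × ℝ × ℝ) (K : ℝ),
      (∀ q ∈ Q, asymObj τ γ Pε Pβ ν p.1 p.2.1 p.2.2 q.1 q.2 ≤ K) → F p ≤ K := by
    intro p K h
    apply csSup_le (hQne.image _)
    rintro _ ⟨q, hq, rfl⟩
    exact h q hq
  have hbox : ∀ p ∈ asymBox Cβ0 Cu C₁, 0 ≤ p.2.1 ∧ 0 ≤ p.2.2 :=
    fun p hp => ⟨hp.2.1.1, hp.2.2.1⟩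
  have hlsc : LowerSemicontinuousOn F (asymBox Cβ0 Cu C₁) := by
    have hFeq : F = fun p => ⨆ q : Q, asymObj τ γ Pε Pβ ν p.1 p.2.1 p.2.2 q.1.1 q.1.2 := by
      funext p
      simp only [hF, asymFmax]
      rw [sSup_image']
    rw [hFeq]
    apply lowerSemicontinuousOn_ciSup
    · intro p hp
      have := hbdd p (hbox p hp).1 (hbox p hp).2
      rwa [Set.image_eq_range] at this
    · rintro ⟨⟨η, r⟩, ⟨⟨hη1, hη2⟩, hr1, hr2⟩⟩
      simp only at hη1 hη2 hr1 hr2 ⊢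
      have hη0 : 0 < η := hcη.trans_le hη1
      apply ContinuousOn.lowerSemicontinuousOn
      simp only [asymObj_eq_s16]
      have c1 : ContinuousOn (fun p : ℝ × ℝ × ℝ => Lfun τ Pε p.1 p.2.1 (p.2.2 / η))
          (asymBox Cβ0 Cu C₁) := by
        refine (L_cont τ hτ Pε h2).comp
          (f := fun p : ℝ × ℝ × ℝ => ((p.1, p.2.1, p.2.2 / η) : ℝ × ℝ × ℝ)) (by fun_prop) ?_
        intro p hp
        exact div_nonneg (hbox p hp).2 hη0.le
      have c2 : ContinuousOn (fun p : ℝ × ℝ × ℝ => Bfun γ Pβ ν p.2.1 η r)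
          (asymBox Cβ0 Cu C₁) := by
        refine (B_cont γ Pβ ν hνcont η r hr1).comp
          (f := fun p : ℝ × ℝ × ℝ => p.2.1) (by fun_prop) ?_
        intro p hp
        exact (hbox p hp).1
      exact ((c1.add c2).add (by fun_prop)).sub (by fun_prop)
  have hcomp : IsCompact (asymBox Cβ0 Cu C₁) :=
    isCompact_Icc.prod (isCompact_Icc.prod isCompact_Icc)
  have hne : (asymBox Cβ0 Cu C₁).Nonempty :=
    ⟨(0, 0, 0), ⟨⟨by linarith, hCβ0.le⟩, ⟨le_rfl, hCu.le⟩, ⟨le_rfl, hC₁.le⟩⟩⟩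
  -- strict midpoint convexity
  have hstrict : ∀ p ∈ asymBox Cβ0 Cu C₁, ∀ p' ∈ asymBox Cβ0 Cu C₁, p ≠ p' →
      2 * F ((p.1 + p'.1) / 2, (p.2.1 + p'.2.1) / 2, (p.2.2 + p'.2.2) / 2) < F p + F p' := by
    rintro ⟨β, M, ρ⟩ hp ⟨β', M', ρ'⟩ hp' hpp
    obtain ⟨hM, hρ⟩ := hbox _ hp
    obtain ⟨hM', hρ'⟩ := hbox _ hp'
    simp only at hM hρ hM' hρ' ⊢
    set Γ : ℝ → ℝ := fun η => Lfun τ Pε β M (ρ / η) + Lfun τ Pε β' M' (ρ' / η)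
      - 2 * Lfun τ Pε ((β + β') / 2) ((M + M') / 2) ((ρ + ρ') / 2 / η) with hΓ
    have hΓpos : ∀ η ∈ Set.Icc cη Cη, 0 < Γ η := by
      intro η hη
      have hη0 : 0 < η := hcη.trans_le hη.1
      have := L_gap τ hτ Pε hPε β M (ρ / η) β' M' (ρ' / η) (by positivity) (by positivity) (by
        rintro ⟨h1, h2, h3⟩
        apply hpp
        rw [div_left_inj' hη0.ne'] at h3
        rw [h1, h2, h3])
      rw [show (ρ / η + ρ' / η) / 2 = (ρ + ρ') / 2 / η by ring] at this
      exact this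
    have hcL : ∀ b m s : ℝ, 0 ≤ s →
        ContinuousOn (fun η => Lfun τ Pε b m (s / η)) (Set.Icc cη Cη) := by
      intro b m s hs
      refine (L_cont τ hτ Pε h2).comp
          (f := fun η : ℝ => ((b, m, s / η) : ℝ × ℝ × ℝ)) ?_ ?_
      · refine continuousOn_const.prodMk (continuousOn_const.prodMk ?_)
        exact continuousOn_const.div continuousOn_id
          (fun η hη => (hcη.trans_le hη.1).ne')
      · intro η hη
        exact div_nonneg hs (hcη.trans_le hη.1).le
    have hΓc : ContinuousOn Γ (Set.Icc cη Cη) :=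
      ((hcL β M ρ hρ).add (hcL β' M' ρ' hρ')).sub
        (continuousOn_const.mul (hcL _ _ _ (by positivity)))
    obtain ⟨η₀, hη₀, hmin⟩ := isCompact_Icc.exists_isMinOn (Set.nonempty_Icc.2 hcηCη.le) hΓc
    have hδ := hΓpos η₀ hη₀
    have := hub ((β + β') / 2, (M + M') / 2, (ρ + ρ') / 2)
      ((F (β, M, ρ) + F (β', M', ρ') - Γ η₀) / 2) (by
        rintro ⟨η, r⟩ ⟨hη, hr⟩
        have a1 := hle (β, M, ρ) hM hρ (η, r) ⟨hη, hr⟩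
        have a2 := hle (β', M', ρ') hM' hρ' (η, r) ⟨hη, hr⟩
        have a3 : Γ η₀ ≤ Γ η := hmin hη
        have a4 := B_mid γ hγ0 Pβ ν hν hνfin M M' η r hM hM' hr.1
        simp only [asymObj_eq_s16] at a1 a2 ⊢
        simp only [hΓ] at a3 ⊢
        linarith)
    linarith
  refine ⟨?_, ?_⟩
  · obtain ⟨p, hp, hpmin⟩ := hlsc.exists_isMinOn hne hcomp
    refine ⟨p, ⟨hp, hpmin⟩, ?_⟩
    rintro p' ⟨hp', hpmin'⟩
    by_contra hpp
    have h1 := hstrict p' hp' p hp hpp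
    have hmid : ((p'.1 + p.1) / 2, (p'.2.1 + p.2.1) / 2, (p'.2.2 + p.2.2) / 2)
        ∈ asymBox Cβ0 Cu C₁ := by
      obtain ⟨⟨a1, a2⟩, ⟨a3, a4⟩, a5, a6⟩ := hp
      obtain ⟨⟨b1, b2⟩, ⟨b3, b4⟩, b5, b6⟩ := hp'
      refine ⟨⟨?_, ?_⟩, ⟨?_, ?_⟩, ?_, ?_⟩ <;> simp only <;> linarith
    have h3 : F p ≤ _ := hpmin hmid
    have h4 : F p' ≤ _ := hpmin' hmid
    linarith
  · rintro ⟨β, M, ρ⟩ hp hpmin hM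
    simp only at hM ⊢
    have hρ := (hbox _ hp).2
    simp only at hρ
    by_contra hcon
    have hρ0 : ρ = 0 := le_antisymm (not_lt.1 hcon) hρ
    subst hρ0
    obtain ⟨m, hm, hB⟩ := B_decr γ hγ0 Pβ hPβ2 ν hν hνfin hνconj M C₂ cη Cη hM hC₂ hcη
    obtain ⟨δ, hδ, hL⟩ := L_drop τ hτ Pε hPε β M
    set μ := min (τ ^ 2) ((1 - τ) ^ 2) with hμ
    have hμ0 : 0 < μ := lt_min (pow_pos hτ.1 2) (pow_pos (by linarith [hτ.2]) 2)
    have hcμ : cη ^ 2 < μ / 2 := by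
      have := (Real.lt_sqrt hcη.le).1 hcη'
      linarith
    set D := m * (μ / 2 - cη ^ 2) with hD
    have hDpos : 0 < D := mul_pos hm (by linarith)
    set t := min C₁ (min (δ * cη) (D / Cη)) with ht
    have ht0 : 0 < t := lt_min hC₁ (lt_min (by positivity) (by positivity))
    have ht1 : t ≤ C₁ := min_le_left _ _
    have ht2 : t ≤ δ * cη := (min_le_right _ _).trans (min_le_left _ _)
    have ht3 : Cη * t ≤ D := by
      have : t ≤ D / Cη := (min_le_right _ _).trans (min_le_right _ _)
      rw [le_div_iff₀ hCη] at this
      linarith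
    have hκ : 0 < min (t / Cη * μ / 8) (D / 2) := lt_min (by positivity) (by positivity)
    have hlt := hub (β, M, t) (F (β, M, 0) - min (t / Cη * μ / 8) (D / 2)) (by
      rintro ⟨η, r⟩ ⟨hη, hr⟩
      simp only at hη hr ⊢
      have hη0 : 0 < η := hcη.trans_le hη.1
      have a1 := hle (β, M, 0) hM.le le_rfl (cη, r) ⟨⟨le_rfl, hcηCη.le⟩, hr⟩
      have a2 := hB η hη r hr
      simp only [asymObj_eq_s16, zero_div, mul_zero] at a1 ⊢
      suffices hs : Lfun τ Pε β M (t / η) - Lfun τ Pε β M 0 + η * t / 2 - m * (η ^ 2 - cη ^ 2)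
          ≤ - min (t / Cη * μ / 8) (D / 2) by linarith
      by_cases hc : η ^ 2 ≤ μ / 2
      · have b1 := hL (t / η) (by positivity) (by
          rw [div_le_iff₀ hη0]
          exact ht2.trans (by gcongr; exact hη.1))
        have b2 : η * t / 2 = t / η / 2 * η ^ 2 := by field_simp
        have b3 : t / η / 2 * η ^ 2 ≤ t / η / 2 * (μ / 2) := by gcongr
        have b4 : t / Cη * μ / 8 ≤ t / η * μ / 8 := by gcongr; exact hη.2
        have b5 : 0 ≤ m * (η ^ 2 - cη ^ 2) := by
          apply mul_nonneg hm.le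
          have := pow_le_pow_left₀ hcη.le hη.1 2
          linarith
        have b6 := min_le_left (t / Cη * μ / 8) (D / 2)
        linarith
      · push Not at hc
        have b1 := L_le_zero τ hτ Pε h2 β M (t / η) (by positivity)
        have b2 : η * t ≤ Cη * t := by gcongr; exact hη.2
        have b3 : D ≤ m * (η ^ 2 - cη ^ 2) := by
          apply mul_le_mul_of_nonneg_left _ hm.le
          linarith
        have b4 := min_le_right (t / Cη * μ / 8) (D / 2)
        linarith)
    have hmem : (β, M, t) ∈ asymBox Cβ0 Cu C₁ := ⟨hp.1, hp.2.1, ht0.le, ht1⟩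
    have h5 : F (β, M, 0) ≤ F (β, M, t) := hpmin hmem
    linarith

end
end
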